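/- arXiv:1503.01151 — 3 statements merged into one kernel-verified Lean document; each statement's English description precedes it below -/
import Mathlib

section
/- The embellished enchilada stabilization functor from the enchilada category of C*-algebras to the enchilada category of 𝒦-algebras, given on objects by B ↦ (B ⊗ 𝒦, 1 ⊗ id_𝒦) and on morphisms by [X] ↦ [X ⊗ 𝒦], is an equivalence of categories, and it has a unique quasi-inverse functor whose object map is (A, ι) ↦ C(A, ι). -/
/-!
Fix matrix units `u i j` in the compact operators.  Everything reduces to corners cut out by
`u 0 0`, since multiplying by `u i 0` on the left and by `u 0 j` on the right moves the corner to
any other position.  The projection `1 ⊗ u 0 0` need not lie in `TA = A ⊗ 𝒦`, so corners are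
always reached through elements `a ⊗ u i j`.

*Faithfulness.*  `x ↦ x ⊗ u 0 0` embeds `X` isometrically as the closed span of
`(A ⊗ u 0 0) · Z · (B ⊗ u 0 0)` in `Z = X ⊗ 𝒦`.  This span is described by the actions of
`A ⊗ 𝒦` and `B ⊗ 𝒦` alone, hence is preserved by an isomorphism `X ⊗ 𝒦 ≅ X' ⊗ 𝒦`, which
therefore restricts to an isomorphism `X ≅ X'` (`faithful_clause`).

*Fullness.*  For an arbitrary `Z`, let `X` be the same closed span (`corner`).  It is an `A`–`B`
correspondence (`cornerCorr`).  Inner products of the vectors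
`(a ⊗ u i 0) · z · (b ⊗ u 0 j)` have the form `c ⊗ (star (u i j) * u i' j')` with `c` independent
of the indices (`inner_genL`), so the maps `x ↦ u i 0 · x · u 0 j` are well-defined isometries
`shift i j`.  They assemble to `x ⊗ k ∈ Z`, which exhibits `Z` as `X ⊗ 𝒦` (`cornerExt`).

*Essential surjectivity.*  Both `C ⊗ 𝒦` and `A` (where `C = C(A, ι)`) contain the finite matrices
over `C` as a dense ⋆-subalgebra; for `A`, the matrix with `c` in position `(i, l)` is
`c ι(u i l)`.  This is the notion `MatSys`.  Two such algebras are ⋆-isomorphic (`matEquiv`),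
because finite matrix blocks are C⋆-algebras and injective ⋆-homomorphisms of C⋆-algebras are
isometric.  Density in `A` is the substantial point (`dense_entry`): the elements
`ι(u i j) x ι(u k l)` span a dense subspace by nondegeneracy, and such an element equals
`D ι(u i l)` with `D = ∑ₚ ι(u p 0) b ι(u 0 p)` and `b = ι(u 0 j) x ι(u k 0)`.  That sum defines a
multiplier of `A` commuting with `ι(𝒦)` (`exists_diagMult`), so `D ∈ C(A, ι)`.  Finally, a
⋆-isomorphism is turned into an imprimitivity bimodule (`isoWitness`).
-/

open scoped MultiplierAlgebra

noncomputable section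

/-! ## Framework

`𝓜(ℂ, A)` is the multiplier algebra `M(A)` of a (non-unital) C⋆-algebra `A`
(Mathlib's `DoubleCentralizer`), and `(a : 𝓜(ℂ, A))` is the canonical image of `a : A`
in it. -/

/-- A system of matrix units `{u i j}` (indexed by `ℕ`) in a non-unital C⋆-algebra `K`,
whose linear span is dense.  A C⋆-algebra carrying such a system is precisely (i.e., is
⋆-isomorphic to) the C⋆-algebra `𝒦` of compact operators on a separable
infinite-dimensional Hilbert space. -/
structure MatrixUnits (K : Type*) [NonUnitalCStarAlgebra K] where
  u : ℕ → ℕ → K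
  u_ne_zero : ∀ i j, u i j ≠ 0
  u_mul : ∀ i j k l, u i j * u k l = if j = k then u i l else 0
  star_u : ∀ i j, star (u i j) = u j i
  dense_span : Dense (Submodule.span ℂ (Set.range fun p : ℕ × ℕ => u p.1 p.2) : Set K)

/-- `K` is (a copy of) the C⋆-algebra `𝒦` of compact operators on a separable
infinite-dimensional Hilbert space. -/
def IsCompactOperatorsAlgebra (K : Type*) [NonUnitalCStarAlgebra K] : Prop :=
  Nonempty (MatrixUnits K)

/-- A homomorphism `φ : A → M(B)` is *nondegenerate* if `φ(A)·B` is dense in `B`. -/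
def Nondegenerate {A B : Type*} [NonUnitalCStarAlgebra A] [NonUnitalCStarAlgebra B]
    (φ : A →⋆ₙₐ[ℂ] 𝓜(ℂ, B)) : Prop :=
  ∀ b : B, (b : 𝓜(ℂ, B)) ∈
    closure (Submodule.span ℂ {x : 𝓜(ℂ, B) | ∃ (a : A) (c : B), x = φ a * c} : Set 𝓜(ℂ, B))

/-- The `A`-relative commutant `C(A, ι) = {a ∈ M(A) : ι(k)·a = a·ι(k) ∈ A for all k ∈ K}`
of a `K`-algebra `(A, ι)`. -/
def relComm {K A : Type*} [NonUnitalCStarAlgebra K] [NonUnitalCStarAlgebra A]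
    (ι : K →⋆ₙₐ[ℂ] 𝓜(ℂ, A)) : Set 𝓜(ℂ, A) :=
  {a | ∀ k : K, ι k * a = a * ι k ∧ a * ι k ∈ Set.range ((↑) : A → 𝓜(ℂ, A))}

/-- A witness that `T` is (a copy of) the spatial tensor product `B ⊗ K`: a bilinear,
multiplicative, star-preserving map on elementary tensors whose range has dense linear span
and which satisfies `‖b ⊗ k‖ = ‖b‖‖k‖`.  (Since the compact operators `𝒦` are nuclear and
simple, for `K = 𝒦` such data identifies `T` with the minimal tensor product `B ⊗ 𝒦`.) -/
structure CStarTensor (B K T : Type*) [NonUnitalCStarAlgebra B] [NonUnitalCStarAlgebra K]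
    [NonUnitalCStarAlgebra T] where
  tmul : B → K → T
  add_tmul : ∀ b b' k, tmul (b + b') k = tmul b k + tmul b' k
  tmul_add : ∀ b k k', tmul b (k + k') = tmul b k + tmul b k'
  smul_tmul : ∀ (c : ℂ) b k, tmul (c • b) k = c • tmul b k
  tmul_smul : ∀ (c : ℂ) b k, tmul b (c • k) = c • tmul b k
  tmul_mul_tmul : ∀ b b' k k', tmul b k * tmul b' k' = tmul (b * b') (k * k')
  star_tmul : ∀ b k, star (tmul b k) = tmul (star b) (star k)
  norm_tmul : ∀ b k, ‖tmul b k‖ = ‖b‖ * ‖k‖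
  dense_span : Dense (Submodule.span ℂ {x : T | ∃ b k, x = tmul b k} : Set T)

/-- `ι` is the canonical nondegenerate homomorphism `1 ⊗ id : K → M(B ⊗ K)`, characterized
by `(1 ⊗ k)·(b ⊗ k') = b ⊗ (k·k')` and `(b ⊗ k')·(1 ⊗ k) = b ⊗ (k'·k)`. -/
def IsOneTensorId {B K T : Type*} [NonUnitalCStarAlgebra B] [NonUnitalCStarAlgebra K]
    [NonUnitalCStarAlgebra T] (τ : CStarTensor B K T) (ι : K →⋆ₙₐ[ℂ] 𝓜(ℂ, T)) : Prop :=
  ∀ (k : K) (b : B) (k' : K),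
    ι k * (τ.tmul b k' : 𝓜(ℂ, T)) = (τ.tmul b (k * k') : 𝓜(ℂ, T)) ∧
      (τ.tmul b k' : 𝓜(ℂ, T)) * ι k = (τ.tmul b (k' * k) : 𝓜(ℂ, T))

/-- A (nondegenerate) `A`–`B` C⋆-correspondence: a right Hilbert `B`-module `X` together
with a left action of `A` by adjointable operators such that `A·X` is dense in `X`.
The `B`-valued inner product `inner x y = ⟨x, y⟩_B` is linear in the second variable. -/
structure Correspondence (A B X : Type*) [NonUnitalCStarAlgebra A] [NonUnitalCStarAlgebra B]
    [NormedAddCommGroup X] [NormedSpace ℂ X] [CompleteSpace X] where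
  smulL : A → X → X
  smulR : X → B → X
  inner : X → X → B
  -- right Hilbert `B`-module axioms
  smulR_add : ∀ x b b', smulR x (b + b') = smulR x b + smulR x b'
  add_smulR : ∀ x y b, smulR (x + y) b = smulR x b + smulR y b
  smulR_mul : ∀ x b b', smulR x (b * b') = smulR (smulR x b) b'
  smulR_csmul : ∀ (c : ℂ) x b, smulR (c • x) b = c • smulR x b
  csmul_smulR : ∀ (c : ℂ) x b, smulR x (c • b) = c • smulR x b
  inner_add_right : ∀ x y z, inner x (y + z) = inner x y + inner x z
  inner_csmul_right : ∀ (c : ℂ) x y, inner x (c • y) = c • inner x y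
  star_inner : ∀ x y, star (inner x y) = inner y x
  inner_smulR : ∀ x y b, inner x (smulR y b) = inner x y * b
  inner_self_nonneg : ∀ x, ∃ b, inner x x = star b * b
  norm_inner_self : ∀ x, ‖x‖ ^ 2 = ‖inner x x‖
  -- the left action of `A` by adjointable operators
  smulL_add : ∀ a x y, smulL a (x + y) = smulL a x + smulL a y
  add_smulL : ∀ a a' x, smulL (a + a') x = smulL a x + smulL a' x
  smulL_mul : ∀ a a' x, smulL (a * a') x = smulL a (smulL a' x)
  smulL_csmul : ∀ (c : ℂ) a x, smulL (c • a) x = c • smulL a x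
  csmul_smulL : ∀ (c : ℂ) a x, smulL a (c • x) = c • smulL a x
  smulL_smulR : ∀ a x b, smulR (smulL a x) b = smulL a (smulR x b)
  inner_smulL : ∀ a x y, inner (smulL a x) y = inner x (smulL (star a) y)
  -- nondegeneracy: `A · X` is dense in `X`
  nondegenerate : Dense (Submodule.span ℂ {y : X | ∃ a x, y = smulL a x} : Set X)

/-- A correspondence is *full* if the closed span of `⟨X, X⟩_B` is all of `B`. -/
def Correspondence.Full {A B X : Type*} [NonUnitalCStarAlgebra A] [NonUnitalCStarAlgebra B]
    [NormedAddCommGroup X] [NormedSpace ℂ X] [CompleteSpace X]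
    (cX : Correspondence A B X) : Prop :=
  Dense (Submodule.span ℂ {b : B | ∃ x y, b = cX.inner x y} : Set B)

/-- An `A`–`B` Hilbert bimodule: a right Hilbert `B`-module and a left Hilbert
`A`-module satisfying the compatibility condition `⟨x, y⟩_A · z = x · ⟨y, z⟩_B`.
The right inner product `innerR x y = ⟨x, y⟩_B` is linear in the second variable, and
the left inner product `innerL x y = ⟨x, y⟩_A` is linear in the first variable. -/
structure HilbertBimodule (A B X : Type*) [NonUnitalCStarAlgebra A] [NonUnitalCStarAlgebra B]
    [NormedAddCommGroup X] [NormedSpace ℂ X] [CompleteSpace X] where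
  smulL : A → X → X
  smulR : X → B → X
  innerL : X → X → A
  innerR : X → X → B
  -- right Hilbert `B`-module axioms
  smulR_add : ∀ x b b', smulR x (b + b') = smulR x b + smulR x b'
  add_smulR : ∀ x y b, smulR (x + y) b = smulR x b + smulR y b
  smulR_mul : ∀ x b b', smulR x (b * b') = smulR (smulR x b) b'
  smulR_csmul : ∀ (c : ℂ) x b, smulR (c • x) b = c • smulR x b
  csmul_smulR : ∀ (c : ℂ) x b, smulR x (c • b) = c • smulR x b
  innerR_add_right : ∀ x y z, innerR x (y + z) = innerR x y + innerR x z
  innerR_csmul_right : ∀ (c : ℂ) x y, innerR x (c • y) = c • innerR x y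
  star_innerR : ∀ x y, star (innerR x y) = innerR y x
  innerR_smulR : ∀ x y b, innerR x (smulR y b) = innerR x y * b
  innerR_self_nonneg : ∀ x, ∃ b, innerR x x = star b * b
  norm_innerR_self : ∀ x, ‖x‖ ^ 2 = ‖innerR x x‖
  -- left Hilbert `A`-module axioms
  smulL_add : ∀ a x y, smulL a (x + y) = smulL a x + smulL a y
  add_smulL : ∀ a a' x, smulL (a + a') x = smulL a x + smulL a' x
  smulL_mul : ∀ a a' x, smulL (a * a') x = smulL a (smulL a' x)
  smulL_csmul : ∀ (c : ℂ) a x, smulL (c • a) x = c • smulL a x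
  csmul_smulL : ∀ (c : ℂ) a x, smulL a (c • x) = c • smulL a x
  innerL_add_left : ∀ x y z, innerL (x + y) z = innerL x z + innerL y z
  innerL_csmul_left : ∀ (c : ℂ) x y, innerL (c • x) y = c • innerL x y
  star_innerL : ∀ x y, star (innerL x y) = innerL y x
  innerL_smulL : ∀ a x y, innerL (smulL a x) y = a * innerL x y
  innerL_self_nonneg : ∀ x, ∃ a, innerL x x = star a * a
  norm_innerL_self : ∀ x, ‖x‖ ^ 2 = ‖innerL x x‖
  -- the two module actions commute and are mutually adjointable
  smulL_smulR : ∀ a x b, smulR (smulL a x) b = smulL a (smulR x b)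
  innerR_smulL : ∀ a x y, innerR (smulL a x) y = innerR x (smulL (star a) y)
  innerL_smulR : ∀ x y b, innerL (smulR x b) y = innerL x (smulR y (star b))
  -- the compatibility condition `⟨x, y⟩_A · z = x · ⟨y, z⟩_B`
  compat : ∀ x y z, smulL (innerL x y) z = smulR x (innerR y z)

/-- An `A`–`B` Hilbert bimodule is *right-full* if the closed span of `⟨X, X⟩_B` is `B`. -/
def HilbertBimodule.RightFull {A B X : Type*} [NonUnitalCStarAlgebra A]
    [NonUnitalCStarAlgebra B] [NormedAddCommGroup X] [NormedSpace ℂ X] [CompleteSpace X]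
    (hX : HilbertBimodule A B X) : Prop :=
  Dense (Submodule.span ℂ {b : B | ∃ x y, b = hX.innerR x y} : Set B)

/-- An `A`–`B` Hilbert bimodule is *left-full* if the closed span of `⟨X, X⟩_A` is `A`. -/
def HilbertBimodule.LeftFull {A B X : Type*} [NonUnitalCStarAlgebra A]
    [NonUnitalCStarAlgebra B] [NormedAddCommGroup X] [NormedSpace ℂ X] [CompleteSpace X]
    (hX : HilbertBimodule A B X) : Prop :=
  Dense (Submodule.span ℂ {a : A | ∃ x y, a = hX.innerL x y} : Set A)

/-- A witness realizing the `(A ⊗ K)`–`(B ⊗ K)` correspondence `Z` as the external tensor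
product `X ⊗ K` of the `A`–`B` correspondence `X` with `K`, relative to spatial tensor
product witnesses `TA = A ⊗ K` and `TB = B ⊗ K`. -/
structure ExtTensorCorr {A B X K TA TB Z : Type*}
    [NonUnitalCStarAlgebra A] [NonUnitalCStarAlgebra B] [NonUnitalCStarAlgebra K]
    [NonUnitalCStarAlgebra TA] [NonUnitalCStarAlgebra TB]
    [NormedAddCommGroup X] [NormedSpace ℂ X] [CompleteSpace X]
    [NormedAddCommGroup Z] [NormedSpace ℂ Z] [CompleteSpace Z]
    (cX : Correspondence A B X) (τA : CStarTensor A K TA) (τB : CStarTensor B K TB)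
    (cZ : Correspondence TA TB Z) where
  tmul : X → K → Z
  add_tmul : ∀ x x' k, tmul (x + x') k = tmul x k + tmul x' k
  tmul_add : ∀ x k k', tmul x (k + k') = tmul x k + tmul x k'
  smul_tmul : ∀ (c : ℂ) x k, tmul (c • x) k = c • tmul x k
  tmul_smul : ∀ (c : ℂ) x k, tmul x (c • k) = c • tmul x k
  smulL_tmul : ∀ (a : A) (k : K) (x : X) (k' : K),
    cZ.smulL (τA.tmul a k) (tmul x k') = tmul (cX.smulL a x) (k * k')
  tmul_smulR : ∀ (x : X) (k : K) (b : B) (k' : K),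
    cZ.smulR (tmul x k) (τB.tmul b k') = tmul (cX.smulR x b) (k * k')
  inner_tmul : ∀ x k x' k',
    cZ.inner (tmul x k) (tmul x' k') = τB.tmul (cX.inner x x') (star k * k')
  dense_span : Dense (Submodule.span ℂ {z : Z | ∃ x k, z = tmul x k} : Set Z)

universe u

/-- An isomorphism of `A`–`B` correspondences. -/
structure CorrEquiv {A B X X' : Type*} [NonUnitalCStarAlgebra A] [NonUnitalCStarAlgebra B]
    [NormedAddCommGroup X] [NormedSpace ℂ X] [CompleteSpace X]
    [NormedAddCommGroup X'] [NormedSpace ℂ X'] [CompleteSpace X']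
    (cX : Correspondence A B X) (cX' : Correspondence A B X') where
  toEquiv : X ≃ₗ[ℂ] X'
  map_inner : ∀ x y, cX'.inner (toEquiv x) (toEquiv y) = cX.inner x y
  map_smulL : ∀ a x, toEquiv (cX.smulL a x) = cX'.smulL a (toEquiv x)
  map_smulR : ∀ x b, toEquiv (cX.smulR x b) = cX'.smulR (toEquiv x) b

/-- A bundled nondegenerate `A`–`B` correspondence (a morphism `A → B` of the enchilada
category, before passing to isomorphism classes). -/
structure CorrespondenceOn (A B : Type u) [NonUnitalCStarAlgebra A]
    [NonUnitalCStarAlgebra B] where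
  X : Type u
  [instG : NormedAddCommGroup X]
  [instS : NormedSpace ℂ X]
  [instC : CompleteSpace X]
  corr : Correspondence A B X

attribute [instance] CorrespondenceOn.instG CorrespondenceOn.instS CorrespondenceOn.instC

/-- A bundled `P`–`Q` imprimitivity bimodule, i.e. an isomorphism `P ≅ Q` in the
enchilada category (equivalently, a Morita equivalence). -/
structure ImprimitivityWitness (P Q : Type u) [NonUnitalCStarAlgebra P]
    [NonUnitalCStarAlgebra Q] where
  X : Type u
  [instG : NormedAddCommGroup X]
  [instS : NormedSpace ℂ X]
  [instC : CompleteSpace X]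
  bimod : HilbertBimodule P Q X
  right_full : bimod.RightFull
  left_full : bimod.LeftFull

namespace EnchiladaStab

open Filter Topology

section Helpers

attribute [local instance] CStarAlgebra.spectralOrder CStarAlgebra.spectralOrderedRing

/-! ### Density and continuity -/

section Density

theorem dense_span_induction {V : Type*} [NormedAddCommGroup V] [NormedSpace ℂ V] {S : Set V}
    (hS : Dense (Submodule.span ℂ S : Set V)) {p : V → Prop} (hcl : IsClosed {x | p x})
    (h0 : p 0) (hadd : ∀ x y, p x → p y → p (x + y)) (hsmul : ∀ (c : ℂ) x, p x → p (c • x))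
    (hmem : ∀ x ∈ S, p x) (x : V) : p x := by
  refine hS.induction (P := p) (fun y hy => ?_) hcl x
  induction hy using Submodule.span_induction with
  | mem y hy => exact hmem y hy
  | zero => exact h0
  | add y z _ _ hy hz => exact hadd y z hy hz
  | smul c y _ hy => exact hsmul c y hy

/-- A closed subspace containing every vector of a set with dense span is everything. -/
theorem mem_of_dense_span {V : Type*} [NormedAddCommGroup V] [NormedSpace ℂ V] {S : Set V}
    (hS : Dense (Submodule.span ℂ S : Set V)) (P : Submodule ℂ V) (hcl : IsClosed (P : Set V))
    (hmem : ∀ x ∈ S, x ∈ P) (x : V) : x ∈ P :=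
  dense_span_induction hS (p := fun x => x ∈ P) hcl P.zero_mem (fun _ _ => P.add_mem)
    (fun c _ => P.smul_mem c) hmem x

theorem dense_span_of_forall_mem {V : Type*} [NormedAddCommGroup V] [NormedSpace ℂ V]
    {S S' : Set V} (hS : Dense (Submodule.span ℂ S : Set V))
    (h : ∀ x ∈ S, x ∈ (Submodule.span ℂ S').topologicalClosure) :
    Dense (Submodule.span ℂ S' : Set V) := fun x =>
  mem_of_dense_span hS (Submodule.span ℂ S').topologicalClosure
    (Submodule.isClosed_topologicalClosure _) h x

theorem ext_of_dense_span {V W : Type*} [NormedAddCommGroup V] [NormedSpace ℂ V]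
    [NormedAddCommGroup W] [NormedSpace ℂ W] {S : Set V}
    (hS : Dense (Submodule.span ℂ S : Set V)) {f g : V → W} (hf : Continuous f)
    (hg : Continuous g) (hfl : IsLinearMap ℂ f) (hgl : IsLinearMap ℂ g)
    (h : ∀ x ∈ S, f x = g x) (x : V) : f x = g x :=
  dense_span_induction hS (p := fun x => f x = g x) (isClosed_eq hf hg)
    (by rw [hfl.map_zero, hgl.map_zero]) (fun x y hx hy => by rw [hfl.map_add, hgl.map_add, hx, hy])
    (fun c x hx => by rw [hfl.map_smul, hgl.map_smul, hx]) h x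

theorem continuous_of_bound₂ {V W U : Type*} [NormedAddCommGroup V] [NormedSpace ℂ V]
    [NormedAddCommGroup W] [NormedSpace ℂ W] [NormedAddCommGroup U] [NormedSpace ℂ U]
    {σ : ℂ →+* ℂ} [RingHomIsometric σ] (f : V → W → U)
    (h₁ : ∀ v v' w, f (v + v') w = f v w + f v' w) (h₂ : ∀ (c : ℂ) v w, f (c • v) w = σ c • f v w)
    (h₃ : ∀ v w w', f v (w + w') = f v w + f v w') (h₄ : ∀ (c : ℂ) v w, f v (c • w) = c • f v w)
    (C : ℝ) (hC : ∀ v w, ‖f v w‖ ≤ C * ‖v‖ * ‖w‖) : Continuous fun p : V × W => f p.1 p.2 := by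
  let F := (LinearMap.mk₂'ₛₗ σ (RingHom.id ℂ) f h₁ h₂ h₃ h₄).mkContinuous₂ C hC
  have : Continuous fun p : V × W => F p.1 p.2 := by fun_prop
  exact this

/-- A continuous bilinear map on `V × W`: the range over a total subset of `W` is as total as
the range over all of `W`. -/
theorem dense_span_tmul {V W U : Type*} [NormedAddCommGroup W] [NormedSpace ℂ W]
    [NormedAddCommGroup U] [NormedSpace ℂ U] {t : V → W → U}
    (hc : ∀ v, Continuous (t v)) (hl : ∀ v, IsLinearMap ℂ (t v))
    (hd : Dense (Submodule.span ℂ {z : U | ∃ v w, z = t v w} : Set U)) {ι : Type*} {w : ι → W}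
    (hw : Dense (Submodule.span ℂ (Set.range w) : Set W)) :
    Dense (Submodule.span ℂ {z : U | ∃ v i, z = t v (w i)} : Set U) := by
  refine dense_span_of_forall_mem hd ?_
  rintro _ ⟨v, y, rfl⟩
  refine dense_span_induction hw
    (p := fun y => t v y ∈ (Submodule.span ℂ {z : U | ∃ v i, z = t v (w i)}).topologicalClosure)
    ((Submodule.isClosed_topologicalClosure _).preimage (hc v)) ?_ ?_ ?_ ?_ y
  · rw [(hl v).map_zero]; exact Submodule.zero_mem _
  · intro x y hx hy; rw [(hl v).map_add]; exact Submodule.add_mem _ hx hy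
  · intro c x hx; rw [(hl v).map_smul]; exact Submodule.smul_mem _ _ hx
  · rintro _ ⟨i, rfl⟩
    exact Submodule.le_topologicalClosure _ (Submodule.subset_span ⟨v, i, rfl⟩)

end Density

/-! ### Approximate units and positivity in C⋆-algebras -/

section CStar

variable {A : Type*} [NonUnitalCStarAlgebra A]

/-- Left multiplications by elements of a C⋆-algebra separate points continuously: an identity
between continuous functions may be checked after multiplying the arguments by any `d`. -/
theorem eq_of_forall_mul_left {W : Type*} [TopologicalSpace W] [T2Space W] {f g : A → W}
    (hf : Continuous f) (hg : Continuous g) {b c : A} (h : ∀ d, f (d * b) = g (d * c)) :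
    f b = g c := by
  have hu := (CStarAlgebra.increasingApproximateUnit A).tendsto_mul_right
  have h1 := (hf.tendsto b).comp (hu b)
  have h2 := (hg.tendsto c).comp (hu c)
  refine tendsto_nhds_unique h1 (h2.congr fun d => ?_)
  simp [h d]

theorem eq_of_forall_mul_right {W : Type*} [TopologicalSpace W] [T2Space W] {f g : A → W}
    (hf : Continuous f) (hg : Continuous g) {b c : A} (h : ∀ d, f (b * d) = g (c * d)) :
    f b = g c := by
  have hu := (CStarAlgebra.increasingApproximateUnit A).tendsto_mul_left
  have h1 := (hf.tendsto b).comp (hu b)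
  have h2 := (hg.tendsto c).comp (hu c)
  refine tendsto_nhds_unique h1 (h2.congr fun d => ?_)
  simp [h d]

theorem dense_mul : Dense (Submodule.span ℂ {x : A | ∃ a b, x = a * b} : Set A) := fun x => by
  have hu := (CStarAlgebra.increasingApproximateUnit A).tendsto_mul_left x
  exact mem_closure_of_tendsto hu
    (Eventually.of_forall fun d => Submodule.subset_span ⟨x, d, rfl⟩)

/-- If `‖a‖ ≤ 1` then `1 - a⋆a` is the square of a self-adjoint element `1 - c` of the
unitization with `c ∈ A`, namely `1 - c = (1 - a⋆a)^(1/2)`. -/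
theorem exists_two_smul_sub_mul_self (a : A) (ha : ‖a‖ ≤ 1) :
    ∃ c : A, star c = c ∧ (2 : ℂ) • c - c * c = star a * a := by
  set f : ℝ → ℝ := fun t => 1 - Real.sqrt (1 - t) with hf
  have hf0 : f 0 = 0 := by simp [hf]
  have hfc : Continuous f := by fun_prop
  refine ⟨cfcₙ f (star a * a), (cfcₙ_predicate f (star a * a)).star_eq, ?_⟩
  have hle : ∀ t ∈ quasispectrum ℝ (star a * a), 2 * f t - f t * f t = t := by
    intro t ht
    have h1 : ‖t‖ ≤ ‖star a * a‖ :=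
      NonUnitalIsometricContinuousFunctionalCalculus.norm_quasispectrum_le (star a * a) ht
        (IsSelfAdjoint.star_mul_self a)
    have h2 : ‖star a * a‖ ≤ 1 := by
      rw [CStarRing.norm_star_mul_self]; nlinarith [norm_nonneg a]
    have h3 : 0 ≤ 1 - t := by
      have := le_trans (le_abs_self t) (le_trans h1 h2); linarith
    simp only [hf]
    nlinarith [Real.mul_self_sqrt h3]
  have h2 : (2 : ℂ) • cfcₙ f (star a * a) = cfcₙ (fun t => 2 * f t) (star a * a) := by
    rw [cfcₙ_const_mul (2 : ℝ) f (star a * a)]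
    rw [← Complex.coe_smul]; norm_num
  rw [h2, ← cfcₙ_mul f f (star a * a), ← cfcₙ_sub _ _ (star a * a)]
  conv_rhs => rw [← cfcₙ_id' ℝ (star a * a)]
  exact cfcₙ_congr hle

/-- An injective ⋆-homomorphism of C⋆-algebras reflects positivity. -/
theorem exists_star_mul_of_map {B : Type*} [NonUnitalCStarAlgebra B] (σ : A →⋆ₙₐ[ℂ] B)
    (hσ : Function.Injective σ) {c : A} {t : B} (h : σ c = star t * t) :
    ∃ b, c = star b * b := by
  have hpos : 0 ≤ σ c := by rw [h]; exact star_mul_self_nonneg t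
  have hs : star c = c := hσ (by rw [map_star, h]; simp)
  have hm : ∀ x : A, 0 ≤ x → 0 ≤ σ x := by
    intro x hx
    obtain ⟨b, rfl⟩ := CStarAlgebra.nonneg_iff_eq_star_mul_self.1 hx
    rw [map_mul, map_star]; exact star_mul_self_nonneg _
  have hcc : 0 ≤ c * c := by simpa [hs] using star_mul_self_nonneg c
  have h1 : CFC.sqrt (σ c * σ c) = σ c := CFC.sqrt_unique rfl hpos
  have h2 : CFC.sqrt (σ c * σ c) = σ (CFC.sqrt (c * c)) :=
    CFC.sqrt_unique (by rw [← map_mul, CFC.sqrt_mul_sqrt_self (c * c) hcc, map_mul])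
      (hm _ (CFC.sqrt_nonneg _))
  have h3 : CFC.sqrt (c * c) = c := hσ (by rw [← h2, h1])
  have : 0 ≤ c := h3 ▸ CFC.sqrt_nonneg (c * c)
  exact CStarAlgebra.nonneg_iff_eq_star_mul_self.1 this

end CStar

/-! ### Hilbert modules: boundedness of the structure maps -/

section Corr

variable {A B X : Type*} [NonUnitalCStarAlgebra A] [NonUnitalCStarAlgebra B]
  [NormedAddCommGroup X] [NormedSpace ℂ X] [CompleteSpace X] (c : Correspondence A B X)

theorem inner_add_left (x y z : X) : c.inner (x + y) z = c.inner x z + c.inner y z := by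
  rw [← c.star_inner, c.inner_add_right, star_add, c.star_inner, c.star_inner]

theorem inner_csmul_left (k : ℂ) (x y : X) : c.inner (k • x) y = star k • c.inner x y := by
  rw [← c.star_inner, c.inner_csmul_right, star_smul, c.star_inner]

theorem isLinear_smulR_left (b : B) : IsLinearMap ℂ (fun x => c.smulR x b) :=
  ⟨fun x y => c.add_smulR x y b, fun k x => c.smulR_csmul k x b⟩

theorem isLinear_smulR_right (x : X) : IsLinearMap ℂ (fun b => c.smulR x b) :=
  ⟨fun a b => c.smulR_add x a b, fun k b => c.csmul_smulR k x b⟩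

theorem isLinear_smulL_right (a : A) : IsLinearMap ℂ (fun x => c.smulL a x) :=
  ⟨fun x y => c.smulL_add a x y, fun k x => c.csmul_smulL k a x⟩

theorem isLinear_smulL_left (x : X) : IsLinearMap ℂ (fun a => c.smulL a x) :=
  ⟨fun a b => c.add_smulL a b x, fun k a => c.smulL_csmul k a x⟩

theorem isLinear_inner (x : X) : IsLinearMap ℂ (fun y => c.inner x y) :=
  ⟨fun y z => c.inner_add_right x y z, fun k y => c.inner_csmul_right k x y⟩

theorem inner_zero_right (x : X) : c.inner x 0 = 0 := (isLinear_inner c x).map_zero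

theorem inner_zero_left (x : X) : c.inner 0 x = 0 := by
  rw [← c.star_inner, inner_zero_right, star_zero]

theorem inner_sub_right (x y z : X) : c.inner x (y - z) = c.inner x y - c.inner x z :=
  (isLinear_inner c x).map_sub y z

theorem inner_sub_left (x y z : X) : c.inner (x - y) z = c.inner x z - c.inner y z := by
  rw [← c.star_inner, inner_sub_right, star_sub, c.star_inner, c.star_inner]

theorem smulR_inner (x y : X) (b : B) : c.inner (c.smulR x b) y = star b * c.inner x y := by
  rw [← c.star_inner, c.inner_smulR, star_mul, c.star_inner]

theorem inner_self_nonneg' (x : X) : 0 ≤ c.inner x x :=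
  CStarAlgebra.nonneg_iff_eq_star_mul_self.2 (c.inner_self_nonneg x)

theorem eq_zero_of_inner_self {x : X} (h : c.inner x x = 0) : x = 0 := by
  have := c.norm_inner_self x
  rw [h, norm_zero] at this
  exact norm_eq_zero.1 (pow_eq_zero_iff (two_ne_zero) |>.1 this)

theorem norm_smulR_le (x : X) (b : B) : ‖c.smulR x b‖ ≤ ‖x‖ * ‖b‖ := by
  refine (sq_le_sq₀ (norm_nonneg _) (by positivity)).1 ?_
  rw [c.norm_inner_self, c.inner_smulR, smulR_inner, mul_pow, c.norm_inner_self x]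
  calc ‖star b * c.inner x x * b‖ ≤ ‖star b‖ * ‖c.inner x x‖ * ‖b‖ :=
        (norm_mul_le _ _).trans (by gcongr; exact norm_mul_le _ _)
    _ = _ := by rw [norm_star]; ring

theorem inner_le_inner {x y : X} (b : B) (h : c.inner y y = c.inner x x + star b * b) :
    ‖x‖ ≤ ‖y‖ := by
  refine (sq_le_sq₀ (norm_nonneg _) (norm_nonneg _)).1 ?_
  rw [c.norm_inner_self, c.norm_inner_self]
  refine CStarAlgebra.norm_le_norm_of_nonneg_of_le (inner_self_nonneg' c x) ?_
  rw [h]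
  exact le_add_of_nonneg_right (star_mul_self_nonneg b)

/-- Adjointable left actions are contractive: for `‖a‖ ≤ 1` and `c` with
`(1 - c)² = 1 - a⋆a`, one has `⟨x, x⟩ = ⟨ax, ax⟩ + ⟨(1 - c)x, (1 - c)x⟩`. -/
theorem norm_smulL_le (a : A) (x : X) : ‖c.smulL a x‖ ≤ ‖a‖ * ‖x‖ := by
  have key : ∀ a : A, ‖a‖ ≤ 1 → ‖c.smulL a x‖ ≤ ‖x‖ := by
    intro a ha
    obtain ⟨d, hd, hda⟩ := exists_two_smul_sub_mul_self a ha
    obtain ⟨b, hb⟩ := c.inner_self_nonneg (x - c.smulL d x)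
    refine inner_le_inner c b ?_
    rw [← hb, c.inner_smulL, ← c.smulL_mul, ← hda]
    simp only [inner_sub_left, inner_sub_right, c.inner_smulL, hd]
    rw [sub_eq_add_neg, c.add_smulL, c.inner_add_right, two_smul, c.add_smulL, c.inner_add_right,
      ← c.smulL_mul]
    have : c.smulL (-(d * d)) x = - c.smulL (d * d) x := (isLinear_smulL_left c x).map_neg _
    have h2 : c.inner x (-c.smulL (d * d) x) = - c.inner x (c.smulL (d * d) x) :=
      (isLinear_inner c x).map_neg _
    rw [this, h2]
    abel
  rcases eq_or_ne a 0 with rfl | h0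
  · have : c.smulL 0 x = 0 := (isLinear_smulL_left c x).map_zero
    simp [this]
  · have hn : ‖a‖ ≠ 0 := norm_ne_zero_iff.2 h0
    have h1 := key (((‖a‖⁻¹ : ℝ) : ℂ) • a) (by
      rw [norm_smul]; simp [hn])
    rw [c.smulL_csmul, norm_smul] at h1
    simp only [Complex.norm_real, norm_inv, norm_norm] at h1
    rwa [inv_mul_le_iff₀ (by positivity)] at h1

theorem norm_inner_le (x y : X) : ‖c.inner x y‖ ≤ ‖x‖ * ‖y‖ := by
  have key : ∀ x : X, ‖x‖ ≤ 1 → ‖c.inner x y‖ ≤ ‖y‖ := by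
    intro x hx
    refine (sq_le_sq₀ (norm_nonneg _) (norm_nonneg _)).1 ?_
    set b := c.inner x y with hb
    have h1 : 0 ≤ c.inner (c.smulR x b - y) (c.smulR x b - y) := inner_self_nonneg' c _
    have hyx : c.inner y x = star b := by rw [hb, c.star_inner]
    simp only [inner_sub_left, inner_sub_right, c.inner_smulR, smulR_inner, ← hb, hyx] at h1
    have h2 : star b * c.inner x x * b ≤ star b * b := by
      refine (CStarAlgebra.star_left_conjugate_le_norm_smul
        (IsSelfAdjoint.of_nonneg (inner_self_nonneg' c x))).trans ?_
      rw [← c.norm_inner_self]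
      exact smul_le_of_le_one_left (star_mul_self_nonneg b) (by nlinarith [norm_nonneg x])
    rw [pow_two, ← CStarRing.norm_star_mul_self, c.norm_inner_self]
    refine CStarAlgebra.norm_le_norm_of_nonneg_of_le (star_mul_self_nonneg b) ?_
    have h3 := add_le_add h1 h2
    rw [← sub_nonneg] at h3 ⊢
    refine h3.trans_eq ?_
    rw [sub_mul]
    abel
  rcases eq_or_ne x 0 with rfl | h0
  · simp [inner_zero_left]
  · have hn : ‖x‖ ≠ 0 := norm_ne_zero_iff.2 h0
    have h1 := key (((‖x‖⁻¹ : ℝ) : ℂ) • x) (by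
      rw [norm_smul]; simp [hn])
    rw [inner_csmul_left, norm_smul] at h1
    simp only [norm_star, Complex.norm_real, norm_inv, norm_norm] at h1
    rwa [inv_mul_le_iff₀ (by positivity)] at h1

@[fun_prop]
theorem continuous_smulR {Y : Type*} [TopologicalSpace Y] {f : Y → X} {g : Y → B}
    (hf : Continuous f) (hg : Continuous g) : Continuous fun t => c.smulR (f t) (g t) :=
  (continuous_of_bound₂ (σ := RingHom.id ℂ) c.smulR c.add_smulR c.smulR_csmul c.smulR_add
    (fun k x b => c.csmul_smulR k x b) 1
    (fun x b => by simpa using norm_smulR_le c x b)).comp (hf.prodMk hg)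

@[fun_prop]
theorem continuous_smulL {Y : Type*} [TopologicalSpace Y] {f : Y → A} {g : Y → X}
    (hf : Continuous f) (hg : Continuous g) : Continuous fun t => c.smulL (f t) (g t) :=
  (continuous_of_bound₂ (σ := RingHom.id ℂ) c.smulL c.add_smulL c.smulL_csmul c.smulL_add
    (fun k x b => c.csmul_smulL k x b) 1
    (fun x b => by simpa using norm_smulL_le c x b)).comp (hf.prodMk hg)

@[fun_prop]
theorem continuous_inner {Y : Type*} [TopologicalSpace Y] {f g : Y → X}
    (hf : Continuous f) (hg : Continuous g) : Continuous fun t => c.inner (f t) (g t) :=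
  (continuous_of_bound₂ (σ := starRingEnd ℂ) c.inner (inner_add_left c) (inner_csmul_left c)
    c.inner_add_right (fun k x b => c.inner_csmul_right k x b) 1
    (fun x b => by simpa using norm_inner_le c x b)).comp (hf.prodMk hg)

/-- `X · B` is dense in `X`: if `b` runs through an approximate unit of `B`, then
`⟨x - xb, x - xb⟩ = ⟨x, x⟩ - ⟨x, x⟩b - b⋆⟨x, x⟩ + b⋆⟨x, x⟩b` tends to `0`. -/
theorem dense_smulR : Dense (Submodule.span ℂ {y : X | ∃ x b, y = c.smulR x b} : Set X) := by
  intro x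
  have hl := (CStarAlgebra.increasingApproximateUnit B).tendsto_mul_left (c.inner x x)
  have hst : ∀ᶠ b in CStarAlgebra.approximateUnit B, star b = b :=
    (CStarAlgebra.increasingApproximateUnit B).eventually_star_eq
  have hn := (CStarAlgebra.increasingApproximateUnit B).eventually_norm
  have h0 : Tendsto (fun b => ‖c.inner x x - c.inner x x * b‖ * 2)
      (CStarAlgebra.approximateUnit B) (𝓝 0) := by
    have : Tendsto (fun b => ‖c.inner x x - c.inner x x * b‖ * 2)
      (CStarAlgebra.approximateUnit B) (𝓝 (‖c.inner x x - c.inner x x‖ * 2)) :=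
      ((tendsto_const_nhds.sub hl).norm).mul_const 2
    simpa using this
  have h1 : Tendsto (fun b => ‖x - c.smulR x b‖ ^ 2) (CStarAlgebra.approximateUnit B) (𝓝 0) := by
    refine squeeze_zero' (Eventually.of_forall fun _ => by positivity) ?_ h0
    filter_upwards [hn] with b hb
    rw [c.norm_inner_self]
    simp only [inner_sub_left, inner_sub_right, c.inner_smulR, smulR_inner]
    have : c.inner x x - star b * c.inner x x - (c.inner x x - star b * c.inner x x) * b
        = (c.inner x x - c.inner x x * b) - star b * (c.inner x x - c.inner x x * b) := by
      simp only [mul_sub, sub_mul, mul_assoc]; abel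
    rw [this, mul_two]
    refine (norm_sub_le _ _).trans ?_
    gcongr
    refine (norm_mul_le _ _).trans (mul_le_of_le_one_left (norm_nonneg _) ?_)
    rw [norm_star]; exact hb
  have h2 : Tendsto (fun b => ‖x - c.smulR x b‖) (CStarAlgebra.approximateUnit B) (𝓝 0) := by
    have := (Real.continuous_sqrt.tendsto 0).comp h1
    simpa [Function.comp_def] using this
  have h3 : Tendsto (fun b => c.smulR x b) (CStarAlgebra.approximateUnit B) (𝓝 x) := by
    rw [tendsto_iff_norm_sub_tendsto_zero]
    exact h2.congr fun b => norm_sub_rev _ _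
  exact mem_closure_of_tendsto h3 (Eventually.of_forall fun b => Submodule.subset_span ⟨x, b, rfl⟩)

/-- `A · X · B` is dense in `X`. -/
theorem dense_smulLR :
    Dense (Submodule.span ℂ {y : X | ∃ a x b, y = c.smulR (c.smulL a x) b} : Set X) := by
  refine dense_span_of_forall_mem (dense_smulR c) ?_
  rintro _ ⟨x, b, rfl⟩
  set P := (Submodule.span ℂ {y : X | ∃ a x b, y = c.smulR (c.smulL a x) b}).topologicalClosure
  refine dense_span_induction c.nondegenerate (p := fun x => c.smulR x b ∈ P)
    ((Submodule.isClosed_topologicalClosure _).preimage (by fun_prop)) ?_ ?_ ?_ ?_ x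
  · rw [(isLinear_smulR_left c b).map_zero]; exact P.zero_mem
  · intro x y hx hy; rw [c.add_smulR]; exact P.add_mem hx hy
  · intro k x hx; rw [c.smulR_csmul]; exact P.smul_mem _ hx
  · rintro _ ⟨a, y, rfl⟩
    exact Submodule.le_topologicalClosure _ (Submodule.subset_span ⟨a, y, b, rfl⟩)

end Corr

/-! ### Matrix units and tensor products with the compact operators -/

section Tensor

variable {K : Type*} [NonUnitalCStarAlgebra K] (m : MatrixUnits K)

include m in
theorem norm_u (i j : ℕ) : ‖m.u i j‖ = 1 := by
  have hjj : ‖m.u j j‖ = 1 := by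
    have h : ‖m.u j j‖ * ‖m.u j j‖ = ‖m.u j j‖ * 1 := by
      rw [← CStarRing.norm_star_mul_self, m.star_u, m.u_mul, if_pos rfl, mul_one]
    exact mul_left_cancel₀ (norm_ne_zero_iff.2 (m.u_ne_zero j j)) h
  have h : ‖m.u i j‖ * ‖m.u i j‖ = 1 := by
    rw [← CStarRing.norm_star_mul_self, m.star_u, m.u_mul, if_pos rfl, hjj]
  nlinarith [norm_nonneg (m.u i j)]

variable {B T : Type*} [NonUnitalCStarAlgebra B] [NonUnitalCStarAlgebra T]
  (τ : CStarTensor B K T)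

theorem isLinear_tmul_left (k : K) : IsLinearMap ℂ (fun b => τ.tmul b k) :=
  ⟨fun b b' => τ.add_tmul b b' k, fun c b => τ.smul_tmul c b k⟩

theorem isLinear_tmul_right (b : B) : IsLinearMap ℂ (fun k => τ.tmul b k) :=
  ⟨fun k k' => τ.tmul_add b k k', fun c k => τ.tmul_smul c b k⟩

theorem tmul_zero_right (b : B) : τ.tmul b 0 = 0 := (isLinear_tmul_right τ b).map_zero

theorem tmul_zero_left (k : K) : τ.tmul 0 k = 0 := (isLinear_tmul_left τ k).map_zero

@[fun_prop]
theorem continuous_tmul {Y : Type*} [TopologicalSpace Y] {f : Y → B} {g : Y → K}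
    (hf : Continuous f) (hg : Continuous g) : Continuous fun t => τ.tmul (f t) (g t) :=
  (continuous_of_bound₂ (σ := RingHom.id ℂ) τ.tmul τ.add_tmul τ.smul_tmul τ.tmul_add
    (fun k x b => τ.tmul_smul k x b) 1
    (fun x b => by simp [τ.norm_tmul])).comp (hf.prodMk hg)

theorem norm_tmul_u (b : B) (i j : ℕ) : ‖τ.tmul b (m.u i j)‖ = ‖b‖ := by
  rw [τ.norm_tmul, norm_u, mul_one]

theorem tmul_u_injective (i j : ℕ) : Function.Injective fun b => τ.tmul b (m.u i j) := by
  intro b b' h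
  have := norm_tmul_u m τ (b - b') i j
  rw [(isLinear_tmul_left τ (m.u i j)).map_sub b b'] at this
  simp only at h
  rw [h, sub_self, norm_zero] at this
  exact sub_eq_zero.1 (norm_eq_zero.1 this.symm)

theorem isClosed_range_tmul_u (i j : ℕ) :
    IsClosed (Set.range fun b => τ.tmul b (m.u i j)) := by
  have : Isometry ((isLinear_tmul_left τ (m.u i j)).mk') :=
    AddMonoidHomClass.isometry_of_norm _ fun b => norm_tmul_u m τ b i j
  exact this.isClosedEmbedding.isClosed_range

theorem tmul_u_mul (b b' : B) (i j k l : ℕ) :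
    τ.tmul b (m.u i j) * τ.tmul b' (m.u k l) = if j = k then τ.tmul (b * b') (m.u i l) else 0 := by
  rw [τ.tmul_mul_tmul, m.u_mul]
  split_ifs <;> simp [tmul_zero_right]

theorem star_tmul_u (b : B) (i j : ℕ) : star (τ.tmul b (m.u i j)) = τ.tmul (star b) (m.u j i) := by
  rw [τ.star_tmul, m.star_u]

theorem dense_tmul_u :
    Dense (Submodule.span ℂ {z : T | ∃ b, ∃ p : ℕ × ℕ, z = τ.tmul b (m.u p.1 p.2)} : Set T) :=
  dense_span_tmul (fun b => by fun_prop) (isLinear_tmul_right τ) τ.dense_span m.dense_span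

/-- The corner embedding `b ↦ b ⊗ u 0 0`. -/
def cornerHom : B →⋆ₙₐ[ℂ] T where
  toFun b := τ.tmul b (m.u 0 0)
  map_smul' c b := τ.smul_tmul c b _
  map_zero' := tmul_zero_left τ _
  map_add' b b' := τ.add_tmul b b' _
  map_mul' b b' := by rw [tmul_u_mul, if_pos rfl]
  map_star' b := (star_tmul_u m τ b 0 0).symm

/-- Compressing to corners by `b ⊗ u i k` and `b' ⊗ u l j` lands in `B ⊗ u i j`, with a
coefficient not depending on `i` and `j`. -/
theorem exists_corner (b b' : B) (k l : ℕ) (t : T) :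
    ∃ c, ∀ i j, τ.tmul b (m.u i k) * t * τ.tmul b' (m.u l j) = τ.tmul c (m.u i j) := by
  obtain ⟨c, hc⟩ : ∃ c, τ.tmul c (m.u 0 0) = τ.tmul b (m.u 0 k) * t * τ.tmul b' (m.u l 0) := by
    let P : Submodule ℂ T :=
      ((isLinear_tmul_left τ (m.u 0 0)).mk'.range).comap
        (LinearMap.mulRight ℂ (τ.tmul b' (m.u l 0)) ∘ₗ LinearMap.mulLeft ℂ (τ.tmul b (m.u 0 k)))
    refine mem_of_dense_span (dense_tmul_u m τ) P ?_ ?_ t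
    · exact (isClosed_range_tmul_u m τ 0 0).preimage
        (f := fun t => τ.tmul b (m.u 0 k) * t * τ.tmul b' (m.u l 0)) (by fun_prop)
    · rintro _ ⟨d, ⟨p, q⟩, rfl⟩
      by_cases h1 : k = p
      · by_cases h2 : q = l
        · exact ⟨b * d * b', by simp [tmul_u_mul, h1, h2]⟩
        · exact ⟨0, by simp [tmul_u_mul, h1, h2, tmul_zero_left]⟩
      · exact ⟨0, by simp [tmul_u_mul, h1, tmul_zero_left]⟩
  refine ⟨c, fun i j => ?_⟩
  refine eq_of_forall_mul_left (f := fun b => τ.tmul b (m.u i k) * t * τ.tmul b' (m.u l j))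
    (g := fun c => τ.tmul c (m.u i j)) (by fun_prop) (by fun_prop) fun a => ?_
  refine eq_of_forall_mul_right
    (f := fun b' => τ.tmul (a * b) (m.u i k) * t * τ.tmul b' (m.u l j))
    (g := fun c => τ.tmul c (m.u i j)) (b := b') (c := a * c) (by fun_prop) (by fun_prop)
    fun a' => ?_
  have h1 : τ.tmul (a * b) (m.u i k) = τ.tmul a (m.u i 0) * τ.tmul b (m.u 0 k) := by
    simp [tmul_u_mul]
  have h2 : τ.tmul (b' * a') (m.u l j) = τ.tmul b' (m.u l 0) * τ.tmul a' (m.u 0 j) := by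
    simp [tmul_u_mul]
  have h3 : τ.tmul (a * c * a') (m.u i j)
      = τ.tmul a (m.u i 0) * τ.tmul c (m.u 0 0) * τ.tmul a' (m.u 0 j) := by
    simp [tmul_u_mul]
  rw [h1, h2, h3, hc]
  simp only [mul_assoc]

end Tensor

/-! ### Recovering a correspondence from its stabilization -/

section Faithful

variable {K : Type*} [NonUnitalCStarAlgebra K] (m : MatrixUnits K)
variable {A B TA TB X Z : Type*}
    [NonUnitalCStarAlgebra A] [NonUnitalCStarAlgebra B]
    [NonUnitalCStarAlgebra TA] [NonUnitalCStarAlgebra TB]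
    [NormedAddCommGroup X] [NormedSpace ℂ X] [CompleteSpace X]
    [NormedAddCommGroup Z] [NormedSpace ℂ Z] [CompleteSpace Z]
    {cX : Correspondence A B X} {τA : CStarTensor A K TA} {τB : CStarTensor B K TB}
    {cZ : Correspondence TA TB Z} (E : ExtTensorCorr cX τA τB cZ)

theorem ext_isLinear_left (k : K) : IsLinearMap ℂ (fun x => E.tmul x k) :=
  ⟨fun b b' => E.add_tmul b b' k, fun c b => E.smul_tmul c b k⟩

theorem ext_isLinear_right (x : X) : IsLinearMap ℂ (fun k => E.tmul x k) :=
  ⟨fun k k' => E.tmul_add x k k', fun c k => E.tmul_smul c x k⟩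

theorem ext_norm_tmul (x : X) (k : K) : ‖E.tmul x k‖ = ‖x‖ * ‖k‖ := by
  refine (sq_eq_sq₀ (norm_nonneg _) (by positivity)).1 ?_
  rw [cZ.norm_inner_self, E.inner_tmul, τB.norm_tmul, CStarRing.norm_star_mul_self, mul_pow,
    cX.norm_inner_self, pow_two ‖k‖]

@[fun_prop]
theorem ext_continuous_tmul {Y : Type*} [TopologicalSpace Y] {f : Y → X} {g : Y → K}
    (hf : Continuous f) (hg : Continuous g) : Continuous fun t => E.tmul (f t) (g t) :=
  (continuous_of_bound₂ (σ := RingHom.id ℂ) E.tmul E.add_tmul E.smul_tmul E.tmul_add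
    (fun k x b => E.tmul_smul k x b) 1
    (fun x b => by simp [ext_norm_tmul])).comp (hf.prodMk hg)

/-- The isometric embedding `x ↦ x ⊗ u 0 0` of `X` in `X ⊗ K`. -/
def cornerIsometry : X →ₗᵢ[ℂ] Z where
  toLinearMap := (ext_isLinear_left E (m.u 0 0)).mk'
  norm_map' x := by simp [ext_norm_tmul, norm_u]

theorem ext_smulL_corner (a : A) (x : X) :
    cZ.smulL (τA.tmul a (m.u 0 0)) (cornerIsometry m E x) = cornerIsometry m E (cX.smulL a x) := by
  simp [cornerIsometry, E.smulL_tmul, m.u_mul]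

theorem ext_smulR_corner (x : X) (b : B) :
    cZ.smulR (cornerIsometry m E x) (τB.tmul b (m.u 0 0)) = cornerIsometry m E (cX.smulR x b) := by
  simp [cornerIsometry, E.tmul_smulR, m.u_mul]

theorem ext_inner_corner (x y : X) :
    cZ.inner (cornerIsometry m E x) (cornerIsometry m E y) = τB.tmul (cX.inner x y) (m.u 0 0) := by
  simp [cornerIsometry, E.inner_tmul, m.u_mul, m.star_u]

theorem ext_isClosed_range : IsClosed (Set.range (cornerIsometry m E)) :=
  (cornerIsometry m E).isometry.isClosedEmbedding.isClosed_range

theorem ext_dense_tmul_u :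
    Dense (Submodule.span ℂ {z : Z | ∃ x, ∃ p : ℕ × ℕ, z = E.tmul x (m.u p.1 p.2)} : Set Z) :=
  dense_span_tmul (fun b => by fun_prop) (ext_isLinear_right E) E.dense_span m.dense_span

theorem ext_compress (a : A) (z : Z) (b : B) :
    cZ.smulR (cZ.smulL (τA.tmul a (m.u 0 0)) z) (τB.tmul b (m.u 0 0)) ∈
      Set.range (cornerIsometry m E) := by
  let P : Submodule ℂ Z :=
    ((cornerIsometry m E).toLinearMap.range).comap
      ((isLinear_smulR_left cZ (τB.tmul b (m.u 0 0))).mk' ∘ₗ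
        (isLinear_smulL_right cZ (τA.tmul a (m.u 0 0))).mk')
  refine mem_of_dense_span (ext_dense_tmul_u m E) P ?_ ?_ z
  · exact (ext_isClosed_range m E).preimage
      (f := fun z => cZ.smulR (cZ.smulL (τA.tmul a (m.u 0 0)) z) (τB.tmul b (m.u 0 0)))
      (by fun_prop)
  · rintro _ ⟨x, ⟨p, q⟩, rfl⟩
    have h0 : E.tmul (cX.smulR (cX.smulL a x) b) 0 = 0 := (ext_isLinear_right E _).map_zero
    have hx : cZ.smulR (cZ.smulL (τA.tmul a (m.u 0 0)) (E.tmul x (m.u p q))) (τB.tmul b (m.u 0 0))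
        = E.tmul (cX.smulR (cX.smulL a x) b) (m.u 0 0 * m.u p q * m.u 0 0) := by
      rw [E.smulL_tmul, E.tmul_smulR]
    by_cases h1 : 0 = p
    · by_cases h2 : q = 0
      · subst h1 h2
        exact ⟨cX.smulR (cX.smulL a x) b, by simp [hx, m.u_mul, cornerIsometry]⟩
      · refine ⟨0, ?_⟩
        have : m.u 0 0 * m.u p q * m.u 0 0 = 0 := by
          subst h1; simp [m.u_mul, h2]
        change cornerIsometry m E 0 = cZ.smulR (cZ.smulL _ _) _
        rw [map_zero, hx, this, h0]
    · refine ⟨0, ?_⟩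
      have : m.u 0 0 * m.u p q * m.u 0 0 = 0 := by simp [m.u_mul, h1]
      change cornerIsometry m E 0 = cZ.smulR (cZ.smulL _ _) _
      rw [map_zero, hx, this, h0]

/-- An isomorphism of stabilizations maps the corner `X ⊗ u 0 0` into the corner
`X' ⊗ u 0 0`, because `X = closure (A · X · B)` and isomorphisms intertwine the compressions
`z ↦ (a ⊗ u 0 0) · z · (b ⊗ u 0 0)`. -/
theorem equiv_corner {X' Z' : Type*} [NormedAddCommGroup X'] [NormedSpace ℂ X'] [CompleteSpace X']
    [NormedAddCommGroup Z'] [NormedSpace ℂ Z'] [CompleteSpace Z']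
    {cX' : Correspondence A B X'} {cZ' : Correspondence TA TB Z'}
    (E' : ExtTensorCorr cX' τA τB cZ') (φ : Z →ₗ[ℂ] Z') (hφ : Continuous φ)
    (hL : ∀ a z, φ (cZ.smulL a z) = cZ'.smulL a (φ z))
    (hR : ∀ z b, φ (cZ.smulR z b) = cZ'.smulR (φ z) b) (x : X) :
    φ (cornerIsometry m E x) ∈ (cornerIsometry m E').toLinearMap.range := by
  let P : Submodule ℂ X := ((cornerIsometry m E').toLinearMap.range).comap
      (φ ∘ₗ (cornerIsometry m E).toLinearMap)
  refine mem_of_dense_span (dense_smulLR cX) P ?_ ?_ x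
  · exact (ext_isClosed_range m E').preimage (f := fun x => φ (cornerIsometry m E x))
      (hφ.comp (cornerIsometry m E).continuous)
  · rintro _ ⟨a, x, b, rfl⟩
    change φ (cornerIsometry m E _) ∈ Set.range (cornerIsometry m E')
    rw [← ext_smulR_corner, ← ext_smulL_corner, hR, hL]
    exact ext_compress m E' a _ b

include m E in
theorem faithful_clause {X' Z' : Type*}
    [NormedAddCommGroup X'] [NormedSpace ℂ X'] [CompleteSpace X']
    [NormedAddCommGroup Z'] [NormedSpace ℂ Z'] [CompleteSpace Z']
    {cX' : Correspondence A B X'} {cZ' : Correspondence TA TB Z'}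
    (E' : ExtTensorCorr cX' τA τB cZ') (Φ : CorrEquiv cZ cZ') : Nonempty (CorrEquiv cX cX') := by
  have hn : ∀ z, ‖Φ.toEquiv z‖ = ‖z‖ := fun z => by
    refine (sq_eq_sq₀ (norm_nonneg _) (norm_nonneg _)).1 ?_
    rw [cZ.norm_inner_self, cZ'.norm_inner_self, Φ.map_inner]
  let φ : Z ≃ₗᵢ[ℂ] Z' := ⟨Φ.toEquiv, hn⟩
  have hφ : ∀ z, φ z = Φ.toEquiv z := fun _ => rfl
  have h1 := equiv_corner m E E' φ.toLinearEquiv.toLinearMap φ.continuous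
    Φ.map_smulL Φ.map_smulR
  have h2 := equiv_corner m E' E φ.symm.toLinearEquiv.toLinearMap φ.symm.continuous
    (fun a z => φ.injective (by
      simp only [LinearEquiv.coe_coe, LinearIsometryEquiv.coe_toLinearEquiv,
        LinearIsometryEquiv.apply_symm_apply]
      rw [hφ, Φ.map_smulL, ← hφ, LinearIsometryEquiv.apply_symm_apply]))
    (fun a z => φ.injective (by
      simp only [LinearEquiv.coe_coe, LinearIsometryEquiv.coe_toLinearEquiv,
        LinearIsometryEquiv.apply_symm_apply]
      rw [hφ, Φ.map_smulR, ← hφ, LinearIsometryEquiv.apply_symm_apply]))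
  choose f hf using h1
  choose g hg using h2
  replace hf : ∀ x, cornerIsometry m E' (f x) = φ (cornerIsometry m E x) := hf
  replace hg : ∀ x, cornerIsometry m E (g x) = φ.symm (cornerIsometry m E' x) := hg
  have iE := (cornerIsometry m E).injective
  have iE' := (cornerIsometry m E').injective
  refine ⟨⟨{ toFun := f, invFun := g, map_add' := ?_, map_smul' := ?_, left_inv := ?_,
             right_inv := ?_ }, ?_, ?_, ?_⟩⟩
  · intro x y; apply iE'; simp [hf]
  · intro c y; apply iE'; simp [hf]
  · intro x; apply iE; simp [hf, hg]
  · intro x; apply iE'; simp [hf, hg]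
  · intro x y
    refine tmul_u_injective m τB 0 0 ?_
    change τB.tmul (cX'.inner (f x) (f y)) _ = τB.tmul _ _
    rw [← ext_inner_corner m E', hf, hf, hφ, hφ, Φ.map_inner, ext_inner_corner]
  · intro a x
    apply iE'
    change cornerIsometry m E' (f _) = cornerIsometry m E' (cX'.smulL a (f x))
    rw [hf, ← ext_smulL_corner, ← ext_smulL_corner, hf, hφ, hφ, Φ.map_smulL]
  · intro x b
    apply iE'
    change cornerIsometry m E' (f _) = cornerIsometry m E' (cX'.smulR (f x) b)
    rw [hf, ← ext_smulR_corner, ← ext_smulR_corner, hf, hφ, hφ, Φ.map_smulR]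

end Faithful

/-! ### Every correspondence between stabilizations is a stabilization -/

section Full

theorem mem_of_forall_mul_left {A W : Type*} [NonUnitalCStarAlgebra A] [TopologicalSpace W]
    {s : Set W} (hs : IsClosed s) {f : A → W} (hf : Continuous f) {b : A}
    (h : ∀ d, f (d * b) ∈ s) : f b ∈ s :=
  hs.mem_of_tendsto ((hf.tendsto b).comp
    ((CStarAlgebra.increasingApproximateUnit A).tendsto_mul_right b)) (Eventually.of_forall h)

theorem mem_of_forall_mul_right {A W : Type*} [NonUnitalCStarAlgebra A] [TopologicalSpace W]
    {s : Set W} (hs : IsClosed s) {f : A → W} (hf : Continuous f) {b : A}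
    (h : ∀ d, f (b * d) ∈ s) : f b ∈ s :=
  hs.mem_of_tendsto ((hf.tendsto b).comp
    ((CStarAlgebra.increasingApproximateUnit A).tendsto_mul_left b)) (Eventually.of_forall h)

variable {K : Type*} [NonUnitalCStarAlgebra K] (m : MatrixUnits K)
variable {A B TA TB Z : Type*}
    [NonUnitalCStarAlgebra A] [NonUnitalCStarAlgebra B]
    [NonUnitalCStarAlgebra TA] [NonUnitalCStarAlgebra TB]
    [NormedAddCommGroup Z] [NormedSpace ℂ Z] [CompleteSpace Z]
    (τA : CStarTensor A K TA) (τB : CStarTensor B K TB) (cZ : Correspondence TA TB Z)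

/-- The vector `(a ⊗ u i 0) · z · (b ⊗ u 0 j)`. -/
def gen (i j : ℕ) (p : A × Z × B) : Z :=
  cZ.smulR (cZ.smulL (τA.tmul p.1 (m.u i 0)) p.2.1) (τB.tmul p.2.2 (m.u 0 j))

/-- The linear extension of `gen i j` to formal combinations of triples `(a, z, b)`. -/
def genL (i j : ℕ) : (A × Z × B →₀ ℂ) →ₗ[ℂ] Z := Finsupp.linearCombination ℂ (gen m τA τB cZ i j)

theorem inner_gen (p q : A × Z × B) : ∃ c, ∀ i j i' j',
    cZ.inner (gen m τA τB cZ i j p) (gen m τA τB cZ i' j' q) =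
      if i = i' then τB.tmul c (m.u j j') else 0 := by
  obtain ⟨c, hc⟩ := exists_corner m τB (star p.2.2) q.2.2 0 0
    (cZ.inner p.2.1 (cZ.smulL (τA.tmul (star p.1 * q.1) (m.u 0 0)) q.2.1))
  refine ⟨c, fun i j i' j' => ?_⟩
  simp only [gen]
  rw [cZ.inner_smulR, smulR_inner, cZ.inner_smulL, ← cZ.smulL_mul, star_tmul_u, star_tmul_u,
    tmul_u_mul]
  split_ifs
  · exact hc j j'
  · rw [(isLinear_smulL_left cZ q.2.1).map_zero, inner_zero_right, mul_zero, zero_mul]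

theorem inner_genL (s t : A × Z × B →₀ ℂ) : ∃ c, ∀ i j i' j',
    cZ.inner (genL m τA τB cZ i j s) (genL m τA τB cZ i' j' t) =
      if i = i' then τB.tmul c (m.u j j') else 0 := by
  induction s using Finsupp.induction_linear with
  | zero => exact ⟨0, by simp [inner_zero_left, tmul_zero_left]⟩
  | add s s' hs hs' =>
    obtain ⟨c, hc⟩ := hs
    obtain ⟨c', hc'⟩ := hs'
    refine ⟨c + c', fun i j i' j' => ?_⟩
    rw [map_add, inner_add_left, hc, hc', τB.add_tmul]
    split_ifs <;> simp
  | single p k =>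
    induction t using Finsupp.induction_linear with
    | zero => exact ⟨0, by simp [inner_zero_right, tmul_zero_left]⟩
    | add s s' hs hs' =>
      obtain ⟨c, hc⟩ := hs
      obtain ⟨c', hc'⟩ := hs'
      refine ⟨c + c', fun i j i' j' => ?_⟩
      rw [map_add, cZ.inner_add_right, hc, hc', τB.add_tmul]
      split_ifs <;> simp
    | single q l =>
      obtain ⟨c, hc⟩ := inner_gen m τA τB cZ p q
      refine ⟨star k • l • c, fun i j i' j' => ?_⟩
      simp only [genL, Finsupp.linearCombination_single]
      rw [inner_csmul_left, cZ.inner_csmul_right, hc, τB.smul_tmul, τB.smul_tmul]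
      split_ifs <;> simp

theorem norm_genL (i j : ℕ) (s : A × Z × B →₀ ℂ) :
    ‖genL m τA τB cZ i j s‖ = ‖genL m τA τB cZ 0 0 s‖ := by
  obtain ⟨c, hc⟩ := inner_genL m τA τB cZ s s
  refine (sq_eq_sq₀ (norm_nonneg _) (norm_nonneg _)).1 ?_
  rw [cZ.norm_inner_self, cZ.norm_inner_self, hc, hc, if_pos rfl, if_pos rfl, norm_tmul_u,
    norm_tmul_u]

/-- The corner `(A ⊗ u 0 0) · Z · (B ⊗ u 0 0)` of `Z` (closed span). -/
def corner : Submodule ℂ Z := (genL m τA τB cZ 0 0).range.topologicalClosure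

instance : CompleteSpace (corner m τA τB cZ) :=
  Submodule.topologicalClosure.completeSpace _

/-- `genL 0 0`, as a map with dense range into the corner. -/
def genC : (A × Z × B →₀ ℂ) →ₗ[ℂ] corner m τA τB cZ :=
  (genL m τA τB cZ 0 0).codRestrict _ fun s =>
    Submodule.le_topologicalClosure _ (LinearMap.mem_range_self _ s)

theorem coe_genC (s : A × Z × B →₀ ℂ) : (genC m τA τB cZ s : Z) = genL m τA τB cZ 0 0 s := rfl

theorem denseRange_genC : DenseRange (genC m τA τB cZ) := by
  intro x
  rw [closure_subtype, ← Set.range_comp]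
  exact x.2

/-- The isometry `x ↦ u i 0 · x · u 0 j` from the corner into `Z`. -/
def shift (i j : ℕ) : corner m τA τB cZ →L[ℂ] Z :=
  (genL m τA τB cZ i j).extendOfNorm (genC m τA τB cZ)

theorem shift_genC (i j : ℕ) (s : A × Z × B →₀ ℂ) :
    shift m τA τB cZ i j (genC m τA τB cZ s) = genL m τA τB cZ i j s :=
  LinearMap.extendOfNorm_eq (denseRange_genC m τA τB cZ)
    ⟨1, fun s => by rw [one_mul, norm_genL]; rfl⟩ s

theorem shift_zero_zero (x : corner m τA τB cZ) : shift m τA τB cZ 0 0 x = x := by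
  refine (denseRange_genC m τA τB cZ).induction_on x (isClosed_eq (by fun_prop) (by fun_prop)) ?_
  intro s
  rw [shift_genC, coe_genC]

theorem inner_shift (x y : corner m τA τB cZ) : ∃ c, ∀ i j i' j',
    cZ.inner (shift m τA τB cZ i j x) (shift m τA τB cZ i' j' y) =
      if i = i' then τB.tmul c (m.u j j') else 0 := by
  -- for fixed indices, the pair `(⟨x, y⟩, ⟨u i 0 x u 0 j, u i' 0 y u 0 j'⟩)` lies in the closed
  -- range of the isometry `c ↦ (c ⊗ u 0 0, δ i i' c ⊗ u j j')`
  have key : ∀ i j i' j', ∃ c, cZ.inner (x : Z) y = τB.tmul c (m.u 0 0) ∧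
      cZ.inner (shift m τA τB cZ i j x) (shift m τA τB cZ i' j' y) =
        if i = i' then τB.tmul c (m.u j j') else 0 := by
    intro i j i' j'
    let ψ : B →ₗ[ℂ] TB × TB := (isLinear_tmul_left τB (m.u 0 0)).mk'.prod
      (if i = i' then (isLinear_tmul_left τB (m.u j j')).mk' else 0)
    have h2 : ∀ c, ψ c = (τB.tmul c (m.u 0 0), if i = i' then τB.tmul c (m.u j j') else 0) := by
      intro c; simp only [ψ]; split_ifs <;> rfl
    have hiso : Isometry ψ := AddMonoidHomClass.isometry_of_norm _ fun c => by
      rw [h2, Prod.norm_mk]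
      split_ifs <;> simp [norm_tmul_u]
    have hcl : IsClosed (Set.range ψ) := hiso.isClosedEmbedding.isClosed_range
    have hmem : (cZ.inner (x : Z) y,
        cZ.inner (shift m τA τB cZ i j x) (shift m τA τB cZ i' j' y)) ∈ Set.range ψ := by
      refine (denseRange_genC m τA τB cZ).induction_on₂
        (p := fun x y : corner m τA τB cZ => (cZ.inner (x : Z) y,
        cZ.inner (shift m τA τB cZ i j x) (shift m τA τB cZ i' j' y)) ∈ Set.range ψ)
        (hcl.preimage (by fun_prop)) ?_ x y
      intro s t
      obtain ⟨c, hc⟩ := inner_genL m τA τB cZ s t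
      refine ⟨c, ?_⟩
      rw [h2, shift_genC, shift_genC, coe_genC, coe_genC, hc, hc, if_pos rfl]
    obtain ⟨c, hc⟩ := hmem
    rw [h2, Prod.mk.injEq] at hc
    exact ⟨c, hc.1.symm, hc.2.symm⟩
  obtain ⟨c, hc, -⟩ := key 0 0 0 0
  refine ⟨c, fun i j i' j' => ?_⟩
  obtain ⟨c', hc', h⟩ := key i j i' j'
  rwa [show c = c' from tmul_u_injective m τB 0 0 (hc.symm.trans hc')]

/-- Left multiplication of formal generators by `a : A`. -/
def genSmulL (a : A) : (A × Z × B →₀ ℂ) →ₗ[ℂ] (A × Z × B →₀ ℂ) :=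
  Finsupp.lmapDomain ℂ ℂ fun p => (a * p.1, p.2)

/-- Right multiplication of formal generators by `b : B`. -/
def genSmulR (b : B) : (A × Z × B →₀ ℂ) →ₗ[ℂ] (A × Z × B →₀ ℂ) :=
  Finsupp.lmapDomain ℂ ℂ fun p => (p.1, p.2.1, p.2.2 * b)

theorem smulL_genL (a : A) (k l i j : ℕ) (s : A × Z × B →₀ ℂ) :
    cZ.smulL (τA.tmul a (m.u k l)) (genL m τA τB cZ i j s) =
      if l = i then genL m τA τB cZ k j (genSmulL a s) else 0 := by
  induction s using Finsupp.induction_linear with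
  | zero => simp [(isLinear_smulL_right cZ (τA.tmul a (m.u k l))).map_zero]
  | add s s' hs hs' =>
    rw [map_add, cZ.smulL_add, hs, hs', map_add, map_add]
    split_ifs <;> simp
  | single p c =>
    simp only [genL, genSmulL, Finsupp.lmapDomain_apply, Finsupp.mapDomain_single,
      Finsupp.linearCombination_single, gen, cZ.csmul_smulL]
    rw [← cZ.smulL_smulR, ← cZ.smulL_mul, tmul_u_mul]
    split_ifs
    · rfl
    · rw [(isLinear_smulL_left cZ _).map_zero, (isLinear_smulR_left cZ _).map_zero, smul_zero]

theorem smulR_genL (b : B) (k l i j : ℕ) (s : A × Z × B →₀ ℂ) :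
    cZ.smulR (genL m τA τB cZ i j s) (τB.tmul b (m.u k l)) =
      if j = k then genL m τA τB cZ i l (genSmulR b s) else 0 := by
  induction s using Finsupp.induction_linear with
  | zero => simp [(isLinear_smulR_left cZ (τB.tmul b (m.u k l))).map_zero]
  | add s s' hs hs' =>
    rw [map_add, cZ.add_smulR, hs, hs', map_add, map_add]
    split_ifs <;> simp
  | single p c =>
    simp only [genL, genSmulR, Finsupp.lmapDomain_apply, Finsupp.mapDomain_single,
      Finsupp.linearCombination_single, gen, cZ.smulR_csmul]
    rw [← cZ.smulR_mul, tmul_u_mul]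
    split_ifs
    · rfl
    · rw [(isLinear_smulR_right cZ _).map_zero, smul_zero]

theorem smulL_mem_corner (a : A) (x : corner m τA τB cZ) :
    cZ.smulL (τA.tmul a (m.u 0 0)) (x : Z) ∈ corner m τA τB cZ := by
  refine (denseRange_genC m τA τB cZ).induction_on
    (p := fun x : corner m τA τB cZ => cZ.smulL (τA.tmul a (m.u 0 0)) (x : Z) ∈ corner m τA τB cZ) x
    ((Submodule.isClosed_topologicalClosure _).preimage (by fun_prop)) ?_
  intro s
  rw [coe_genC, smulL_genL, if_pos rfl]
  exact (genC m τA τB cZ _).2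

theorem smulR_mem_corner (b : B) (x : corner m τA τB cZ) :
    cZ.smulR (x : Z) (τB.tmul b (m.u 0 0)) ∈ corner m τA τB cZ := by
  refine (denseRange_genC m τA τB cZ).induction_on
    (p := fun x : corner m τA τB cZ => cZ.smulR (x : Z) (τB.tmul b (m.u 0 0)) ∈ corner m τA τB cZ) x
    ((Submodule.isClosed_topologicalClosure _).preimage (by fun_prop)) ?_
  intro s
  rw [coe_genC, smulR_genL, if_pos rfl]
  exact (genC m τA τB cZ _).2

theorem tmul_choose_inner_shift (x y : corner m τA τB cZ) :
    τB.tmul (inner_shift m τA τB cZ x y).choose (m.u 0 0) = cZ.inner (x : Z) y := by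
  have := (inner_shift m τA τB cZ x y).choose_spec 0 0 0 0
  rw [if_pos rfl, shift_zero_zero, shift_zero_zero] at this
  exact this.symm

/-- The corner of `Z`, as an `A`–`B` correspondence: `A` and `B` act through `A ⊗ u 0 0` and
`B ⊗ u 0 0`, and `⟨x, y⟩_B ⊗ u 0 0` is the inner product of `x` and `y` in `Z`. -/
def cornerCorr : Correspondence A B (corner m τA τB cZ) where
  smulL a x := ⟨cZ.smulL (τA.tmul a (m.u 0 0)) x, smulL_mem_corner m τA τB cZ a x⟩
  smulR x b := ⟨cZ.smulR x (τB.tmul b (m.u 0 0)), smulR_mem_corner m τA τB cZ b x⟩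
  inner x y := (inner_shift m τA τB cZ x y).choose
  smulR_add x b b' := Subtype.ext <| by simp [τB.add_tmul, cZ.smulR_add]
  add_smulR x y b := Subtype.ext <| by simp [cZ.add_smulR]
  smulR_mul x b b' := Subtype.ext <| by
    simp only
    rw [← cZ.smulR_mul, tmul_u_mul, if_pos rfl]
  smulR_csmul c x b := Subtype.ext <| by simp [cZ.smulR_csmul]
  csmul_smulR c x b := Subtype.ext <| by simp [cZ.csmul_smulR, τB.smul_tmul]
  inner_add_right x y z := tmul_u_injective m τB 0 0 <| by
    simp only [τB.add_tmul, tmul_choose_inner_shift, Submodule.coe_add, cZ.inner_add_right]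
  inner_csmul_right c x y := tmul_u_injective m τB 0 0 <| by
    simp only [τB.smul_tmul, tmul_choose_inner_shift, Submodule.coe_smul, cZ.inner_csmul_right]
  star_inner x y := tmul_u_injective m τB 0 0 <| by
    simp only
    rw [← star_tmul_u, tmul_choose_inner_shift, tmul_choose_inner_shift, cZ.star_inner]
  inner_smulR x y b := tmul_u_injective m τB 0 0 <| by
    have := tmul_u_mul m τB (inner_shift m τA τB cZ x y).choose b 0 0 0 0
    rw [if_pos rfl] at this
    simp only [tmul_choose_inner_shift, cZ.inner_smulR, ← this]
  inner_self_nonneg x := by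
    obtain ⟨t, ht⟩ := cZ.inner_self_nonneg (x : Z)
    exact exists_star_mul_of_map (cornerHom m τB) (tmul_u_injective m τB 0 0)
      ((tmul_choose_inner_shift m τA τB cZ x x).trans ht)
  norm_inner_self x := by
    rw [← norm_tmul_u m τB _ 0 0, tmul_choose_inner_shift, ← cZ.norm_inner_self]; rfl
  smulL_add a x y := Subtype.ext <| by simp [cZ.smulL_add]
  add_smulL a a' x := Subtype.ext <| by simp [τA.add_tmul, cZ.add_smulL]
  smulL_mul a a' x := Subtype.ext <| by
    simp only
    rw [← cZ.smulL_mul, tmul_u_mul, if_pos rfl]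
  smulL_csmul c a x := Subtype.ext <| by simp [cZ.smulL_csmul, τA.smul_tmul]
  csmul_smulL c a x := Subtype.ext <| by simp [cZ.csmul_smulL]
  smulL_smulR a x b := Subtype.ext <| cZ.smulL_smulR _ _ _
  inner_smulL a x y := tmul_u_injective m τB 0 0 <| by
    simp only [tmul_choose_inner_shift, cZ.inner_smulL, star_tmul_u]
  nondegenerate := by
    set S : Set (corner m τA τB cZ) := {y | ∃ (a : A) (x : corner m τA τB cZ),
      y = ⟨cZ.smulL (τA.tmul a (m.u 0 0)) x, smulL_mem_corner m τA τB cZ a x⟩}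
    have hcl := Submodule.isClosed_topologicalClosure (Submodule.span ℂ S)
    intro x
    refine (denseRange_genC m τA τB cZ).induction_on
      (p := fun x => x ∈ (Submodule.span ℂ S).topologicalClosure) x hcl ?_
    intro s
    induction s using Finsupp.induction_linear with
    | zero => rw [map_zero]; exact Submodule.zero_mem _
    | add s s' hs hs' => rw [map_add]; exact Submodule.add_mem _ hs hs'
    | single p c =>
      obtain ⟨a, z, b⟩ := p
      have hc : Continuous fun a => genC m τA τB cZ (Finsupp.single (a, z, b) c) := by
        refine continuous_induced_rng.2 ?_
        simp only [Function.comp_def, coe_genC, genL, Finsupp.linearCombination_single, gen]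
        fun_prop
      refine mem_of_forall_mul_left hcl hc fun d => Submodule.le_topologicalClosure _
        (Submodule.subset_span ⟨d, genC m τA τB cZ (Finsupp.single (a, z, b) c), Subtype.ext ?_⟩)
      simp only [coe_genC]
      rw [smulL_genL, if_pos rfl, genSmulL, Finsupp.lmapDomain_apply, Finsupp.mapDomain_single]

theorem smulL_shift (a : A) (k l i j : ℕ) (x : corner m τA τB cZ) :
    cZ.smulL (τA.tmul a (m.u k l)) (shift m τA τB cZ i j x) =
      if l = i then shift m τA τB cZ k j ((cornerCorr m τA τB cZ).smulL a x) else 0 := by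
  refine (denseRange_genC m τA τB cZ).induction_on
    (p := fun x => cZ.smulL (τA.tmul a (m.u k l)) (shift m τA τB cZ i j x) =
      if l = i then shift m τA τB cZ k j ((cornerCorr m τA τB cZ).smulL a x) else 0) x
    (isClosed_eq (by fun_prop) (by split_ifs <;> fun_prop)) ?_
  intro s
  have h : (cornerCorr m τA τB cZ).smulL a (genC m τA τB cZ s) = genC m τA τB cZ (genSmulL a s) :=
    Subtype.ext <| by simp [cornerCorr, coe_genC, smulL_genL]
  rw [h, shift_genC, shift_genC, smulL_genL]

theorem smulR_shift (b : B) (k l i j : ℕ) (x : corner m τA τB cZ) :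
    cZ.smulR (shift m τA τB cZ i j x) (τB.tmul b (m.u k l)) =
      if j = k then shift m τA τB cZ i l ((cornerCorr m τA τB cZ).smulR x b) else 0 := by
  refine (denseRange_genC m τA τB cZ).induction_on
    (p := fun x => cZ.smulR (shift m τA τB cZ i j x) (τB.tmul b (m.u k l)) =
      if j = k then shift m τA τB cZ i l ((cornerCorr m τA τB cZ).smulR x b) else 0) x
    (isClosed_eq (by fun_prop) (by split_ifs <;> fun_prop)) ?_
  intro s
  have h : (cornerCorr m τA τB cZ).smulR (genC m τA τB cZ s) b = genC m τA τB cZ (genSmulR b s) :=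
    Subtype.ext <| by simp [cornerCorr, coe_genC, smulR_genL]
  rw [h, shift_genC, shift_genC, smulR_genL]

theorem inner_shift' (x y : corner m τA τB cZ) (i j i' j' : ℕ) :
    cZ.inner (shift m τA τB cZ i j x) (shift m τA τB cZ i' j' y) =
      τB.tmul ((cornerCorr m τA τB cZ).inner x y) (star (m.u i j) * m.u i' j') := by
  rw [(inner_shift m τA τB cZ x y).choose_spec i j i' j', m.star_u, m.u_mul]
  split_ifs
  · rfl
  · rw [tmul_zero_right]

/-- Finite linear combinations of matrix units in `K`. -/
def unitsL : (ℕ × ℕ →₀ ℂ) →ₗ[ℂ] K := Finsupp.linearCombination ℂ fun p => m.u p.1 p.2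

theorem denseRange_unitsL : DenseRange (unitsL m) := by
  have := m.dense_span
  rwa [← Finsupp.range_linearCombination] at this

/-- `s ↦ x ⊗ s` for finite linear combinations `s` of matrix units. -/
def shiftL (x : corner m τA τB cZ) : (ℕ × ℕ →₀ ℂ) →ₗ[ℂ] Z :=
  Finsupp.linearCombination ℂ fun p => shift m τA τB cZ p.1 p.2 x

theorem inner_shiftL (x y : corner m τA τB cZ) (s t : ℕ × ℕ →₀ ℂ) :
    cZ.inner (shiftL m τA τB cZ x s) (shiftL m τA τB cZ y t) =
      τB.tmul ((cornerCorr m τA τB cZ).inner x y) (star (unitsL m s) * unitsL m t) := by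
  induction s using Finsupp.induction_linear with
  | zero => simp [inner_zero_left, tmul_zero_right]
  | add s s' hs hs' => rw [map_add, inner_add_left, hs, hs', map_add, star_add, add_mul,
      τB.tmul_add]
  | single p k =>
    induction t using Finsupp.induction_linear with
    | zero => simp [inner_zero_right, tmul_zero_right]
    | add s s' hs hs' => rw [map_add, cZ.inner_add_right, hs, hs', map_add, mul_add, τB.tmul_add]
    | single q l =>
      simp only [shiftL, unitsL, Finsupp.linearCombination_single]
      rw [inner_csmul_left, cZ.inner_csmul_right, inner_shift', star_smul, smul_mul_assoc,
        mul_smul_comm, τB.tmul_smul, τB.tmul_smul]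

theorem norm_shiftL (x : corner m τA τB cZ) (s : ℕ × ℕ →₀ ℂ) :
    ‖shiftL m τA τB cZ x s‖ = ‖x‖ * ‖unitsL m s‖ := by
  refine (sq_eq_sq₀ (norm_nonneg _) (by positivity)).1 ?_
  rw [cZ.norm_inner_self, inner_shiftL, τB.norm_tmul, CStarRing.norm_star_mul_self, mul_pow,
    (cornerCorr m τA τB cZ).norm_inner_self, pow_two ‖unitsL m s‖]

/-- The elementary tensor `x ⊗ k ∈ Z`, for `x` in the corner. -/
def extMk (x : corner m τA τB cZ) : K →L[ℂ] Z :=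
  (shiftL m τA τB cZ x).extendOfNorm (unitsL m)

theorem extMk_u (x : corner m τA τB cZ) (i j : ℕ) :
    extMk m τA τB cZ x (m.u i j) = shift m τA τB cZ i j x := by
  have := LinearMap.extendOfNorm_eq (f := shiftL m τA τB cZ x) (denseRange_unitsL m)
    ⟨‖x‖, fun s => (norm_shiftL m τA τB cZ x s).le⟩ (Finsupp.single (i, j) 1)
  rw [unitsL, shiftL, Finsupp.linearCombination_single, Finsupp.linearCombination_single, one_smul,
    one_smul] at this
  exact this

/-- Continuous linear maps on `K` are determined by their values on matrix units. -/
theorem ext_units {W : Type*} [NormedAddCommGroup W] [NormedSpace ℂ W] {f g : K → W}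
    (hf : Continuous f) (hg : Continuous g) (hfl : IsLinearMap ℂ f) (hgl : IsLinearMap ℂ g)
    (h : ∀ i j, f (m.u i j) = g (m.u i j)) (k : K) : f k = g k :=
  ext_of_dense_span m.dense_span hf hg hfl hgl (by rintro _ ⟨p, rfl⟩; exact h _ _) k

theorem dense_extMk : Dense (Submodule.span ℂ
    {z : Z | ∃ x k, z = extMk m τA τB cZ x k} : Set Z) := by
  refine dense_span_of_forall_mem (dense_smulLR cZ) ?_
  set S := {z : Z | ∃ x k, z = extMk m τA τB cZ x k}
  set P := (Submodule.span ℂ S).topologicalClosure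
  have hcl : IsClosed (P : Set Z) := Submodule.isClosed_topologicalClosure _
  rintro _ ⟨s, z, t, rfl⟩
  refine mem_of_dense_span (dense_tmul_u m τA)
    (P.comap ((isLinear_smulR_left cZ t).mk' ∘ₗ (isLinear_smulL_left cZ z).mk'))
    (hcl.preimage (f := fun s => cZ.smulR (cZ.smulL s z) t) (by fun_prop)) ?_ s
  rintro _ ⟨a, ⟨i, k⟩, rfl⟩
  refine mem_of_dense_span (dense_tmul_u m τB)
    (P.comap ((isLinear_smulR_right cZ (cZ.smulL (τA.tmul a (m.u i k)) z)).mk'))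
    (hcl.preimage (f := fun t => cZ.smulR (cZ.smulL (τA.tmul a (m.u i k)) z) t) (by fun_prop)) ?_ t
  rintro _ ⟨b, ⟨l, j⟩, rfl⟩
  refine mem_of_forall_mul_right hcl
    (f := fun a => cZ.smulR (cZ.smulL (τA.tmul a (m.u i k)) z) (τB.tmul b (m.u l j)))
    (by fun_prop) fun d => ?_
  refine mem_of_forall_mul_left hcl
    (f := fun b => cZ.smulR (cZ.smulL (τA.tmul (a * d) (m.u i k)) z) (τB.tmul b (m.u l j)))
    (by fun_prop) fun d' => ?_
  refine Submodule.le_topologicalClosure _ (Submodule.subset_span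
    ⟨genC m τA τB cZ (Finsupp.single
      (a, cZ.smulR (cZ.smulL (τA.tmul d (m.u 0 k)) z) (τB.tmul d' (m.u l 0)), b) 1), m.u i j, ?_⟩)
  rw [extMk_u, shift_genC, genL, Finsupp.linearCombination_single, one_smul]
  simp only [gen]
  rw [← cZ.smulL_smulR, ← cZ.smulL_mul, ← cZ.smulR_mul, tmul_u_mul, tmul_u_mul, if_pos rfl,
    if_pos rfl]

/-- `Z` is the external tensor product of its corner with `K`. -/
def cornerExt : ExtTensorCorr (cornerCorr m τA τB cZ) τA τB cZ where
  tmul x k := extMk m τA τB cZ x k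
  add_tmul x x' := ext_units m (by fun_prop) (by fun_prop) (extMk m τA τB cZ (x + x')).isLinear
    (extMk m τA τB cZ x + extMk m τA τB cZ x').isLinear (by simp [extMk_u])
  tmul_add x k k' := map_add _ _ _
  smul_tmul c x := ext_units m (by fun_prop) (by fun_prop) (extMk m τA τB cZ (c • x)).isLinear
    (c • extMk m τA τB cZ x).isLinear (by simp [extMk_u])
  tmul_smul c x k := map_smul _ _ _
  smulL_tmul a k x k' := by
    refine ext_units m
      (f := fun k => cZ.smulL (τA.tmul a k) (extMk m τA τB cZ x k'))
      (g := fun k => extMk m τA τB cZ ((cornerCorr m τA τB cZ).smulL a x) (k * k'))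
      (by fun_prop) (by fun_prop)
      ((isLinear_smulL_left cZ _).mk' ∘ₗ (isLinear_tmul_right τA a).mk').isLinear
      ((extMk m τA τB cZ _).toLinearMap ∘ₗ LinearMap.mulRight ℂ k').isLinear
      (fun p q => ?_) k
    refine ext_units m
      (f := fun k' => cZ.smulL (τA.tmul a (m.u p q)) (extMk m τA τB cZ x k'))
      (g := fun k' => extMk m τA τB cZ ((cornerCorr m τA τB cZ).smulL a x) (m.u p q * k'))
      (by fun_prop) (by fun_prop)
      ((isLinear_smulL_right cZ _).mk' ∘ₗ (extMk m τA τB cZ x).toLinearMap).isLinear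
      ((extMk m τA τB cZ _).toLinearMap ∘ₗ LinearMap.mulLeft ℂ (m.u p q)).isLinear
      (fun i j => ?_) k'
    rw [extMk_u, smulL_shift, m.u_mul]
    split_ifs
    · rw [extMk_u]
    · rw [map_zero]
  tmul_smulR x k b k' := by
    refine ext_units m
      (f := fun k => cZ.smulR (extMk m τA τB cZ x k) (τB.tmul b k'))
      (g := fun k => extMk m τA τB cZ ((cornerCorr m τA τB cZ).smulR x b) (k * k'))
      (by fun_prop) (by fun_prop)
      ((isLinear_smulR_left cZ _).mk' ∘ₗ (extMk m τA τB cZ x).toLinearMap).isLinear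
      ((extMk m τA τB cZ _).toLinearMap ∘ₗ LinearMap.mulRight ℂ k').isLinear
      (fun p q => ?_) k
    refine ext_units m
      (f := fun k' => cZ.smulR (extMk m τA τB cZ x (m.u p q)) (τB.tmul b k'))
      (g := fun k' => extMk m τA τB cZ ((cornerCorr m τA τB cZ).smulR x b) (m.u p q * k'))
      (by fun_prop) (by fun_prop)
      ((isLinear_smulR_right cZ _).mk' ∘ₗ (isLinear_tmul_right τB b).mk').isLinear
      ((extMk m τA τB cZ _).toLinearMap ∘ₗ LinearMap.mulLeft ℂ (m.u p q)).isLinear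
      (fun i j => ?_) k'
    rw [extMk_u, smulR_shift, m.u_mul]
    split_ifs
    · rw [extMk_u]
    · rw [map_zero]
  inner_tmul x k x' k' := by
    refine ext_units m
      (f := fun k' => cZ.inner (extMk m τA τB cZ x k) (extMk m τA τB cZ x' k'))
      (g := fun k' => τB.tmul ((cornerCorr m τA τB cZ).inner x x') (star k * k'))
      (by fun_prop) (by fun_prop)
      ((isLinear_inner cZ _).mk' ∘ₗ (extMk m τA τB cZ x').toLinearMap).isLinear
      ((isLinear_tmul_right τB _).mk' ∘ₗ LinearMap.mulLeft ℂ (star k)).isLinear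
      (fun p q => ?_) k'
    rw [← cZ.star_inner, ← star_star (star k * m.u p q), star_mul, star_star,
      ← (cornerCorr m τA τB cZ).star_inner, ← τB.star_tmul]
    congr 1
    refine ext_units m
      (f := fun k => cZ.inner (extMk m τA τB cZ x' (m.u p q)) (extMk m τA τB cZ x k))
      (g := fun k => τB.tmul ((cornerCorr m τA τB cZ).inner x' x) (star (m.u p q) * k))
      (by fun_prop) (by fun_prop)
      ((isLinear_inner cZ _).mk' ∘ₗ (extMk m τA τB cZ x).toLinearMap).isLinear
      ((isLinear_tmul_right τB _).mk' ∘ₗ LinearMap.mulLeft ℂ (star (m.u p q))).isLinear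
      (fun i j => ?_) k
    rw [extMk_u, extMk_u, inner_shift']
  dense_span := dense_extMk m τA τB cZ

end Full

/-! ### C⋆-algebras spanned by infinite matrices -/

section MatSys

/-- A C⋆-algebra `T` in which finitely supported infinite matrices over `C` sit densely:
`w c i j` stands for the matrix with `c` in position `(i, j)` and zeros elsewhere. -/
structure MatSys (C T : Type*) [NonUnitalCStarAlgebra C] [NonUnitalCStarAlgebra T] where
  w : ℕ × ℕ → C →ₗ[ℂ] T
  mul_w : ∀ c d i j k l, w (i, j) c * w (k, l) d = if j = k then w (i, l) (c * d) else 0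
  star_w : ∀ c i j, star (w (i, j) c) = w (j, i) (star c)
  inj : ∀ c, w (0, 0) c = 0 → c = 0
  dense : Dense (Submodule.span ℂ {t : T | ∃ c p, t = w p c} : Set T)

variable {C T T' : Type*} [NonUnitalCStarAlgebra C] [NonUnitalCStarAlgebra T]
  [NonUnitalCStarAlgebra T'] (W : MatSys C T) (W' : MatSys C T')

/-- Multiplication of a matrix by a matrix with a single nonzero entry. -/
theorem w_mul_sum {F : Finset ℕ} (N : CStarMatrix F F C) (i : ℕ) (k : F) (c : C) :
    W.w (i, k) c * ∑ l : F, ∑ j : F, W.w (l, j) (N l j) = ∑ j : F, W.w (i, j) (c * N k j) := by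
  rw [Finset.mul_sum, Finset.sum_eq_single k]
  · rw [Finset.mul_sum]
    exact Finset.sum_congr rfl fun j _ => by rw [W.mul_w, if_pos rfl]
  · intro l _ hl
    rw [Finset.mul_sum]
    refine Finset.sum_eq_zero fun j _ => ?_
    rw [W.mul_w, if_neg fun h => hl (Subtype.ext h.symm)]
  · simp

/-- The ⋆-homomorphism sending a finite matrix with rows and columns in `F` to its image in `T`. -/
def matHom (F : Finset ℕ) : CStarMatrix F F C →⋆ₙₐ[ℂ] T where
  toFun M := ∑ i : F, ∑ j : F, W.w (i, j) (M i j)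
  map_smul' c M := by simp [Finset.smul_sum]
  map_zero' := by simp
  map_add' M N := by simp [Finset.sum_add_distrib]
  map_mul' M N := by
    simp only [Finset.sum_mul, w_mul_sum]
    simp only [CStarMatrix.mul_apply, map_sum]
    exact Finset.sum_congr rfl fun i _ => Finset.sum_comm
  map_star' M := by
    simp only [star_sum, W.star_w, CStarMatrix.star_apply]
    exact Finset.sum_comm

theorem matHom_injective (F : Finset ℕ) : Function.Injective (matHom W F) := by
  rw [injective_iff_map_eq_zero]
  intro M hM
  ext i j
  have h : ∀ d d' : C, d * M i j * d' = 0 := by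
    intro d d'
    refine W.inj _ ?_
    have : W.w (0, i) d * matHom W F M * W.w (j, 0) d' = W.w (0, 0) (d * M i j * d') := by
      change W.w (0, i) d * (∑ i : F, ∑ j : F, W.w (i, j) (M i j)) * W.w (j, 0) d' = _
      rw [w_mul_sum, Finset.sum_mul, Finset.sum_eq_single j]
      · rw [W.mul_w, if_pos rfl]
      · intro l _ hl
        rw [W.mul_w, if_neg fun h => hl (Subtype.ext h)]
      · simp
    rw [← this, hM, mul_zero, zero_mul]
  have h1 : ∀ d, d * M i j = 0 := fun d =>
    eq_of_forall_mul_right continuous_id continuous_id (b := d * M i j) (c := 0)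
      fun d' => by simpa using h d d'
  exact eq_of_forall_mul_left continuous_id continuous_id (b := M i j) (c := 0)
      fun d' => by simpa using h1 d'

/-- The image in `T` of a finitely supported infinite matrix over `C`. -/
def matL : (ℕ × ℕ →₀ C) →ₗ[ℂ] T := Finsupp.lsum ℂ W.w

theorem matL_single (p : ℕ × ℕ) (c : C) : matL W (Finsupp.single p c) = W.w p c := by
  simp [matL]

/-- A finite set of rows and columns containing the support of `s`. -/
def suppF (s : ℕ × ℕ →₀ C) : Finset ℕ := s.support.image Prod.fst ∪ s.support.image Prod.snd

theorem matL_eq_matHom (s : ℕ × ℕ →₀ C) :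
    matL W s = matHom W (suppF s) (CStarMatrix.ofMatrix fun i j => s (i, j)) := by
  have hs : s.support ⊆ suppF s ×ˢ suppF s := fun p hp => Finset.mem_product.2
    ⟨Finset.mem_union_left _ (Finset.mem_image_of_mem _ hp),
      Finset.mem_union_right _ (Finset.mem_image_of_mem _ hp)⟩
  rw [matL, Finsupp.lsum_apply, Finsupp.sum_of_support_subset _ hs _ (by simp),
    Finset.sum_product]
  change _ = ∑ i : suppF s, ∑ j : suppF s, W.w (i, j) (s (i, j))
  rw [← Finset.sum_coe_sort (suppF s)]
  refine Finset.sum_congr rfl fun i _ => ?_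
  rw [← Finset.sum_coe_sort (suppF s)]

/-- Injective ⋆-homomorphisms are isometric, so the norm of a finite matrix does not depend on
the algebra containing it. -/
theorem norm_matL (s : ℕ × ℕ →₀ C) : ‖matL W' s‖ = ‖matL W s‖ := by
  rw [matL_eq_matHom, matL_eq_matHom, NonUnitalStarAlgHom.norm_map _ (matHom_injective W _),
    NonUnitalStarAlgHom.norm_map _ (matHom_injective W' _)]

theorem denseRange_matL : DenseRange (matL W) := by
  have h : Submodule.span ℂ {t : T | ∃ c p, t = W.w p c} ≤ (matL W).range := by
    refine Submodule.span_le.2 ?_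
    rintro _ ⟨c, p, rfl⟩
    exact ⟨Finsupp.single p c, by simp [matL]⟩
  exact W.dense.mono h

/-- The isometric isomorphism matching two algebras of infinite matrices over `C`. -/
def matEquiv : T ≃ₗᵢ[ℂ] T' :=
  (LinearEquiv.refl ℂ (ℕ × ℕ →₀ C)).extendOfIsometry (matL W) (matL W') (denseRange_matL W)
    (denseRange_matL W') (norm_matL W W')

theorem matEquiv_w (c : C) (p : ℕ × ℕ) : matEquiv W W' (W.w p c) = W'.w p c := by
  have h := LinearEquiv.extendOfIsometry_eq (LinearEquiv.refl ℂ (ℕ × ℕ →₀ C)) (matL W) (matL W')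
    (denseRange_matL W) (denseRange_matL W') (norm_matL W W') (Finsupp.single p c)
  rwa [matL_single, LinearEquiv.refl_apply, matL_single] at h

theorem matEquiv_mul (x y : T) : matEquiv W W' (x * y) = matEquiv W W' x * matEquiv W W' y := by
  refine ext_of_dense_span W.dense (f := fun x => matEquiv W W' (x * y))
    (g := fun x => matEquiv W W' x * matEquiv W W' y) (by fun_prop) (by fun_prop)
    ((matEquiv W W').toLinearEquiv.toLinearMap ∘ₗ LinearMap.mulRight ℂ y).isLinear
    (LinearMap.mulRight ℂ _ ∘ₗ (matEquiv W W').toLinearEquiv.toLinearMap).isLinear ?_ x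
  rintro _ ⟨c, ⟨i, j⟩, rfl⟩
  refine ext_of_dense_span W.dense (f := fun y => matEquiv W W' (W.w (i, j) c * y))
    (g := fun y => matEquiv W W' (W.w (i, j) c) * matEquiv W W' y) (by fun_prop) (by fun_prop)
    ((matEquiv W W').toLinearEquiv.toLinearMap ∘ₗ LinearMap.mulLeft ℂ _).isLinear
    (LinearMap.mulLeft ℂ _ ∘ₗ (matEquiv W W').toLinearEquiv.toLinearMap).isLinear ?_ y
  rintro _ ⟨d, ⟨k, l⟩, rfl⟩
  rw [matEquiv_w, matEquiv_w, W.mul_w, W'.mul_w]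
  split_ifs
  · rw [matEquiv_w]
  · rw [map_zero]

theorem matEquiv_star (x : T) : matEquiv W W' (star x) = star (matEquiv W W' x) := by
  refine dense_span_induction W.dense
    (p := fun x => matEquiv W W' (star x) = star (matEquiv W W' x))
    (isClosed_eq (by fun_prop) (by fun_prop)) (by simp) ?_ ?_ ?_ x
  · intro x y hx hy; rw [star_add, map_add, map_add, star_add, hx, hy]
  · intro _ x hx; rw [star_smul, map_smul, map_smul, star_smul, hx]
  · rintro _ ⟨c, ⟨i, j⟩, rfl⟩
    rw [W.star_w, matEquiv_w, matEquiv_w, W'.star_w]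

/-- A tensor product with the compact operators is an algebra of infinite matrices. -/
def tensorMatSys {K : Type*} [NonUnitalCStarAlgebra K] (m : MatrixUnits K)
    (τ : CStarTensor C K T) : MatSys C T where
  w p := (isLinear_tmul_left τ (m.u p.1 p.2)).mk'
  mul_w c d i j k l := tmul_u_mul m τ c d i j k l
  star_w c i j := star_tmul_u m τ c i j
  inj _ hc := tmul_u_injective m τ 0 0 (hc.trans (tmul_zero_left τ _).symm)
  dense := dense_tmul_u m τ

/-- A ⋆-isomorphism `T ≅ T'` turns `T'` into a `T`–`T'` imprimitivity bimodule. -/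
def isoWitness {T T' : Type u} [NonUnitalCStarAlgebra T]
    [NonUnitalCStarAlgebra T'] (Φ : T ≃ₗᵢ[ℂ] T') (hm : ∀ x y, Φ (x * y) = Φ x * Φ y)
    (hs : ∀ x, Φ (star x) = star (Φ x)) : ImprimitivityWitness T T' where
  X := T'
  bimod :=
    { smulL := fun t x => Φ t * x
      smulR := fun x b => x * b
      innerL := fun x y => Φ.symm (x * star y)
      innerR := fun x y => star x * y
      smulR_add := fun x b b' => mul_add _ _ _
      add_smulR := fun x y b => add_mul _ _ _
      smulR_mul := fun x b b' => (mul_assoc _ _ _).symm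
      smulR_csmul := fun c x b => smul_mul_assoc _ _ _
      csmul_smulR := fun c x b => mul_smul_comm _ _ _
      innerR_add_right := fun x y z => mul_add _ _ _
      innerR_csmul_right := fun c x y => mul_smul_comm _ _ _
      star_innerR := fun x y => by simp
      innerR_smulR := fun x y b => (mul_assoc _ _ _).symm
      innerR_self_nonneg := fun x => ⟨x, rfl⟩
      norm_innerR_self := fun x => by rw [CStarRing.norm_star_mul_self, pow_two]
      smulL_add := fun a x y => mul_add _ _ _
      add_smulL := fun a a' x => by simp [add_mul]
      smulL_mul := fun a a' x => by rw [hm, mul_assoc]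
      smulL_csmul := fun c a x => by simp [smul_mul_assoc]
      csmul_smulL := fun c a x => mul_smul_comm _ _ _
      innerL_add_left := fun x y z => by simp [add_mul]
      innerL_csmul_left := fun c x y => by simp [smul_mul_assoc]
      star_innerL := fun x y => Φ.injective (by simp [hs])
      innerL_smulL := fun a x y => Φ.injective (by simp [hm, mul_assoc])
      innerL_self_nonneg := fun x => ⟨Φ.symm (star x), Φ.injective (by simp [hm, hs])⟩
      norm_innerL_self := fun x => by
        rw [LinearIsometryEquiv.norm_map, CStarRing.norm_self_mul_star, pow_two]
      smulL_smulR := fun a x b => mul_assoc _ _ _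
      innerR_smulL := fun a x y => by simp [hs, mul_assoc]
      innerL_smulR := fun x y b => by simp [mul_assoc]
      compat := fun x y z => by simp [mul_assoc] }
  right_full := by
    refine dense_mul.mono (Submodule.span_mono ?_)
    rintro _ ⟨a, b, rfl⟩
    exact ⟨star a, b, by simp⟩
  left_full := by
    refine dense_mul.mono (Submodule.span_mono ?_)
    rintro _ ⟨a, b, rfl⟩
    exact ⟨Φ a, Φ (star b), Φ.injective (by simp [hm, hs])⟩

end MatSys


/-! ### The relative commutant -/

section RelComm

variable {A : Type*} [NonUnitalCStarAlgebra A]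

theorem coe_injective : Function.Injective ((↑) : A → 𝓜(ℂ, A)) := by
  intro a b h
  refine eq_of_forall_mul_right continuous_id continuous_id fun d => ?_
  exact congrArg (fun μ : 𝓜(ℂ, A) => μ.fst d) h

theorem isometry_coe : Isometry ((↑) : A → 𝓜(ℂ, A)) :=
  NonUnitalStarAlgHom.isometry (DoubleCentralizer.coeHom (𝕜 := ℂ) (A := A)) coe_injective

theorem coe_mul (a b : A) : ((a * b : A) : 𝓜(ℂ, A)) = a * b :=
  map_mul (DoubleCentralizer.coeHom (𝕜 := ℂ) (A := A)) a b

theorem coe_star (a : A) : ((star a : A) : 𝓜(ℂ, A)) = star (a : 𝓜(ℂ, A)) :=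
  map_star (DoubleCentralizer.coeHom (𝕜 := ℂ) (A := A)) a

/-- A multiplier is determined by its left action. -/
theorem mult_ext {μ ν : 𝓜(ℂ, A)} (h : ∀ x, μ.fst x = ν.fst x) : μ = ν := by
  refine DoubleCentralizer.ext _ _ _ _ (Prod.ext (ContinuousLinearMap.ext h)
    (ContinuousLinearMap.ext fun x => ?_))
  refine eq_of_forall_mul_right continuous_id continuous_id fun d => ?_
  simp only [id]
  rw [μ.central, ν.central, h]

theorem fst_mul_apply (μ ν : 𝓜(ℂ, A)) (x : A) : (μ * ν).fst x = μ.fst (ν.fst x) := by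
  rw [DoubleCentralizer.mul_fst]; rfl

theorem coe_fst_apply (a x : A) : (a : 𝓜(ℂ, A)).fst x = a * x := rfl

theorem fst_apply_mul (μ : 𝓜(ℂ, A)) (x y : A) : μ.fst x * y = μ.fst (x * y) := by
  refine eq_of_forall_mul_left continuous_id continuous_id fun d => ?_
  simp only [id]
  rw [← mul_assoc, ← μ.central, ← μ.central, mul_assoc]

theorem coe_fst (μ : 𝓜(ℂ, A)) (a : A) : ((μ.fst a : A) : 𝓜(ℂ, A)) = μ * a :=
  mult_ext fun x => by rw [fst_mul_apply, coe_fst_apply, coe_fst_apply, fst_apply_mul]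

theorem coe_snd (μ : 𝓜(ℂ, A)) (a : A) : ((μ.snd a : A) : 𝓜(ℂ, A)) = a * μ :=
  mult_ext fun x => by rw [fst_mul_apply, coe_fst_apply, coe_fst_apply, μ.central]

theorem star_fst_mul (μ : 𝓜(ℂ, A)) (x y : A) : star (μ.fst x) * y = star x * (star μ).fst y := by
  rw [DoubleCentralizer.star_fst, ← star_star y, ← star_mul, ← star_mul, star_star, μ.central]

variable {K : Type*} [NonUnitalCStarAlgebra K] (m : MatrixUnits K) (ι : K →⋆ₙₐ[ℂ] 𝓜(ℂ, A))

theorem u_fst_fst (i j k l : ℕ) (x : A) : (ι (m.u i j)).fst ((ι (m.u k l)).fst x) =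
    if j = k then (ι (m.u i l)).fst x else 0 := by
  rw [← fst_mul_apply, ← map_mul, m.u_mul]
  split_ifs
  · rfl
  · rw [map_zero]; rfl

/-- The action `k ↦ ι(k)c` of `K` on `c ∈ A`. -/
def fstL (c : A) : K →L[ℂ] A :=
  LinearMap.mkContinuous
    { toFun := fun k => (ι k).fst c
      map_add' := fun k k' => by rw [map_add]; rfl
      map_smul' := fun z k => by rw [map_smul]; rfl } ‖c‖ fun k => by
    refine ((ι k).fst.le_opNorm c).trans ?_
    rw [DoubleCentralizer.norm_fst, mul_comm]
    exact mul_le_mul_of_nonneg_left (NonUnitalStarAlgHom.norm_apply_le ι k) (norm_nonneg c)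

theorem dense_fst (hι : Nondegenerate ι) :
    Dense (Submodule.span ℂ {x : A | ∃ i j c, x = (ι (m.u i j)).fst c} : Set A) := by
  have h1 : Dense (Submodule.span ℂ {x : A | ∃ k c, x = (ι k).fst c} : Set A) := by
    intro b
    rw [isometry_coe.isUniformInducing.isInducing.closure_eq_preimage_closure_image]
    refine closure_mono ?_ (hι b)
    have := Submodule.map_span (DoubleCentralizer.coeHom (𝕜 := ℂ) (A := A) : A →ₗ[ℂ] 𝓜(ℂ, A))
      {x : A | ∃ k c, x = (ι k).fst c}
    intro y hy
    change y ∈ (Submodule.map (DoubleCentralizer.coeHom (𝕜 := ℂ) (A := A) : A →ₗ[ℂ] 𝓜(ℂ, A))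
      (Submodule.span ℂ {x : A | ∃ k c, x = (ι k).fst c}) : Set _)
    rw [this]
    refine Submodule.span_mono ?_ hy
    rintro _ ⟨k, c, rfl⟩
    exact ⟨_, ⟨k, c, rfl⟩, coe_fst _ _⟩
  refine dense_span_of_forall_mem h1 ?_
  rintro _ ⟨k, c, rfl⟩
  refine mem_of_dense_span m.dense_span (Submodule.comap (fstL ι c).toLinearMap
    (Submodule.span ℂ {x : A | ∃ i j c, x = (ι (m.u i j)).fst c}).topologicalClosure)
    ((Submodule.isClosed_topologicalClosure _).preimage (fstL ι c).continuous) ?_ k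
  rintro _ ⟨p, rfl⟩
  exact Submodule.le_topologicalClosure _ (Submodule.subset_span ⟨p.1, p.2, c, rfl⟩)

theorem dense_col (hι : Nondegenerate ι) :
    Dense (Submodule.span ℂ {x : A | ∃ i c, x = (ι (m.u i 0)).fst c} : Set A) := by
  refine (dense_fst m ι hι).mono (Submodule.span_mono ?_)
  rintro _ ⟨i, j, c, rfl⟩
  exact ⟨i, (ι (m.u 0 j)).fst c, by rw [u_fst_fst, if_pos rfl]⟩

theorem dense_snd (hι : Nondegenerate ι) :
    Dense (Submodule.span ℂ {x : A | ∃ i j c, x = (ι (m.u i j)).snd c} : Set A) := by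
  have h : ∀ x : A, star x ∈
      (Submodule.span ℂ {x : A | ∃ i j c, x = (ι (m.u i j)).snd c}).topologicalClosure := by
    intro x
    refine dense_span_induction (dense_fst m ι hι) (p := fun x => star x ∈
      (Submodule.span ℂ {x : A | ∃ i j c, x = (ι (m.u i j)).snd c}).topologicalClosure)
      ((Submodule.isClosed_topologicalClosure _).preimage continuous_star) ?_ ?_ ?_ ?_ x
    · rw [star_zero]; exact Submodule.zero_mem _
    · intro x y hx hy; rw [star_add]; exact Submodule.add_mem _ hx hy
    · intro z x hx; rw [star_smul]; exact Submodule.smul_mem _ _ hx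
    · rintro _ ⟨i, j, c, rfl⟩
      refine Submodule.le_topologicalClosure _ (Submodule.subset_span ⟨j, i, star c, ?_⟩)
      rw [← m.star_u, map_star, DoubleCentralizer.star_fst, star_star]
  exact fun x => star_star x ▸ h (star x)

theorem dense_snd_fst (hι : Nondegenerate ι) :
    Dense (Submodule.span ℂ {x : A | ∃ i j k l c,
      x = (ι (m.u k l)).snd ((ι (m.u i j)).fst c)} : Set A) := by
  refine dense_span_of_forall_mem (dense_snd m ι hι) ?_
  rintro _ ⟨k, l, c, rfl⟩
  refine mem_of_dense_span (dense_fst m ι hι) (Submodule.comap (ι (m.u k l)).snd.toLinearMap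
    (Submodule.span ℂ {x : A | ∃ i j k l c,
      x = (ι (m.u k l)).snd ((ι (m.u i j)).fst c)}).topologicalClosure)
    ((Submodule.isClosed_topologicalClosure _).preimage (ι (m.u k l)).snd.continuous) ?_ c
  rintro _ ⟨i, j, c, rfl⟩
  exact Submodule.le_topologicalClosure _ (Submodule.subset_span ⟨i, j, k, l, c, rfl⟩)

/-! ### Diagonal multipliers -/

/-- Finitely supported columns: `s` is sent to `∑ₚ ι(uₚ₀) s(p)`. -/
def colL : (ℕ →₀ A) →ₗ[ℂ] A := Finsupp.lsum ℂ fun p => (ι (m.u p 0)).fst.toLinearMap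

/-- Finitely supported columns multiplied by `b`: `s` is sent to `∑ₚ ι(uₚ₀) b s(p)`. -/
def diagL (b : A) : (ℕ →₀ A) →ₗ[ℂ] A :=
  Finsupp.lsum ℂ fun p => (ι (m.u p 0)).fst.toLinearMap ∘ₗ LinearMap.mulLeft ℂ b

theorem colL_single (p : ℕ) (c : A) : colL m ι (Finsupp.single p c) = (ι (m.u p 0)).fst c := by
  simp [colL]

theorem diagL_single (b : A) (p : ℕ) (c : A) :
    diagL m ι b (Finsupp.single p c) = (ι (m.u p 0)).fst (b * c) := by
  simp [diagL]

theorem denseRange_colL (hι : Nondegenerate ι) : DenseRange (colL m ι) := by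
  have h : Submodule.span ℂ {x : A | ∃ i c, x = (ι (m.u i 0)).fst c} ≤ (colL m ι).range := by
    refine Submodule.span_le.2 ?_
    rintro _ ⟨p, c, rfl⟩
    exact ⟨Finsupp.single p c, colL_single m ι p c⟩
  exact (dense_col m ι hι).mono h

theorem star_u_fst_mul (p q : ℕ) (x y : A) :
    star ((ι (m.u p 0)).fst x) * (ι (m.u q 0)).fst y =
      if p = q then star x * (ι (m.u 0 0)).fst y else 0 := by
  rw [star_fst_mul, ← map_star, m.star_u, u_fst_fst]
  split_ifs
  · rfl
  · rw [mul_zero]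

theorem star_sum_mul_sum (F : Finset ℕ) (x : ℕ → A) :
    star (∑ p ∈ F, (ι (m.u p 0)).fst (x p)) * ∑ p ∈ F, (ι (m.u p 0)).fst (x p) =
      ∑ p ∈ F, star ((ι (m.u 0 0)).fst (x p)) * (ι (m.u 0 0)).fst (x p) := by
  rw [star_sum, Finset.sum_mul_sum]
  refine Finset.sum_congr rfl fun p hp => ?_
  simp only [star_u_fst_mul]
  rw [Finset.sum_ite_eq, if_pos hp, if_pos trivial]

/-- This follows from `t⋆ b⋆b t ≤ ‖b‖² t⋆t`, applied to `t = ι(u₀₀) s(p)` and summed over `p`. -/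
theorem norm_diagL_le (b : A) (hl : (ι (m.u 0 0)).fst b = b) (hr : (ι (m.u 0 0)).snd b = b)
    (s : ℕ →₀ A) : ‖diagL m ι b s‖ ≤ ‖b‖ * ‖colL m ι s‖ := by
  have h1 : star (colL m ι s) * colL m ι s = ∑ p ∈ s.support,
      star ((ι (m.u 0 0)).fst (s p)) * (ι (m.u 0 0)).fst (s p) := by
    simpa [colL, Finsupp.lsum_apply, Finsupp.sum] using star_sum_mul_sum m ι s.support s
  have h2 : star (diagL m ι b s) * diagL m ι b s = ∑ p ∈ s.support,
      star ((ι (m.u 0 0)).fst (s p)) * (star b * b) * (ι (m.u 0 0)).fst (s p) := by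
    have := star_sum_mul_sum m ι s.support fun p => b * s p
    refine Eq.trans ?_ (this.trans (Finset.sum_congr rfl fun p _ => ?_))
    · simp [diagL, Finsupp.lsum_apply, Finsupp.sum]
    · rw [← fst_apply_mul, hl]
      nth_rw 1 2 [← hr]
      rw [DoubleCentralizer.central, star_mul]
      simp only [mul_assoc]
  have h3 : star (diagL m ι b s) * diagL m ι b s ≤
      ‖star b * b‖ • (star (colL m ι s) * colL m ι s) := by
    rw [h1, h2, Finset.smul_sum]
    exact Finset.sum_le_sum fun p _ =>
      CStarAlgebra.star_left_conjugate_le_norm_smul (IsSelfAdjoint.star_mul_self b)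
  have h4 := CStarAlgebra.norm_le_norm_of_nonneg_of_le (star_mul_self_nonneg _) h3
  rw [norm_smul, CStarRing.norm_star_mul_self, CStarRing.norm_star_mul_self,
    CStarRing.norm_star_mul_self, Real.norm_of_nonneg (by positivity)] at h4
  exact (abs_le_of_sq_le_sq' (by nlinarith) (by positivity)).2

variable (hι : Nondegenerate ι)

/-- The operator `∑ₚ ι(uₚ₀) b ι(u₀ₚ)` of left multiplication on `A`. -/
def diagOp (b : A) : A →L[ℂ] A := (diagL m ι b).extendOfNorm (colL m ι)

include hι in
theorem diagOp_col (b : A) (hl : (ι (m.u 0 0)).fst b = b) (hr : (ι (m.u 0 0)).snd b = b)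
    (p : ℕ) (x : A) : diagOp m ι b ((ι (m.u p 0)).fst x) = (ι (m.u p 0)).fst (b * x) := by
  have := LinearMap.extendOfNorm_eq (f := diagL m ι b) (denseRange_colL m ι hι)
    ⟨‖b‖, norm_diagL_le m ι b hl hr⟩ (Finsupp.single p x)
  rwa [colL_single, diagL_single] at this

theorem u_fst_star {b : A} (hr : (ι (m.u 0 0)).snd b = b) :
    (ι (m.u 0 0)).fst (star b) = star b := by
  rw [← m.star_u, map_star ι, DoubleCentralizer.star_fst, star_star, hr]

theorem u_snd_star {b : A} (hl : (ι (m.u 0 0)).fst b = b) :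
    (ι (m.u 0 0)).snd (star b) = star b := by
  rw [← m.star_u, map_star ι, DoubleCentralizer.star_snd, star_star, hl]

include hι in
/-- The operators of left multiplication attached to `b` and `b⋆` are adjoint to each other. -/
theorem star_diagOp_mul (b : A) (hl : (ι (m.u 0 0)).fst b = b) (hr : (ι (m.u 0 0)).snd b = b)
    (x y : A) : star (diagOp m ι (star b) x) * y = star x * diagOp m ι b y := by
  refine dense_span_induction (dense_col m ι hι)
    (p := fun x => star (diagOp m ι (star b) x) * y = star x * diagOp m ι b y)
    (isClosed_eq (by fun_prop) (by fun_prop)) (by simp) ?_ ?_ ?_ x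
  · intro x x' hx hx'; rw [map_add, star_add, star_add, add_mul, add_mul, hx, hx']
  · intro z x hx; rw [map_smul, star_smul, star_smul, smul_mul_assoc, smul_mul_assoc, hx]
  rintro _ ⟨p, x, rfl⟩
  refine dense_span_induction (dense_col m ι hι)
    (p := fun y => star (diagOp m ι (star b) ((ι (m.u p 0)).fst x)) * y =
      star ((ι (m.u p 0)).fst x) * diagOp m ι b y)
    (isClosed_eq (by fun_prop) (by fun_prop)) (by simp) ?_ ?_ ?_ y
  · intro y y' hy hy'; rw [map_add, mul_add, mul_add, hy, hy']
  · intro z y hy; rw [map_smul, mul_smul_comm, mul_smul_comm, hy]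
  rintro _ ⟨q, y, rfl⟩
  rw [diagOp_col m ι hι _ (u_fst_star m ι hr) (u_snd_star m ι hl), diagOp_col m ι hι b hl hr,
    star_u_fst_mul, star_u_fst_mul]
  split_ifs
  · rw [← fst_apply_mul, hl, star_mul, star_star, mul_assoc, ← DoubleCentralizer.central, hr]
  · rfl

include hι in
/-- The multiplier attached to `b` commutes with `ι(K)`, and its products with the matrix units
are the translates of `b`. -/
theorem exists_diagMult (b : A) (hl : (ι (m.u 0 0)).fst b = b)
    (hr : (ι (m.u 0 0)).snd b = b) : ∃ D ∈ relComm ι, ∀ p q,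
      D * ι (m.u p q) = ((ι (m.u p 0)).fst ((ι (m.u 0 q)).snd b) : A) := by
  let D : 𝓜(ℂ, A) :=
    { fst := diagOp m ι b
      snd := LinearMap.mkContinuous
        { toFun := fun x => star (diagOp m ι (star b) (star x))
          map_add' := fun x y => by simp
          map_smul' := fun z x => by simp } ‖diagOp m ι (star b)‖ fun x => by
        refine (norm_star _).le.trans (((diagOp m ι (star b)).le_opNorm _).trans ?_)
        rw [norm_star]
      central := fun x y => by
        have := star_diagOp_mul m ι hι b hl hr (star x) y
        rwa [star_star] at this }
  have hD : ∀ x, D.fst x = diagOp m ι b x := fun _ => rfl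
  have hr' : ∀ q x, b * (ι (m.u 0 q)).fst x = (ι (m.u 0 q)).snd b * x := fun q x =>
    (DoubleCentralizer.central _ _ _).symm
  have h1 : ∀ p q, D * ι (m.u p q) = ((ι (m.u p 0)).fst ((ι (m.u 0 q)).snd b) : A) := by
    intro p q
    refine mult_ext fun x => ?_
    have : (ι (m.u p q)).fst x = (ι (m.u p 0)).fst ((ι (m.u 0 q)).fst x) := by
      rw [u_fst_fst, if_pos rfl]
    rw [fst_mul_apply, this, hD, diagOp_col m ι hι b hl hr, hr', coe_fst_apply, fst_apply_mul]
  have h2 : ∀ p q, ι (m.u p q) * D = ((ι (m.u p 0)).fst ((ι (m.u 0 q)).snd b) : A) := by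
    intro p q
    refine mult_ext fun x => ?_
    refine ext_of_dense_span (dense_col m ι hι) (f := (ι (m.u p q) * D).fst)
      (ContinuousLinearMap.continuous _) (ContinuousLinearMap.continuous _)
      (ContinuousLinearMap.toLinearMap _).isLinear (ContinuousLinearMap.toLinearMap _).isLinear
      ?_ x
    rintro _ ⟨r, x, rfl⟩
    rw [fst_mul_apply, hD, diagOp_col m ι hι b hl hr, u_fst_fst, coe_fst_apply, fst_apply_mul,
      ← hr', u_fst_fst]
    split_ifs
    · rw [← DoubleCentralizer.central, hr]
    · rw [mul_zero, map_zero]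
  have hc : Continuous ι := map_continuous ι
  refine ⟨D, fun k => ⟨?_, ?_⟩, h1⟩
  · refine ext_units m (f := fun k => ι k * D) (g := fun k => D * ι k) (by fun_prop)
      (by fun_prop) (LinearMap.mulRight ℂ D ∘ₗ (ι : K →ₗ[ℂ] 𝓜(ℂ, A))).isLinear
      (LinearMap.mulLeft ℂ D ∘ₗ (ι : K →ₗ[ℂ] 𝓜(ℂ, A))).isLinear (fun p q => ?_) k
    rw [h1, h2]
  · refine mem_of_dense_span m.dense_span
      (Submodule.comap (LinearMap.mulLeft ℂ D ∘ₗ (ι : K →ₗ[ℂ] 𝓜(ℂ, A)))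
        (DoubleCentralizer.coeHom (𝕜 := ℂ) (A := A) : A →ₗ[ℂ] 𝓜(ℂ, A)).range)
      (isometry_coe.isClosedEmbedding.isClosed_range.preimage
        (show Continuous fun k => D * ι k by fun_prop)) ?_ k
    rintro _ ⟨p, rfl⟩
    exact ⟨_, (h1 p.1 p.2).symm⟩

/-! ### The matrix system of a `𝒦`-algebra -/

variable {C : Type*} [NonUnitalCStarAlgebra C] (j : C →⋆ₙₐ[ℂ] 𝓜(ℂ, A))
  (hj : Function.Injective j) (hjr : Set.range j = relComm ι)

include hjr in
theorem comm_j (c : C) (k : K) : ι k * j c = j c * ι k :=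
  ((hjr ▸ Set.mem_range_self c : j c ∈ relComm ι) k).1

include hjr in
theorem exists_coe_eq (c : C) (k : K) : ∃ a : A, (a : 𝓜(ℂ, A)) = j c * ι k :=
  ((hjr ▸ Set.mem_range_self c : j c ∈ relComm ι) k).2

/-- The element `j(c)ι(k)` of `A`. -/
def entry (c : C) (k : K) : A := (exists_coe_eq ι j hjr c k).choose

theorem coe_entry (c : C) (k : K) : ((entry ι j hjr c k : A) : 𝓜(ℂ, A)) = j c * ι k :=
  (exists_coe_eq ι j hjr c k).choose_spec

include hι hj in
theorem eq_zero_of_entry (c : C) (hc : entry ι j hjr c (m.u 0 0) = 0) : c = 0 := by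
  have h0 : j c * ι (m.u 0 0) = 0 := by
    rw [← coe_entry ι j hjr]
    refine (congrArg _ hc).trans (map_zero (DoubleCentralizer.coeHom (𝕜 := ℂ) (A := A)))
  have h1 : ∀ q, j c * ι (m.u 0 q) = 0 := fun q => by
    rw [← show m.u 0 0 * m.u 0 q = m.u 0 q by rw [m.u_mul, if_pos rfl], map_mul, ← mul_assoc,
      h0, zero_mul]
  have h2 : ∀ p q, j c * ι (m.u p q) = 0 := fun p q => by
    rw [← show m.u p 0 * m.u 0 q = m.u p q by rw [m.u_mul, if_pos rfl], map_mul, ← mul_assoc,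
      ← comm_j ι j hjr, mul_assoc, h1, mul_zero]
  refine hj ((mult_ext fun x => ?_).trans (map_zero j).symm)
  refine ext_of_dense_span (dense_fst m ι hι) (f := (j c).fst)
    (g := (0 : 𝓜(ℂ, A)).fst)
    (ContinuousLinearMap.continuous _) (ContinuousLinearMap.continuous _)
    (ContinuousLinearMap.toLinearMap _).isLinear (ContinuousLinearMap.toLinearMap _).isLinear
    ?_ x
  rintro _ ⟨p, q, x, rfl⟩
  rw [← fst_mul_apply, h2]
  rfl

include hι in
/-- The element `ι(u p q) x ι(u r s)` has the form `j(c)ι(u p s)`, where `j(c)` is the diagonal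
multiplier attached to `ι(u 0 q) x ι(u r 0)`. -/
theorem dense_entry : Dense (Submodule.span ℂ
    {x : A | ∃ (c : C) (p : ℕ × ℕ), x = entry ι j hjr c (m.u p.1 p.2)} : Set A) := by
  refine (dense_snd_fst m ι hι).mono (Submodule.span_mono ?_)
  rintro _ ⟨p, q, r, s, x, rfl⟩
  -- the entry of the infinite matrix, moved to the corner cut out by `ι(u₀₀)`
  set b : A := (ι (m.u r 0)).snd ((ι (m.u 0 q)).fst x) with hb
  have hl : (ι (m.u 0 0)).fst b = b := coe_injective (by
    rw [coe_fst, hb, coe_snd, coe_fst, ← mul_assoc, ← mul_assoc, ← map_mul, m.u_mul,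
      if_pos rfl])
  have hr : (ι (m.u 0 0)).snd b = b := coe_injective (by
    rw [coe_snd, hb, coe_snd, mul_assoc, ← map_mul, m.u_mul, if_pos rfl])
  obtain ⟨D, hD, hDu⟩ := exists_diagMult m ι hι b hl hr
  obtain ⟨c, rfl⟩ : D ∈ Set.range j := hjr ▸ hD
  refine ⟨c, (p, s), coe_injective ?_⟩
  rw [coe_entry, hDu, coe_fst, coe_snd, hb, coe_snd, coe_fst, coe_snd, coe_fst]
  simp only [← mul_assoc, ← map_mul, m.u_mul, if_true]
  simp only [mul_assoc, ← map_mul, m.u_mul, if_true]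

/-- A `𝒦`-algebra is an algebra of infinite matrices over its relative commutant. -/
def commMatSys : MatSys C A where
  w p :=
    { toFun := fun c => entry ι j hjr c (m.u p.1 p.2)
      map_add' := fun c d => coe_injective (by
        rw [coe_entry, map_add, add_mul, ← coe_entry ι j hjr, ← coe_entry ι j hjr]
        exact (map_add (DoubleCentralizer.coeHom (𝕜 := ℂ) (A := A)) _ _).symm)
      map_smul' := fun z c => coe_injective (by
        rw [coe_entry, map_smul, smul_mul_assoc, ← coe_entry ι j hjr]
        exact (map_smul (DoubleCentralizer.coeHom (𝕜 := ℂ) (A := A)) _ _).symm) }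
  mul_w c d p q r s := coe_injective (by
    change ((entry ι j hjr c (m.u p q) * entry ι j hjr d (m.u r s) : A) : 𝓜(ℂ, A)) = _
    have h : ((entry ι j hjr c (m.u p q) : A) : 𝓜(ℂ, A)) * (entry ι j hjr d (m.u r s) : A) =
        j (c * d) * ι (m.u p q * m.u r s) := by
      rw [coe_entry, coe_entry, map_mul, map_mul, mul_assoc, mul_assoc,
        ← mul_assoc (ι (m.u p q)), comm_j ι j hjr, mul_assoc]
    rw [coe_mul, h, m.u_mul]
    split_ifs
    · exact (coe_entry ι j hjr _ _).symm
    · rw [map_zero, mul_zero]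
      exact (map_zero (DoubleCentralizer.coeHom (𝕜 := ℂ) (A := A))).symm)
  star_w c p q := coe_injective (by
    rw [coe_star]
    change star ((entry ι j hjr c (m.u p q) : A) : 𝓜(ℂ, A)) = (entry ι j hjr (star c) (m.u q p) : A)
    rw [coe_entry, coe_entry, star_mul, ← map_star, ← map_star, m.star_u, comm_j ι j hjr])
  inj := eq_zero_of_entry m ι hι j hj hjr
  dense := dense_entry m ι hι j hjr

end RelComm

end Helpers
end EnchiladaStab

/-- The embellished enchilada stabilization functor
`B ↦ (B ⊗ 𝒦, 1 ⊗ id)`, `[X] ↦ [X ⊗ 𝒦]`, from the enchilada category of C⋆-algebras to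
the enchilada category of `𝒦`-algebras is an equivalence of categories, and it has a
unique quasi-inverse whose object map is `(A, ι) ↦ C(A, ι)`.

Since an equivalence is the same thing as a full, faithful, essentially surjective
functor (and the quasi-inverse with the stated object map then exists uniquely by
generalized abstract nonsense), this is expressed by three clauses:

1. *(faithful)* if `X ⊗ 𝒦 ≅ X' ⊗ 𝒦` as `(A ⊗ 𝒦)`–`(B ⊗ 𝒦)` correspondences then
   `X ≅ X'` as `A`–`B` correspondences, i.e. `[X] ↦ [X ⊗ 𝒦]` is injective on
   isomorphism classes;
2. *(full)* every nondegenerate `(A ⊗ 𝒦)`–`(B ⊗ 𝒦)` correspondence is (isomorphic to)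
   an external tensor product `X ⊗ 𝒦` of a nondegenerate `A`–`B` correspondence `X`
   with `𝒦`;
3. *(essentially surjective, with the object map of the quasi-inverse)* for every
   `𝒦`-algebra `(A, ι)`, the stabilization `(C(A, ι) ⊗ 𝒦, 1 ⊗ id)` of the relative
   commutant `C(A, ι)` is isomorphic to `(A, ι)` in the enchilada category of
   `𝒦`-algebras, i.e. there is an imprimitivity bimodule between `C(A, ι) ⊗ 𝒦` and
   `A`. -/
theorem embellished_enchilada_stabilization_equivalence
    {K : Type u} [NonUnitalCStarAlgebra K] (hK : IsCompactOperatorsAlgebra K) :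
    -- (1) faithful
    (∀ (A B TA TB : Type u) [NonUnitalCStarAlgebra A] [NonUnitalCStarAlgebra B]
        [NonUnitalCStarAlgebra TA] [NonUnitalCStarAlgebra TB]
        (τA : CStarTensor A K TA) (τB : CStarTensor B K TB)
        (X X' Z Z' : Type u)
        [NormedAddCommGroup X] [NormedSpace ℂ X] [CompleteSpace X]
        [NormedAddCommGroup X'] [NormedSpace ℂ X'] [CompleteSpace X']
        [NormedAddCommGroup Z] [NormedSpace ℂ Z] [CompleteSpace Z]
        [NormedAddCommGroup Z'] [NormedSpace ℂ Z'] [CompleteSpace Z']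
        (cX : Correspondence A B X) (cX' : Correspondence A B X')
        (cZ : Correspondence TA TB Z) (cZ' : Correspondence TA TB Z')
        (_ : ExtTensorCorr cX τA τB cZ) (_ : ExtTensorCorr cX' τA τB cZ'),
      Nonempty (CorrEquiv cZ cZ') → Nonempty (CorrEquiv cX cX')) ∧
    -- (2) full
    (∀ (A B TA TB : Type u) [NonUnitalCStarAlgebra A] [NonUnitalCStarAlgebra B]
        [NonUnitalCStarAlgebra TA] [NonUnitalCStarAlgebra TB]
        (τA : CStarTensor A K TA) (τB : CStarTensor B K TB)
        (Z : Type u) [NormedAddCommGroup Z] [NormedSpace ℂ Z] [CompleteSpace Z]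
        (cZ : Correspondence TA TB Z),
      ∃ W : CorrespondenceOn A B, Nonempty (ExtTensorCorr W.corr τA τB cZ)) ∧
    -- (3) essentially surjective: `(C(A, ι) ⊗ 𝒦, 1 ⊗ id) ≅ (A, ι)` in the enchilada
    -- category of `𝒦`-algebras
    (∀ (A C₀ T : Type u) [NonUnitalCStarAlgebra A] [NonUnitalCStarAlgebra C₀]
        [NonUnitalCStarAlgebra T]
        (ι : K →⋆ₙₐ[ℂ] 𝓜(ℂ, A)), Nondegenerate ι →
      ∀ (j : C₀ →⋆ₙₐ[ℂ] 𝓜(ℂ, A)), Function.Injective j → Set.range j = relComm ι →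
      ∀ (_ : CStarTensor C₀ K T), Nonempty (ImprimitivityWitness T A)) := by
  obtain ⟨m⟩ := hK
  refine ⟨?_, ?_, ?_⟩
  · intro A B TA TB _ _ _ _ τA τB X X' Z Z' _ _ _ _ _ _ _ _ _ _ _ _ cX cX' cZ cZ' E E' ⟨Φ⟩
    exact EnchiladaStab.faithful_clause m E E' Φ
  · intro A B TA TB _ _ _ _ τA τB Z _ _ _ cZ
    exact ⟨⟨EnchiladaStab.corner m τA τB cZ, EnchiladaStab.cornerCorr m τA τB cZ⟩,
      ⟨EnchiladaStab.cornerExt m τA τB cZ⟩⟩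
  · intro A C₀ T _ _ _ ι hι j hj hjr τ
    let W := EnchiladaStab.tensorMatSys m τ
    let W' := EnchiladaStab.commMatSys m ι hι j hj hjr
    exact ⟨EnchiladaStab.isoWitness (EnchiladaStab.matEquiv W W')
      (EnchiladaStab.matEquiv_mul W W') (EnchiladaStab.matEquiv_star W W')⟩
end
end

section
/- Let A and B be separable stable C*-algebras and let X be a full nondegenerate separable A–B correspondence. Then there exists a nondegenerate homomorphism φ: A → M(B) such that X is isomorphic, as an A–B correspondence, to the standard correspondence B_φ. Equivalently, the functor E from the nondegenerate category to the enchilada category, restricted to separable stable C*-algebras, maps onto the subcategory whose morphisms are isomorphism classes of full nondegenerate separable correspondences. -/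
/-!
The idea is to find a single vector `x ∈ X` for which both `x B` is dense in `X` and `⟨x, X⟩` is
dense in `B`. Given such an `x`, put `h = ⟨x, x⟩^{1/2}`. The map `x b ↦ h b` preserves the
`B`-valued inner product, its domain is dense in `X`, and its range is dense in `B` because it
contains `⟨x, x⟩ B = ⟨x, x B⟩`. It therefore extends to a unitary `U : X → B` of Hilbert
`B`-modules (`Correspondence.exists_unitary`), and `φ(a) = U a U⁻¹` is the required homomorphism
into `M(B)`.

The vector `x` comes from Baire's theorem (`Correspondence.exists_generic`): by separability the
two conditions cut out countable intersections of open subsets of `X`, whose density is where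
stability is used. A stable algebra has an approximate unit of self-adjoint contractions `q`
together with elements `v` such that `q v = 0` and `v* v = q²` (`IsStable.exists_shiftNet`).

* For `x B`: given `x₀` and `y`, the vector `x = x₀ q + r y v*` is close to `x₀` for small `r`, and
  `x (r⁻¹ v) = y q²` is close to `y`. Here `q, v ∈ B`.
* For `⟨x, X⟩`: by fullness it is enough to approximate sums `∑ ⟨xₖ, yₖ⟩`, one summand at a time.
  If `⟨x, y⟩` is close to `c`, then `x' = q x + r v xₖ` and `y' = q y + r⁻¹ v yₖ` satisfy
  `⟨x', y'⟩ = ⟨x, q² y⟩ + ⟨xₖ, q² yₖ⟩`, which is close to `c + ⟨xₖ, yₖ⟩`. Here `q, v ∈ A`.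
-/

open scoped MultiplierAlgebra

noncomputable section

universe u v w

/-- A witness that the C⋆-algebra `A` is stable (relative to `K = 𝒦`). -/
structure StabilityWitness (A : Type u) (K : Type v) [NonUnitalCStarAlgebra A]
    [NonUnitalCStarAlgebra K] where
  T : Type (max u v)
  [instT : NonUnitalCStarAlgebra T]
  tensor : CStarTensor A K T
  iso : A ≃⋆ₐ[ℂ] T

/-- A C⋆-algebra `A` is *stable* if `A ≅ A ⊗ 𝒦`. -/
def IsStable (A : Type u) (K : Type v) [NonUnitalCStarAlgebra A]
    [NonUnitalCStarAlgebra K] : Prop :=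
  Nonempty (StabilityWitness A K)

open Filter Topology

/-! ### Approximation along contractions, and the shift furnished by stability -/

/-- If contractions `L i` converge pointwise to the identity on a set with dense span, they
converge pointwise to the identity everywhere. -/
lemma tendsto_of_dense_span {E ι : Type*} [NormedAddCommGroup E] [NormedSpace ℂ E] {l : Filter ι}
    (L : ι → E →ₗ[ℂ] E) (hL : ∀ᶠ i in l, ∀ x, ‖L i x‖ ≤ ‖x‖) {S : Set E}
    (hS : Dense (Submodule.span ℂ S : Set E)) (h : ∀ x ∈ S, Tendsto (fun i => L i x) l (𝓝 x))
    (x : E) : Tendsto (fun i => L i x) l (𝓝 x) := by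
  have hspan : ∀ y ∈ Submodule.span ℂ S, Tendsto (fun i => L i y) l (𝓝 y) := by
    intro y hy
    induction hy using Submodule.span_induction with
    | mem y hy => exact h y hy
    | zero => simp only [map_zero]; exact tendsto_const_nhds
    | add y z _ _ hy hz => simpa using hy.add hz
    | smul c y _ hy => simpa using hy.const_smul c
  rw [Metric.tendsto_nhds]
  intro ε hε
  obtain ⟨y, hy, hxy⟩ := Metric.mem_closure_iff.1 (hS x) (ε / 3) (by positivity)
  have h1 := Metric.tendsto_nhds.1 (hspan y hy) (ε / 3) (by positivity)
  filter_upwards [h1, hL] with i h1 h2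
  have h3 : ‖L i (x - y)‖ ≤ ‖x - y‖ := h2 _
  rw [dist_eq_norm] at *
  have : L i x - x = L i (x - y) + (L i y - y) - (x - y) := by rw [map_sub]; abel
  rw [this]
  calc _ ≤ ‖L i (x - y) + (L i y - y)‖ + ‖x - y‖ := norm_sub_le _ _
    _ ≤ ‖L i (x - y)‖ + ‖L i y - y‖ + ‖x - y‖ := by gcongr; exact norm_add_le _ _
    _ < ε := by linarith

/-- Contractions converging pointwise to the identity may be iterated. -/
lemma tendsto_comp_self {E ι : Type*} [NormedAddCommGroup E] [NormedSpace ℂ E] {l : Filter ι}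
    (L : ι → E →ₗ[ℂ] E) (hL : ∀ᶠ i in l, ∀ x, ‖L i x‖ ≤ ‖x‖) {x : E}
    (h : Tendsto (fun i => L i x) l (𝓝 x)) : Tendsto (fun i => L i (L i x)) l (𝓝 x) := by
  have h0 : Tendsto (fun i => ‖L i x - x‖) l (𝓝 0) := tendsto_iff_norm_sub_tendsto_zero.1 h
  have h1 : Tendsto (fun i => L i (L i x - x)) l (𝓝 0) :=
    squeeze_zero_norm' (by filter_upwards [hL] with i hi using hi _) h0
  simpa [map_sub] using h1.add h

namespace MatrixUnits

variable {K : Type*} [NonUnitalCStarAlgebra K] (m : MatrixUnits K)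

/-- The projection `e₀₀ + ⋯ + e₍ₙ₋₁₎₍ₙ₋₁₎`. -/
def proj (n : ℕ) : K := ∑ i ∈ Finset.range n, m.u i i

/-- The partial isometry `∑_{i < n} e₍ₙ₊ᵢ₎ᵢ`, which carries the range of `proj n` to a subspace
orthogonal to it. -/
def shift (n : ℕ) : K := ∑ i ∈ Finset.range n, m.u (n + i) i

lemma star_proj (n : ℕ) : star (m.proj n) = m.proj n := by
  simp [proj, star_sum, m.star_u]

lemma proj_mul_u (n i j : ℕ) : m.proj n * m.u i j = if i < n then m.u i j else 0 := by
  simp only [proj, Finset.sum_mul, m.u_mul]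
  simp [Finset.sum_ite_eq']

lemma proj_mul_proj (n : ℕ) : m.proj n * m.proj n = m.proj n := by
  nth_rewrite 2 [proj]
  rw [Finset.mul_sum]
  exact Finset.sum_congr rfl fun i hi => by rw [proj_mul_u, if_pos (Finset.mem_range.1 hi)]

lemma proj_mul_shift (n : ℕ) : m.proj n * m.shift n = 0 := by
  rw [shift, Finset.mul_sum]
  refine Finset.sum_eq_zero fun i _ => ?_
  rw [proj_mul_u, if_neg (by omega)]

lemma star_shift_mul_shift (n : ℕ) : star (m.shift n) * m.shift n = m.proj n := by
  simp only [shift, proj, star_sum, m.star_u, Finset.sum_mul, Finset.mul_sum, m.u_mul]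
  refine Finset.sum_congr rfl fun i hi => ?_
  rw [Finset.sum_eq_single i]
  · simp
  · intro j _ hji
    rw [if_neg (by omega)]
  · exact fun h => absurd hi h

lemma norm_proj_le (n : ℕ) : ‖m.proj n‖ ≤ 1 := by
  have h := CStarRing.norm_star_mul_self (x := m.proj n)
  rw [star_proj, proj_mul_proj] at h
  nlinarith [norm_nonneg (m.proj n)]

lemma tendsto_proj_mul (k : K) : Tendsto (fun n => m.proj n * k) atTop (𝓝 k) := by
  refine tendsto_of_dense_span (fun n => LinearMap.mulLeft ℂ (m.proj n))
    (.of_forall fun n x => ?_) m.dense_span ?_ k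
  · exact (norm_mul_le _ _).trans (mul_le_of_le_one_left (norm_nonneg _) (m.norm_proj_le n))
  · rintro _ ⟨⟨i, j⟩, rfl⟩
    refine tendsto_const_nhds.congr' ?_
    filter_upwards [eventually_gt_atTop i] with n hn
    simp [proj_mul_u, hn]

end MatrixUnits

namespace CStarTensor

variable {B K T : Type*} [NonUnitalCStarAlgebra B] [NonUnitalCStarAlgebra K]
    [NonUnitalCStarAlgebra T] (τ : CStarTensor B K T)

lemma tmul_zero (b : B) : τ.tmul b 0 = 0 := by
  simpa using τ.tmul_smul 0 b 0

lemma tmul_sub_tmul (b b' : B) (k k' : K) :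
    τ.tmul b k - τ.tmul b' k' = τ.tmul (b - b') k + τ.tmul b' (k - k') := by
  have h1 := τ.add_tmul (b - b') b' k
  have h2 := τ.tmul_add b' (k - k') k'
  rw [sub_add_cancel] at h1 h2
  rw [h1, h2]; abel

end CStarTensor

/-- A net of self-adjoint contractions `q i` forming an approximate unit, each dominated by a
`v i` with `v* v = q²` whose range is orthogonal to that of `q`: the form in which stability
of `A` is used. -/
structure ShiftNet {A ι : Type*} [NonUnitalCStarAlgebra A] (l : Filter ι) (q v : ι → A) :
    Prop where
  neBot : l.NeBot
  star_q : ∀ᶠ i in l, star (q i) = q i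
  norm_q : ∀ᶠ i in l, ‖q i‖ ≤ 1
  q_mul_v : ∀ᶠ i in l, q i * v i = 0
  star_v_mul_v : ∀ᶠ i in l, star (v i) * v i = q i * q i
  tendsto : ∀ a, Tendsto (fun i => q i * a) l (𝓝 a)

/-- In `A ⊗ 𝒦` the elements `h ⊗ proj n` and `h ⊗ shift n`, with `h` running through the
canonical approximate unit of `A`, form a shift net. -/
lemma CStarTensor.exists_shiftNet {B K T : Type*} [NonUnitalCStarAlgebra B]
    [NonUnitalCStarAlgebra K] [NonUnitalCStarAlgebra T] (τ : CStarTensor B K T)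
    (m : MatrixUnits K) : ∃ (l : Filter (B × ℕ)) (q v : B × ℕ → T), ShiftNet l q v := by
  let _ := CStarAlgebra.spectralOrder B
  have _ := CStarAlgebra.spectralOrderedRing B
  have hl := CStarAlgebra.increasingApproximateUnit B
  have hfst : Tendsto Prod.fst (CStarAlgebra.approximateUnit B ×ˢ atTop (α := ℕ)) _ :=
    tendsto_fst
  have hsnd : Tendsto Prod.snd (CStarAlgebra.approximateUnit B ×ˢ atTop (α := ℕ)) _ :=
    tendsto_snd
  have hnorm : ∀ᶠ i in CStarAlgebra.approximateUnit B ×ˢ atTop (α := ℕ),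
      ‖τ.tmul i.1 (m.proj i.2)‖ ≤ 1 := by
    filter_upwards [hfst.eventually hl.eventually_norm] with i hi
    rw [τ.norm_tmul]
    exact mul_le_one₀ hi (norm_nonneg _) (m.norm_proj_le _)
  refine ⟨CStarAlgebra.approximateUnit B ×ˢ atTop, fun i => τ.tmul i.1 (m.proj i.2),
    fun i => τ.tmul i.1 (m.shift i.2), inferInstance, ?_, hnorm, ?_, ?_, ?_⟩
  · filter_upwards [hfst.eventually hl.eventually_star_eq] with i hi
    rw [τ.star_tmul, hi, m.star_proj]
  · refine .of_forall fun i => ?_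
    rw [τ.tmul_mul_tmul, m.proj_mul_shift, τ.tmul_zero]
  · filter_upwards [hfst.eventually hl.eventually_star_eq] with i hi
    rw [τ.star_tmul, τ.tmul_mul_tmul, τ.tmul_mul_tmul, hi, m.star_shift_mul_shift,
      m.proj_mul_proj]
  · refine tendsto_of_dense_span (fun i : B × ℕ => LinearMap.mulLeft ℂ (τ.tmul i.1 (m.proj i.2)))
      ?_ τ.dense_span ?_
    · filter_upwards [hnorm] with i hi x
      exact (norm_mul_le _ _).trans (mul_le_of_le_one_left (norm_nonneg _) hi)
    · rintro _ ⟨b, k, rfl⟩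
      rw [tendsto_iff_norm_sub_tendsto_zero]
      have h1 := tendsto_iff_norm_sub_tendsto_zero.1 ((hl.tendsto_mul_right b).comp hfst)
      have h2 := tendsto_iff_norm_sub_tendsto_zero.1 ((m.tendsto_proj_mul k).comp hsnd)
      have h3 := (h1.mul_const ‖k‖).add (h2.const_mul ‖b‖)
      simp only [zero_mul, mul_zero, add_zero] at h3
      refine squeeze_zero (fun _ => norm_nonneg _) (fun i => ?_) h3
      rw [LinearMap.mulLeft_apply, τ.tmul_mul_tmul, τ.tmul_sub_tmul]
      refine (norm_add_le _ _).trans ?_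
      rw [τ.norm_tmul, τ.norm_tmul]
      have : ‖m.proj i.2 * k‖ ≤ ‖k‖ :=
        (norm_mul_le _ _).trans (mul_le_of_le_one_left (norm_nonneg _) (m.norm_proj_le _))
      dsimp only [Function.comp]
      gcongr

lemma IsStable.exists_shiftNet {A : Type u} {K : Type v} [NonUnitalCStarAlgebra A]
    [NonUnitalCStarAlgebra K] (hA : IsStable A K) (hK : IsCompactOperatorsAlgebra K) :
    ∃ (l : Filter (A × ℕ)) (q v : A × ℕ → A), ShiftNet l q v := by
  obtain ⟨m⟩ := hK
  obtain ⟨W⟩ := hA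
  let _ := W.instT
  obtain ⟨l, q, v, h⟩ := W.tensor.exists_shiftNet m
  let e := W.iso.symm
  have he : Continuous e := (StarAlgEquiv.isometry e).continuous
  refine ⟨l, fun i => e (q i), fun i => e (v i), h.neBot, ?_, ?_, ?_, ?_, fun a => ?_⟩
  · filter_upwards [h.star_q] with i hi using by rw [← map_star, hi]
  · filter_upwards [h.norm_q] with i hi using by rwa [StarAlgEquiv.norm_map]
  · filter_upwards [h.q_mul_v] with i hi using by rw [← map_mul, hi, map_zero]
  · filter_upwards [h.star_v_mul_v] with i hi using by rw [← map_star, ← map_mul, hi, map_mul]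
  · have := (he.tendsto _).comp (h.tendsto (W.iso a))
    simpa [Function.comp_def, e, map_mul] using this

/-! ### Bounded operators attached to a correspondence -/

/-- If `h` is self-adjoint with `‖h‖ ≤ 1`, then `1 - h` has the self-adjoint square root `1 - t`
in the unitization; the equation below is `(1 - t)² = 1 - h`, written without a unit. -/
lemma exists_one_sub_sq {A : Type*} [NonUnitalCStarAlgebra A] (h : A) (hsa : IsSelfAdjoint h)
    (hn : ‖h‖ ≤ 1) : ∃ t : A, star t = t ∧ t + t - t * t = h := by
  let f : ℝ → ℝ := fun r => 1 - √(1 - r)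
  have hf : Continuous f := by fun_prop
  have hf0 : f 0 = 0 := by simp [f]
  refine ⟨cfcₙ f h, (cfcₙ_predicate f h : IsSelfAdjoint _), ?_⟩
  rw [← cfcₙ_add f f h, ← cfcₙ_mul f f h, ← cfcₙ_sub _ _ h]
  conv_rhs => rw [← cfcₙ_id ℝ h]
  refine cfcₙ_congr fun r hr => ?_
  have h1 : ‖r‖ ≤ 1 :=
    (NonUnitalIsometricContinuousFunctionalCalculus.norm_quasispectrum_le h hr hsa).trans hn
  have h2 : 0 ≤ 1 - r := by linarith [le_abs_self r, Real.norm_eq_abs r]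
  have := Real.mul_self_sqrt h2
  simp only [f, id]
  linarith

namespace Correspondence

variable {A B X : Type*} [NonUnitalCStarAlgebra A] [NonUnitalCStarAlgebra B]
    [NormedAddCommGroup X] [NormedSpace ℂ X] [CompleteSpace X] (cX : Correspondence A B X)

lemma inner_add_left (x y z : X) : cX.inner (x + y) z = cX.inner x z + cX.inner y z := by
  rw [← cX.star_inner, cX.inner_add_right, star_add, cX.star_inner, cX.star_inner]

lemma inner_csmul_left (c : ℂ) (x y : X) : cX.inner (c • x) y = star c • cX.inner x y := by
  rw [← cX.star_inner, cX.inner_csmul_right, star_smul, cX.star_inner]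

lemma inner_smulR_left (x y : X) (b : B) : cX.inner (cX.smulR x b) y = star b * cX.inner x y := by
  rw [← cX.star_inner, cX.inner_smulR, star_mul, cX.star_inner]

/-- `⟨x, ·⟩` as a linear map. -/
def innerₗ (x : X) : X →ₗ[ℂ] B where
  toFun := cX.inner x
  map_add' := cX.inner_add_right x
  map_smul' c := cX.inner_csmul_right c x

lemma inner_sub_right (x y z : X) : cX.inner x (y - z) = cX.inner x y - cX.inner x z :=
  map_sub (cX.innerₗ x) y z

lemma inner_sub_left (x y z : X) : cX.inner (x - y) z = cX.inner x z - cX.inner y z := by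
  rw [← cX.star_inner, cX.inner_sub_right, star_sub, cX.star_inner, cX.star_inner]

lemma inner_zero_right (x : X) : cX.inner x 0 = 0 := map_zero (cX.innerₗ x)

/-- Polarization: four times the inner product is a combination of four squares. -/
lemma polarization (x y : X) : (4 : ℂ) • cX.inner x y =
    cX.inner (x + y) (x + y) - cX.inner (x - y) (x - y)
      + Complex.I • cX.inner (x - Complex.I • y) (x - Complex.I • y)
      - Complex.I • cX.inner (x + Complex.I • y) (x + Complex.I • y) := by
  simp only [inner_add_left, inner_sub_left, inner_add_right, inner_sub_right, inner_csmul_left,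
    inner_csmul_right, smul_add, smul_sub, smul_smul]
  simp only [Complex.star_def, Complex.conj_I, mul_neg, Complex.I_mul_I, neg_neg, neg_smul,
    one_smul, mul_one]
  module

/-- A crude Cauchy–Schwarz inequality; any constant is enough to make the inner product
continuous. -/
lemma norm_inner_le (x y : X) : ‖cX.inner x y‖ ≤ 4 * ‖x‖ * ‖y‖ := by
  have key : ∀ x y : X, ‖x‖ = 1 → ‖y‖ = 1 → ‖cX.inner x y‖ ≤ 4 := by
    intro x y hx hy
    have hI : ‖Complex.I • y‖ = 1 := by simp [norm_smul, hy]
    have hsq : ∀ z : X, ‖z‖ ≤ 2 → ‖cX.inner z z‖ ≤ 4 := fun z hz => by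
      rw [← cX.norm_inner_self]; nlinarith [norm_nonneg z]
    have h1 := hsq (x + y) ((norm_add_le _ _).trans (by rw [hx, hy]; norm_num))
    have h2 := hsq (x - y) ((norm_sub_le _ _).trans (by rw [hx, hy]; norm_num))
    have h3 := hsq (x - Complex.I • y) ((norm_sub_le _ _).trans (by rw [hx, hI]; norm_num))
    have h4 := hsq (x + Complex.I • y) ((norm_add_le _ _).trans (by rw [hx, hI]; norm_num))
    have h5 := congrArg norm (cX.polarization x y)
    rw [norm_smul] at h5
    have h6 : ∀ b : B, ‖Complex.I • b‖ = ‖b‖ := fun b => by simp [norm_smul]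
    have h7 := norm_sub_le (cX.inner (x + y) (x + y) - cX.inner (x - y) (x - y)
      + Complex.I • cX.inner (x - Complex.I • y) (x - Complex.I • y))
      (Complex.I • cX.inner (x + Complex.I • y) (x + Complex.I • y))
    have h8 := norm_add_le (cX.inner (x + y) (x + y) - cX.inner (x - y) (x - y))
      (Complex.I • cX.inner (x - Complex.I • y) (x - Complex.I • y))
    have h9 := norm_sub_le (cX.inner (x + y) (x + y)) (cX.inner (x - y) (x - y))
    rw [h6] at h7 h8
    norm_num at h5
    linarith
  rcases eq_or_ne x 0 with rfl | hx
  · rw [← cX.star_inner, cX.inner_zero_right]; simp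
  rcases eq_or_ne y 0 with rfl | hy
  · rw [cX.inner_zero_right]; simp
  have hx' := norm_pos_iff.2 hx
  have hy' := norm_pos_iff.2 hy
  have := key ((‖x‖ : ℂ)⁻¹ • x) ((‖y‖ : ℂ)⁻¹ • y) (norm_smul_inv_norm (𝕜 := ℂ) hx)
    (norm_smul_inv_norm (𝕜 := ℂ) hy)
  rw [cX.inner_csmul_left, cX.inner_csmul_right, norm_smul, norm_smul] at this
  simp only [norm_star, norm_inv, Complex.norm_real, norm_norm] at this
  rw [inv_mul_le_iff₀ hx', inv_mul_le_iff₀ hy'] at this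
  linarith

lemma continuous_inner_right (x : X) : Continuous fun y => cX.inner x y :=
  ((cX.innerₗ x).mkContinuous _ (cX.norm_inner_le x)).continuous

lemma continuous_inner_left (y : X) : Continuous fun x => cX.inner x y := by
  simpa only [cX.star_inner] using (cX.continuous_inner_right y).star

lemma norm_smulR_le (x : X) (b : B) : ‖cX.smulR x b‖ ≤ ‖x‖ * ‖b‖ := by
  refine pow_le_pow_iff_left₀ (norm_nonneg _) (by positivity) two_ne_zero |>.1 ?_
  rw [cX.norm_inner_self, cX.inner_smulR, cX.inner_smulR_left]
  calc _ ≤ ‖star b‖ * ‖cX.inner x x‖ * ‖b‖ := norm_mul₃_le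
    _ = _ := by rw [← cX.norm_inner_self, norm_star]; ring

/-- `b ↦ x b` as a bounded operator. -/
def smulRVec (x : X) : B →L[ℂ] X :=
  LinearMap.mkContinuous
    { toFun := cX.smulR x
      map_add' := cX.smulR_add x
      map_smul' := fun c b => cX.csmul_smulR c x b } ‖x‖ (cX.norm_smulR_le x)

/-- `x ↦ x b` as a bounded operator. -/
def smulROp (b : B) : X →L[ℂ] X :=
  LinearMap.mkContinuous
    { toFun := fun x => cX.smulR x b
      map_add' := fun x y => cX.add_smulR x y b
      map_smul' := fun c x => cX.smulR_csmul c x b } ‖b‖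
    (fun x => (cX.norm_smulR_le x b).trans_eq (mul_comm _ _))

/-- `x ↦ a x` as a linear map. -/
def smulLₗ (a : A) : X →ₗ[ℂ] X where
  toFun := cX.smulL a
  map_add' := cX.smulL_add a
  map_smul' c := cX.csmul_smulL c a

/-- `a ↦ a x` as a linear map. -/
def smulLVecₗ (x : X) : A →ₗ[ℂ] X where
  toFun a := cX.smulL a x
  map_add' a a' := cX.add_smulL a a' x
  map_smul' c a := cX.smulL_csmul c a x

lemma zero_smulL (x : X) : cX.smulL 0 x = 0 := map_zero (cX.smulLVecₗ x)

/-- The left action is contractive although no bound is postulated: with `1 - a* a = (1 - t)²`,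
one has `⟨x, x⟩ - ⟨a x, a x⟩ = ⟨x - t x, x - t x⟩ ≥ 0`. -/
lemma norm_smulL_le_of_le_one {a : A} (ha : ‖a‖ ≤ 1) (x : X) : ‖cX.smulL a x‖ ≤ ‖x‖ := by
  let _ := CStarAlgebra.spectralOrder B
  have _ := CStarAlgebra.spectralOrderedRing B
  have hn : ‖star a * a‖ ≤ 1 := by
    rw [CStarRing.norm_star_mul_self]; exact mul_le_one₀ ha (norm_nonneg _) ha
  obtain ⟨t, ht, hta⟩ := exists_one_sub_sq (star a * a) (.star_mul_self a) hn
  have hpos : ∀ y : X, 0 ≤ cX.inner y y := fun y => by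
    obtain ⟨b, hb⟩ := cX.inner_self_nonneg y
    rw [hb]; exact star_mul_self_nonneg b
  have heq : cX.inner x x - cX.inner (cX.smulL a x) (cX.smulL a x)
      = cX.inner (x - cX.smulL t x) (x - cX.smulL t x) := by
    have h1 : cX.inner (cX.smulL a x) (cX.smulL a x) = cX.inner x (cX.smulL (star a * a) x) := by
      rw [cX.inner_smulL, cX.smulL_mul]
    have h2 : cX.smulL (star a * a) x
        = cX.smulL t x + cX.smulL t x - cX.smulL t (cX.smulL t x) := by
      rw [← hta, ← cX.smulL_mul, ← cX.add_smulL]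
      exact map_sub (cX.smulLVecₗ x) _ _
    have h3 : cX.smulL t (x - cX.smulL t x) = cX.smulL t x - cX.smulL t (cX.smulL t x) :=
      map_sub (cX.smulLₗ t) _ _
    rw [h1, h2, cX.inner_sub_left, cX.inner_smulL, ht, h3]
    simp only [cX.inner_sub_right, cX.inner_add_right]
    abel
  have hle : ‖cX.inner (cX.smulL a x) (cX.smulL a x)‖ ≤ ‖cX.inner x x‖ :=
    CStarAlgebra.norm_le_norm_of_nonneg_of_le (hpos _) (sub_nonneg.1 (heq ▸ hpos _))
  rw [← cX.norm_inner_self, ← cX.norm_inner_self] at hle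
  exact pow_le_pow_iff_left₀ (norm_nonneg _) (norm_nonneg _) two_ne_zero |>.1 hle

lemma norm_smulL_le (a : A) (x : X) : ‖cX.smulL a x‖ ≤ ‖a‖ * ‖x‖ := by
  rcases eq_or_ne a 0 with rfl | ha
  · rw [cX.zero_smulL]; simp
  have := cX.norm_smulL_le_of_le_one (norm_smul_inv_norm (𝕜 := ℂ) ha).le x
  rw [cX.smulL_csmul, norm_smul] at this
  simpa [inv_mul_le_iff₀ (norm_pos_iff.2 ha)] using this

/-- `x ↦ a x` as a bounded operator. -/
def smulLOp (a : A) : X →L[ℂ] X := (cX.smulLₗ a).mkContinuous _ (cX.norm_smulL_le a)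

/-- An approximate unit of `A` acts as an approximate unit on `X`. -/
lemma tendsto_smulL {ι : Type*} {l : Filter ι} {q v : ι → A} (hq : ShiftNet l q v) (x : X) :
    Tendsto (fun i => cX.smulL (q i) x) l (𝓝 x) := by
  refine tendsto_of_dense_span (fun i => cX.smulLₗ (q i)) ?_ cX.nondegenerate ?_ x
  · filter_upwards [hq.norm_q] with i hi x using cX.norm_smulL_le_of_le_one hi x
  · rintro _ ⟨a, y, rfl⟩
    have hc : Continuous fun a => cX.smulL a y :=
      ((cX.smulLVecₗ y).mkContinuous ‖y‖
        fun a => (cX.norm_smulL_le a y).trans_eq (mul_comm _ _)).continuous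
    refine ((hc.tendsto a).comp (hq.tendsto a)).congr fun i => ?_
    exact cX.smulL_mul _ _ _

/-- An approximate unit of `B` acts as an approximate unit on `X`. -/
lemma tendsto_smulR {ι : Type*} {l : Filter ι} {q v : ι → B} (hq : ShiftNet l q v) (x : X) :
    Tendsto (fun i => cX.smulR x (q i)) l (𝓝 x) := by
  have h0 := ((tendsto_iff_norm_sub_tendsto_zero.1 (hq.tendsto (cX.inner x x))).const_mul 2).sqrt
  rw [mul_zero, Real.sqrt_zero] at h0
  rw [tendsto_iff_norm_sub_tendsto_zero]
  refine squeeze_zero' (.of_forall fun _ => norm_nonneg _) ?_ h0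
  filter_upwards [hq.norm_q, hq.star_q] with i hi hs
  refine Real.le_sqrt_of_sq_le ?_
  set c := cX.inner x x with hc
  have heq : cX.inner (cX.smulR x (q i) - x) (cX.smulR x (q i) - x)
      = (q i * c - c) * q i - (q i * c - c) := by
    simp only [cX.inner_sub_left, cX.inner_sub_right, cX.inner_smulR, cX.inner_smulR_left, ← hc,
      hs, sub_mul]
    abel
  rw [cX.norm_inner_self, heq]
  calc _ ≤ ‖q i * c - c‖ * ‖q i‖ + ‖q i * c - c‖ :=
        (norm_sub_le _ _).trans (by gcongr; exact norm_mul_le _ _)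
    _ ≤ ‖q i * c - c‖ * 1 + ‖q i * c - c‖ := by gcongr
    _ = _ := by ring

/-! ### A generic vector -/

/-- There is room to scale any vector into a prescribed ball. -/
lemma exists_scale {E : Type*} [NormedAddCommGroup E] [NormedSpace ℂ E] (y : E) {δ : ℝ}
    (hδ : 0 < δ) : ∃ r : ℂ, r ≠ 0 ∧ ‖r • y‖ < δ := by
  refine ⟨((δ / (‖y‖ + 1) : ℝ) : ℂ), Complex.ofReal_ne_zero.2 (by positivity), ?_⟩
  rw [norm_smul, Complex.norm_real, Real.norm_of_nonneg (by positivity), div_mul_eq_mul_div,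
    div_lt_iff₀ (by positivity)]
  nlinarith [norm_nonneg y]

/-- Stability of `B`: every `x₀` is a limit of vectors `x` such that `x B` comes close to a
prescribed `y`.  One takes `x = x₀ q + r y v*` with small `r`; then `x v = r y q²`. -/
lemma exists_near_smulR_near {ι : Type*} {l : Filter ι} {q v : ι → B} (hq : ShiftNet l q v)
    (x₀ y : X) {δ ε : ℝ} (hδ : 0 < δ) (hε : 0 < ε) :
    ∃ x, ‖x - x₀‖ < δ ∧ ∃ b, ‖cX.smulR x b - y‖ < ε := by
  have _ := hq.neBot
  have hcontr : ∀ᶠ i in l, ∀ z, ‖(cX.smulROp (q i) : X →ₗ[ℂ] X) z‖ ≤ ‖z‖ := by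
    filter_upwards [hq.norm_q] with i hi z
    exact (cX.norm_smulR_le z (q i)).trans (mul_le_of_le_one_right (norm_nonneg _) hi)
  have h1 := tendsto_iff_norm_sub_tendsto_zero.1 (cX.tendsto_smulR hq x₀)
  have h2 := tendsto_iff_norm_sub_tendsto_zero.1
    (tendsto_comp_self (fun i => (cX.smulROp (q i) : X →ₗ[ℂ] X)) hcontr (cX.tendsto_smulR hq y))
  obtain ⟨i, hi1, hi2, hqv, hvv⟩ := ((h1.eventually_lt_const (half_pos hδ)).and
    ((h2.eventually_lt_const hε).and (hq.q_mul_v.and hq.star_v_mul_v))).exists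
  obtain ⟨r, hr0, hr⟩ := exists_scale (cX.smulR y (star (v i))) (half_pos hδ)
  refine ⟨cX.smulR x₀ (q i) + r • cX.smulR y (star (v i)), ?_, r⁻¹ • v i, ?_⟩
  · rw [add_sub_right_comm]
    exact (norm_add_le _ _).trans_lt (by linarith)
  · have : cX.smulR (cX.smulR x₀ (q i) + r • cX.smulR y (star (v i))) (r⁻¹ • v i)
        = cX.smulR (cX.smulR y (q i)) (q i) := by
      rw [cX.csmul_smulR, cX.add_smulR, cX.smulR_csmul, ← cX.smulR_mul, ← cX.smulR_mul,
        ← cX.smulR_mul, hqv, hvv]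
      rw [show cX.smulR x₀ 0 = 0 from map_zero (cX.smulRVec x₀), zero_add, smul_smul,
        inv_mul_cancel₀ hr0, one_smul]
    rw [this]
    exact hi2

/-- Stability of `A` and fullness: every `x₀` is a limit of vectors `x` such that `⟨x, X⟩` comes
close to a prescribed `c`.  Fullness reduces this to sums `c = ∑ ⟨xₖ, yₖ⟩`, and a summand is
adjoined to a solution `(x, y)` for the remaining ones by passing to
`(q x + r v xₖ, q y + r⁻¹ v yₖ)`, whose cross terms vanish because `q v = 0`. -/
lemma exists_near_inner_near {ι : Type*} {l : Filter ι} {q v : ι → A} (hq : ShiftNet l q v)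
    (hfull : cX.Full) (c : B) (x₀ : X) {δ ε : ℝ} (hδ : 0 < δ) (hε : 0 < ε) :
    ∃ x, ‖x - x₀‖ < δ ∧ ∃ y, ‖cX.inner x y - c‖ < ε := by
  have _ := hq.neBot
  let P : B → Prop := fun c => ∀ x₀ : X, ∀ δ > 0, ∀ ε > 0,
    ∃ x, ‖x - x₀‖ < δ ∧ ∃ y, ‖cX.inner x y - c‖ < ε
  have hcontr : ∀ᶠ i in l, ∀ z, ‖cX.smulLₗ (q i) z‖ ≤ ‖z‖ := by
    filter_upwards [hq.norm_q] with i hi z using cX.norm_smulL_le_of_le_one hi z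
  have hstep : ∀ c x₁ y₁, P c → P (cX.inner x₁ y₁ + c) := by
    intro c x₁ y₁ hc x₀ δ hδ ε hε
    obtain ⟨x, hx, y, hy⟩ := hc x₀ (δ / 2) (half_pos hδ) (ε / 2) (half_pos hε)
    have h1 := tendsto_iff_norm_sub_tendsto_zero.1 (cX.tendsto_smulL hq x)
    have hqq : ∀ z, Tendsto (fun i => cX.smulL (q i) (cX.smulL (q i) z)) l (𝓝 z) := fun z =>
      tendsto_comp_self (fun i => cX.smulLₗ (q i)) hcontr (cX.tendsto_smulL hq z)
    have h2 := tendsto_iff_norm_sub_tendsto_zero.1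
      ((((cX.continuous_inner_right x).tendsto y).comp (hqq y)).add
        (((cX.continuous_inner_right x₁).tendsto y₁).comp (hqq y₁)))
    obtain ⟨i, hi1, hi2, hqv, hvv, hsq⟩ := ((h1.eventually_lt_const (half_pos (half_pos hδ))).and
      ((h2.eventually_lt_const (half_pos hε)).and
        (hq.q_mul_v.and (hq.star_v_mul_v.and hq.star_q)))).exists
    have hvq : star (v i) * q i = 0 := by
      simpa [hsq] using congrArg star hqv
    obtain ⟨r, hr0, hr⟩ := exists_scale (cX.smulL (v i) x₁) (half_pos (half_pos hδ))
    refine ⟨cX.smulL (q i) x + star r • cX.smulL (v i) x₁, ?_,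
      cX.smulL (q i) y + r⁻¹ • cX.smulL (v i) y₁, ?_⟩
    · rw [norm_smul, ← norm_star r, ← norm_smul] at hr
      rw [show ∀ a b : X, a + b - x₀ = (a - x) + b + (x - x₀) from fun a b => by abel]
      refine (norm_add_le _ _).trans_lt ?_
      have := norm_add_le (cX.smulL (q i) x - x) (star r • cX.smulL (v i) x₁)
      linarith
    · have : cX.inner (cX.smulL (q i) x + star r • cX.smulL (v i) x₁)
            (cX.smulL (q i) y + r⁻¹ • cX.smulL (v i) y₁)
          = cX.inner x (cX.smulL (q i) (cX.smulL (q i) y))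
            + cX.inner x₁ (cX.smulL (q i) (cX.smulL (q i) y₁)) := by
        simp only [cX.inner_add_left, cX.inner_add_right, cX.inner_csmul_left,
          cX.inner_csmul_right, cX.inner_smulL, ← cX.smulL_mul, hsq, hqv, hvq, hvv,
          cX.zero_smulL, cX.inner_zero_right, smul_zero, add_zero, zero_add, smul_smul,
          star_star]
        rw [mul_inv_cancel₀ hr0, one_smul]
      rw [this, show ∀ a : B, a - (cX.inner x₁ y₁ + c)
        = (a - (cX.inner x y + cX.inner x₁ y₁)) + (cX.inner x y - c) from fun a => by abel]
      refine (norm_add_le _ _).trans_lt ?_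
      simp only [Function.comp_def] at hi2
      linarith
  have hspan : ∀ c ∈ Submodule.span ℂ {b : B | ∃ x y, b = cX.inner x y},
      ∀ c', P c' → P (c + c') := by
    intro c hc
    induction hc using Submodule.closure_induction with
    | zero => intro c' hc'; rwa [zero_add]
    | add a b _ _ ha hb => intro c' hc'; rw [add_assoc]; exact ha _ (hb _ hc')
    | smul_mem z b hb =>
      obtain ⟨x, y, rfl⟩ := hb
      intro c' hc'
      rw [← cX.inner_csmul_right]
      exact hstep _ _ _ hc'
  have hP0 : P 0 := fun x₀ δ hδ ε hε =>
    ⟨x₀, by simpa using hδ, 0, by simpa [cX.inner_zero_right] using hε⟩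
  obtain ⟨c', hc', hcc⟩ := Metric.mem_closure_iff.1 (hfull c) (ε / 2) (half_pos hε)
  obtain ⟨x, hx, y, hy⟩ := hspan c' hc' 0 hP0 x₀ δ hδ (ε / 2) (half_pos hε)
  refine ⟨x, hx, y, ?_⟩
  rw [add_zero] at hy
  rw [dist_comm, dist_eq_norm] at hcc
  rw [← sub_add_sub_cancel _ c' c]
  exact (norm_add_le _ _).trans_lt (by linarith)

/-- Baire category: a generic `x ∈ X` has both `x B` dense in `X` and `⟨x, X⟩` dense in `B`. -/
lemma exists_generic [TopologicalSpace.SeparableSpace B] [TopologicalSpace.SeparableSpace X]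
    {ι κ : Type*} {l : Filter ι} {q v : ι → A} (hA : ShiftNet l q v)
    {l' : Filter κ} {q' v' : κ → B} (hB : ShiftNet l' q' v') (hfull : cX.Full) :
    ∃ x : X, DenseRange (cX.smulR x) ∧ DenseRange (cX.inner x) := by
  let d := TopologicalSpace.denseSeq X
  let e := TopologicalSpace.denseSeq B
  let ε : ℕ → ℝ := fun n => 1 / (n + 1)
  have hε : ∀ n, 0 < ε n := fun n => Nat.one_div_pos_of_nat
  let F : ℕ × ℕ → Set X := fun p => {x | ∃ b, ‖cX.smulR x b - d p.1‖ < ε p.2}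
  let G : ℕ × ℕ → Set X := fun p => {x | ∃ y, ‖cX.inner x y - e p.1‖ < ε p.2}
  have hFo : ∀ p, IsOpen (F p) := fun p => by
    simp only [F, Set.ofPred_exists]
    exact isOpen_iUnion fun b => isOpen_lt
      ((((cX.smulROp b).continuous).sub continuous_const).norm) continuous_const
  have hGo : ∀ p, IsOpen (G p) := fun p => by
    simp only [G, Set.ofPred_exists]
    exact isOpen_iUnion fun y => isOpen_lt
      (((cX.continuous_inner_left y).sub continuous_const).norm) continuous_const
  have hFd : ∀ p, Dense (F p) := fun p x₀ => Metric.mem_closure_iff.2 fun δ hδ => by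
    obtain ⟨x, hx, h⟩ := cX.exists_near_smulR_near hB x₀ (d p.1) hδ (hε p.2)
    exact ⟨x, h, by rwa [dist_comm, dist_eq_norm]⟩
  have hGd : ∀ p, Dense (G p) := fun p x₀ => Metric.mem_closure_iff.2 fun δ hδ => by
    obtain ⟨x, hx, h⟩ := cX.exists_near_inner_near hA hfull (e p.1) x₀ hδ (hε p.2)
    exact ⟨x, h, by rwa [dist_comm, dist_eq_norm]⟩
  have hdense : Dense (⋂ s : (ℕ × ℕ) ⊕ (ℕ × ℕ), Sum.elim F G s) :=
    dense_iInter_of_isOpen (by rintro (p | p); exacts [hFo p, hGo p])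
      (by rintro (p | p); exacts [hFd p, hGd p])
  obtain ⟨x, hx⟩ := hdense.nonempty
  rw [Set.mem_iInter] at hx
  refine ⟨x, ?_, ?_⟩
  · refine dense_closure.1 ((TopologicalSpace.denseRange_denseSeq X).mono ?_)
    rintro _ ⟨n, rfl⟩
    refine Metric.mem_closure_iff.2 fun δ hδ => ?_
    obtain ⟨k, hk⟩ := exists_nat_one_div_lt hδ
    obtain ⟨b, hb⟩ := hx (Sum.inl (n, k))
    exact ⟨_, ⟨b, rfl⟩, by rw [dist_comm, dist_eq_norm]; exact hb.trans hk⟩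
  · refine dense_closure.1 ((TopologicalSpace.denseRange_denseSeq B).mono ?_)
    rintro _ ⟨n, rfl⟩
    refine Metric.mem_closure_iff.2 fun δ hδ => ?_
    obtain ⟨k, hk⟩ := exists_nat_one_div_lt hδ
    obtain ⟨b, hb⟩ := hx (Sum.inr (n, k))
    exact ⟨_, ⟨b, rfl⟩, by rw [dist_comm, dist_eq_norm]; exact hb.trans hk⟩

/-! ### The unitary and the homomorphism into the multiplier algebra -/

/-- Polar decomposition of a generic vector `x`: with `h = ⟨x, x⟩^{1/2}`, the map `x b ↦ h b`
extends to a unitary of Hilbert `B`-modules `X → B`. -/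
lemma exists_unitary {x : X} (hx : DenseRange (cX.smulR x)) (hx' : DenseRange (cX.inner x)) :
    ∃ U : X ≃ₗᵢ[ℂ] B, (∀ y z : X, cX.inner y z = star (U y) * U z) ∧
      ∀ (y : X) (b : B), U (cX.smulR y b) = U y * b := by
  let _ := CStarAlgebra.spectralOrder B
  have _ := CStarAlgebra.spectralOrderedRing B
  have hpos : 0 ≤ cX.inner x x := by
    obtain ⟨b, hb⟩ := cX.inner_self_nonneg x
    rw [hb]; exact star_mul_self_nonneg b
  set h : B := CFC.sqrt (cX.inner x x) with hh
  have hsq : h * h = cX.inner x x := CFC.sqrt_mul_sqrt_self _ hpos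
  have hsa : star h = h := (IsSelfAdjoint.of_nonneg (CFC.sqrt_nonneg _)).star_eq
  have hinner : ∀ b b' : B, cX.inner (cX.smulR x b) (cX.smulR x b') = star (h * b) * (h * b') := by
    intro b b'
    rw [cX.inner_smulR, cX.inner_smulR_left, ← hsq, star_mul, hsa]
    simp only [mul_assoc]
  have hd2 : DenseRange (LinearMap.mulLeft ℂ h) := by
    -- `h B` contains `⟨x, x⟩ B = ⟨x, x B⟩`, which is dense in `⟨x, X⟩`.
    have h1 : DenseRange (cX.inner x ∘ cX.smulR x) := hx'.comp hx (cX.continuous_inner_right x)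
    refine h1.mono ?_
    rintro _ ⟨b, rfl⟩
    exact ⟨h * b, by simp [cX.inner_smulR, ← hsq, mul_assoc]⟩
  have hnorm : ∀ b : B, ‖LinearMap.mulLeft ℂ h (LinearEquiv.refl ℂ B b)‖
      = ‖(cX.smulRVec x : B →ₗ[ℂ] X) b‖ := fun b => by
    refine (pow_left_inj₀ (norm_nonneg _) (norm_nonneg _) two_ne_zero).1 ?_
    change ‖h * b‖ ^ 2 = ‖cX.smulR x b‖ ^ 2
    rw [cX.norm_inner_self, hinner, CStarRing.norm_star_mul_self, sq]
  let U : X ≃ₗᵢ[ℂ] B := (LinearEquiv.refl ℂ B).extendOfIsometry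
    (cX.smulRVec x : B →ₗ[ℂ] X) (LinearMap.mulLeft ℂ h) hx hd2 hnorm
  have hU : ∀ b, U (cX.smulR x b) = h * b := fun b =>
    LinearEquiv.extendOfIsometry_eq (LinearEquiv.refl ℂ B) (cX.smulRVec x : B →ₗ[ℂ] X)
      (LinearMap.mulLeft ℂ h) hx hd2 hnorm b
  have hUc : Continuous U := U.continuous
  refine ⟨U, fun y z => ?_, fun y b => ?_⟩
  · refine hx.induction_on (p := fun y => cX.inner y z = star (U y) * U z) y
      (isClosed_eq (cX.continuous_inner_left z) (by fun_prop)) fun b => ?_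
    refine hx.induction_on (p := fun z => cX.inner _ z = star (U _) * U z) z
      (isClosed_eq (cX.continuous_inner_right _) (by fun_prop)) fun b' => ?_
    rw [hinner, hU, hU]
  · refine hx.induction_on (p := fun y => U (cX.smulR y b) = U y * b) y
      (isClosed_eq (hUc.comp (cX.smulROp b).continuous) (by fun_prop)) fun b' => ?_
    rw [← cX.smulR_mul, hU, hU, mul_assoc]

/-- The operator `U a U⁻¹` on `B`. -/
def transport (U : X ≃ₗᵢ[ℂ] B) (a : A) : B →L[ℂ] B :=
  (U.toContinuousLinearEquiv : X →L[ℂ] B) ∘L cX.smulLOp a ∘L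
    (U.symm.toContinuousLinearEquiv : B →L[ℂ] X)

lemma transport_apply (U : X ≃ₗᵢ[ℂ] B) (a : A) (b : B) :
    cX.transport U a b = U (cX.smulL a (U.symm b)) := rfl

lemma star_transport_mul {U : X ≃ₗᵢ[ℂ] B}
    (hU : ∀ y z : X, cX.inner y z = star (U y) * U z) (a : A) (b c : B) :
    star (cX.transport U a b) * c = star b * cX.transport U (star a) c := by
  have h := cX.inner_smulL a (U.symm b) (U.symm c)
  rw [hU, hU] at h
  simpa [transport_apply] using h

lemma transport_mul_right {U : X ≃ₗᵢ[ℂ] B}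
    (hU : ∀ (y : X) (b : B), U (cX.smulR y b) = U y * b) (a : A) (b c : B) :
    cX.transport U a (b * c) = cX.transport U a b * c := by
  have h : U.symm (b * c) = cX.smulR (U.symm b) c := by
    rw [U.symm_apply_eq, hU, U.apply_symm_apply]
  rw [transport_apply, transport_apply, h, ← cX.smulL_smulR, hU]

/-- The multiplier of `B` given by `U a U⁻¹`; right multiplication is `b ↦ (U a* U⁻¹ b*)*`. -/
def multiplier {U : X ≃ₗᵢ[ℂ] B} (hU : ∀ y z : X, cX.inner y z = star (U y) * U z) (a : A) :
    𝓜(ℂ, B) where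
  fst := cX.transport U a
  snd := LinearMap.mkContinuous
    { toFun := fun b => star (cX.transport U (star a) (star b))
      map_add' := fun b c => by simp
      map_smul' := fun z b => by simp } ‖cX.transport U (star a)‖ fun b => by
    simpa using (cX.transport U (star a)).le_opNorm (star b)
  central b c := by
    change star (cX.transport U (star a) (star b)) * c = b * cX.transport U a c
    rw [cX.star_transport_mul hU, star_star, star_star]

end Correspondence

/-- A multiplier is determined by its left multiplication. -/
lemma DoubleCentralizer.eq_of_fst {B : Type*} [NonUnitalCStarAlgebra B] {m n : 𝓜(ℂ, B)}
    (h : ∀ b, m.fst b = n.fst b) : m = n := by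
  rw [← sub_eq_zero, ← norm_eq_zero, ← DoubleCentralizer.norm_fst, norm_eq_zero]
  ext b
  simp [h]

namespace Correspondence

variable {A B X : Type*} [NonUnitalCStarAlgebra A] [NonUnitalCStarAlgebra B]
    [NormedAddCommGroup X] [NormedSpace ℂ X] [CompleteSpace X] (cX : Correspondence A B X)

/-- The homomorphism `a ↦ U a U⁻¹` from `A` to `M(B)`. -/
def multiplierHom {U : X ≃ₗᵢ[ℂ] B} (hU : ∀ y z : X, cX.inner y z = star (U y) * U z) :
    A →⋆ₙₐ[ℂ] 𝓜(ℂ, B) where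
  toFun := cX.multiplier hU
  map_smul' c a := DoubleCentralizer.eq_of_fst fun b => by
    change U (cX.smulL (c • a) (U.symm b)) = c • U (cX.smulL a (U.symm b))
    rw [cX.smulL_csmul, map_smul]
  map_zero' := DoubleCentralizer.eq_of_fst fun b => by
    change U (cX.smulL 0 _) = 0
    rw [cX.zero_smulL, map_zero]
  map_add' a a' := DoubleCentralizer.eq_of_fst fun b => by
    change U (cX.smulL (a + a') (U.symm b)) =
      U (cX.smulL a (U.symm b)) + U (cX.smulL a' (U.symm b))
    rw [cX.add_smulL, map_add]
  map_mul' a a' := DoubleCentralizer.eq_of_fst fun b => by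
    change U _ = U (cX.smulL a (U.symm (U (cX.smulL a' _))))
    rw [U.symm_apply_apply, ← cX.smulL_mul]; rfl
  map_star' a := DoubleCentralizer.eq_of_fst fun b => by
    rw [DoubleCentralizer.star_fst]
    change cX.transport U (star a) b = star (star (cX.transport U (star a) (star (star b))))
    rw [star_star, star_star]

/-- `U` intertwines the left action of `A` with `φ = multiplierHom`: `φ(a) U(x) = U(a x)`. -/
lemma multiplierHom_mul {U : X ≃ₗᵢ[ℂ] B} (hU : ∀ y z : X, cX.inner y z = star (U y) * U z)
    (hU' : ∀ (y : X) (b : B), U (cX.smulR y b) = U y * b) (a : A) (x : X) :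
    ((U (cX.smulL a x) : B) : 𝓜(ℂ, B)) = cX.multiplierHom hU a * ((U x : B) : 𝓜(ℂ, B)) :=
  DoubleCentralizer.eq_of_fst fun b => by
    change U (cX.smulL a x) * b = cX.transport U a (U x * b)
    rw [cX.transport_mul_right hU', transport_apply, U.symm_apply_apply]

/-- Nondegeneracy of the left action is transported by `U`. -/
lemma nondegenerate_multiplierHom {U : X ≃ₗᵢ[ℂ] B}
    (hU : ∀ y z : X, cX.inner y z = star (U y) * U z)
    (hU' : ∀ (y : X) (b : B), U (cX.smulR y b) = U y * b) :
    Nondegenerate (cX.multiplierHom hU) := by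
  intro b
  let J : B →ₗ[ℂ] 𝓜(ℂ, B) := (DoubleCentralizer.coeHom (𝕜 := ℂ) (A := B) : B →ₗ[ℂ] 𝓜(ℂ, B))
  let j : X →ₗ[ℂ] 𝓜(ℂ, B) := J ∘ₗ (U.toLinearEquiv : X →ₗ[ℂ] B)
  have hj : Continuous j :=
    (show Continuous J from AddMonoidHomClass.continuous_of_bound J 1 fun b =>
      (NonUnitalStarAlgHom.norm_apply_le (DoubleCentralizer.coeHom (𝕜 := ℂ) (A := B)) b).trans_eq
        (one_mul _).symm).comp U.continuous
  have hb : (b : 𝓜(ℂ, B)) = j (U.symm b) := by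
    change (b : 𝓜(ℂ, B)) = ((U (U.symm b) : B) : 𝓜(ℂ, B))
    rw [U.apply_symm_apply]
  rw [hb]
  refine map_mem_closure hj (cX.nondegenerate (U.symm b)) fun x hx => ?_
  have hmap := Submodule.mem_map_of_mem (f := j) hx
  rw [Submodule.map_span] at hmap
  refine Submodule.span_mono ?_ hmap
  rintro _ ⟨_, ⟨a, y, rfl⟩, rfl⟩
  exact ⟨a, U y, cX.multiplierHom_mul hU hU' a y⟩

end Correspondence

/-- Let `A` and `B` be separable stable C⋆-algebras and let `X` be a
full nondegenerate separable `A`–`B` correspondence.  Then there is a nondegenerate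
homomorphism `φ : A → M(B)` such that `X ≅ B_φ` as `A`–`B` correspondences, where `B_φ`
is the standard correspondence (`B` with its canonical right Hilbert `B`-module structure
and left `A`-action via `φ`).  Consequently, the functor `E` from the nondegenerate
category to the enchilada category, restricted to separable stable C⋆-algebras, maps onto
the subcategory whose morphisms are isomorphism classes of full nondegenerate separable
correspondences. -/
theorem full_correspondence_isomorphic_standard
    {K : Type v} {A B : Type u} {X : Type w}
    [NonUnitalCStarAlgebra K] [NonUnitalCStarAlgebra A] [NonUnitalCStarAlgebra B]
    [NormedAddCommGroup X] [NormedSpace ℂ X] [CompleteSpace X]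
    [TopologicalSpace.SeparableSpace A] [TopologicalSpace.SeparableSpace B]
    [TopologicalSpace.SeparableSpace X]
    (hK : IsCompactOperatorsAlgebra K)
    (hA : IsStable A K) (hB : IsStable B K)
    (cX : Correspondence A B X) (hfull : cX.Full) :
    ∃ φ : A →⋆ₙₐ[ℂ] 𝓜(ℂ, B), Nondegenerate φ ∧
      ∃ U : X ≃ₗ[ℂ] B,
        (∀ x y : X, cX.inner x y = star (U x) * U y) ∧
        (∀ (x : X) (b : B), U (cX.smulR x b) = U x * b) ∧
        (∀ (a : A) (x : X),
          ((U (cX.smulL a x) : B) : 𝓜(ℂ, B)) = φ a * ((U x : B) : 𝓜(ℂ, B))) := by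
  obtain ⟨_, _, _, hqA⟩ := hA.exists_shiftNet hK
  obtain ⟨_, _, _, hqB⟩ := hB.exists_shiftNet hK
  obtain ⟨x, hx, hx'⟩ := cX.exists_generic hqA hqB hfull
  obtain ⟨U, hU, hU'⟩ := cX.exists_unitary hx hx'
  exact ⟨cX.multiplierHom hU, cX.nondegenerate_multiplierHom hU hU', U.toLinearEquiv, hU, hU',
    cX.multiplierHom_mul hU hU'⟩
end
end

section
/- Let A be a C*-algebra and let {e_ij}_{i,j≥1} be a system of matrix units in M(A) (i.e. e_ij e_kl = δ_jk e_il, e_ij* = e_ji, and Σ_i e_ii = 1 with strict convergence in M(A)). Set A_11 = e_11 A e_11 and let C = {a ∈ M(A) : e_ij a = a e_ij ∈ A for all i, j}. Then the map ψ: C → A_11, ψ(a) = a e_11, is a C*-isomorphism, whose inverse is σ: A_11 → C given by the strictly convergent sum σ(d) = Σ_i e_i1 d e_1i. -/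
/-!
The algebraic part (multiplicativity, star, linearity) only uses that elements of `C` commute with
the projection `e 0 0`. Injectivity: if `a` commutes with the matrix units and `a * e 0 0 = 0`, then
`a * e i i = e i 0 * (a * e 0 0) * e 0 i = 0` for all `i`, so `a = 0` because the `e i i` sum
strictly to `1` and a multiplier is determined by its action on `A`.

Surjectivity rests on the strict convergence of `σ(x) = Σᵢ e i 0 * x * e 0 i`. For a finite set `s`,
put `T = Σ_{i ∈ s} e i 0 * x * e 0 i` and `P = Σ_{i ∈ s} e i i`. The C⋆-order inequality
`star T * T ≤ ‖x‖² P` gives `‖T z‖ ≤ ‖x‖ ‖P z‖` (`norm_sum_conj_mul_le`), so the partial sums of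
`σ(x)` inherit the strict Cauchy property from those of `Σ e i i`. Strict completeness of `M(A)`
(`exists_strict_limit`) is a consequence of the Banach–Steinhaus theorem. Finally
`e i j * σ(x) = e i 0 * x * e 0 j = σ(x) * e i j` (`sigma_mul`), which lies in the ideal `A`; for
`i = j = 0` it is `x`.
-/

open scoped MultiplierAlgebra
open Filter

noncomputable section

/-! `𝓜(ℂ, A)` is the multiplier algebra `M(A)` of the C⋆-algebra `A` (Mathlib's
`DoubleCentralizer`), and `(a : 𝓜(ℂ, A))` is the canonical image of `a : A` in it.
Strict convergence in `M(A)` of a sequence `mₙ → m` means `mₙ·a → m·a` and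
`a·mₙ → a·m` in norm for every `a ∈ A`. -/

/-- The projections `e i i` of a system of matrix units sum to `1` strictly in `M(A)`. -/
def StrictSumOne {A : Type*} [NonUnitalCStarAlgebra A] (e : ℕ → ℕ → 𝓜(ℂ, A)) : Prop :=
  ∀ a : A,
    Tendsto (fun n => (∑ i ∈ Finset.range n, e i i) * (a : 𝓜(ℂ, A))) atTop
      (nhds (a : 𝓜(ℂ, A))) ∧
    Tendsto (fun n => (a : 𝓜(ℂ, A)) * ∑ i ∈ Finset.range n, e i i) atTop
      (nhds (a : 𝓜(ℂ, A)))

section Multiplier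

variable {A : Type*} [NonUnitalCStarAlgebra A]

/-! ### The canonical embedding of `A` into `M(A)` -/

/-- `A` is an ideal of `M(A)`. The identity `m (y z) = (m y) z` follows from centrality because
left multiplication on a C⋆-algebra is faithful. -/
lemma mul_coe_eq (m : 𝓜(ℂ, A)) (y : A) :
    m * (y : 𝓜(ℂ, A)) = ((m.fst y : A) : 𝓜(ℂ, A)) := by
  have hL : ∀ z, m.fst (y * z) = m.fst y * z := fun z => by
    have h : ∀ w, w * (m.fst (y * z) - m.fst y * z) = 0 := fun w => by
      rw [mul_sub, ← m.central, ← mul_assoc, ← mul_assoc, m.central, sub_self]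
    exact sub_eq_zero.1 (CStarRing.star_mul_self_eq_zero_iff _ |>.1 (h _))
  exact DoubleCentralizer.ext _ _ _ _ (Prod.ext (ContinuousLinearMap.ext hL)
    (ContinuousLinearMap.ext fun z => m.central z y))

lemma star_coe (y : A) : star (y : 𝓜(ℂ, A)) = ((star y : A) : 𝓜(ℂ, A)) :=
  (map_star (DoubleCentralizer.coeHom (𝕜 := ℂ) (A := A)) y).symm

lemma coe_mul_eq (m : 𝓜(ℂ, A)) (y : A) :
    (y : 𝓜(ℂ, A)) * m = ((m.snd y : A) : 𝓜(ℂ, A)) := by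
  have h := congrArg star (mul_coe_eq (star m) (star y))
  rwa [star_mul, star_star, star_coe, star_coe, star_star, DoubleCentralizer.star_fst, star_star,
    star_star] at h

lemma norm_coe (y : A) : ‖(y : 𝓜(ℂ, A))‖ = ‖y‖ := by
  rw [← DoubleCentralizer.norm_fst, DoubleCentralizer.coe_fst,
    ContinuousLinearMap.opNorm_mul_apply]

lemma isometry_coe : Isometry (fun y : A => (y : 𝓜(ℂ, A))) :=
  AddMonoidHomClass.isometry_of_norm (DoubleCentralizer.coeHom (𝕜 := ℂ) (A := A)) norm_coe

/-- `A` is essential in `M(A)`: a multiplier is determined by its left action on `A`. -/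
lemma eq_of_mul_coe_eq {m n : 𝓜(ℂ, A)}
    (h : ∀ y : A, m * (y : 𝓜(ℂ, A)) = n * (y : 𝓜(ℂ, A))) : m = n := by
  rw [← sub_eq_zero, ← norm_eq_zero, ← DoubleCentralizer.norm_fst, norm_eq_zero]
  ext y
  have := h y
  rw [mul_coe_eq, mul_coe_eq] at this
  have := isometry_coe.injective this
  rw [DoubleCentralizer.sub_fst, sub_apply, this, sub_self]
  rfl

/-! ### Strict completeness of `M(A)` -/

/-- A strictly Cauchy sequence in `M(A)` converges strictly. The pointwise limits of the left and
right actions are continuous by the Banach–Steinhaus theorem. -/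
lemma exists_strict_limit (S : ℕ → 𝓜(ℂ, A))
    (hl : ∀ y : A, CauchySeq fun n => S n * (y : 𝓜(ℂ, A)))
    (hr : ∀ y : A, CauchySeq fun n => (y : 𝓜(ℂ, A)) * S n) :
    ∃ a : 𝓜(ℂ, A), ∀ y : A,
      Tendsto (fun n => S n * (y : 𝓜(ℂ, A))) atTop (nhds (a * (y : 𝓜(ℂ, A)))) ∧
      Tendsto (fun n => (y : 𝓜(ℂ, A)) * S n) atTop (nhds ((y : 𝓜(ℂ, A)) * a)) := by
  have hl' : ∀ y : A, ∃ z : A, Tendsto (fun n => (S n).fst y) atTop (nhds z) := fun y => by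
    have h := hl y
    simp only [mul_coe_eq] at h
    refine cauchySeq_tendsto_of_complete (isometry_coe.isUniformInducing.cauchy_map_iff.1 ?_)
    rwa [map_map]
  have hr' : ∀ y : A, ∃ z : A, Tendsto (fun n => (S n).snd y) atTop (nhds z) := fun y => by
    have h := hr y
    simp only [coe_mul_eq] at h
    refine cauchySeq_tendsto_of_complete (isometry_coe.isUniformInducing.cauchy_map_iff.1 ?_)
    rwa [map_map]
  choose L hL using hl'
  choose R hR using hr'
  let a : 𝓜(ℂ, A) :=
    { fst := continuousLinearMapOfTendsto (fun n => (S n).fst) (tendsto_pi_nhds.2 hL)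
      snd := continuousLinearMapOfTendsto (fun n => (S n).snd) (tendsto_pi_nhds.2 hR)
      central := fun x y => tendsto_nhds_unique ((hR x).mul_const y)
        (((hL y).const_mul x).congr fun n => ((S n).central x y).symm) }
  refine ⟨a, fun y => ⟨?_, ?_⟩⟩
  · simp only [mul_coe_eq]
    exact (isometry_coe.continuous.tendsto (L y)).comp (hL y)
  · simp only [coe_mul_eq]
    exact (isometry_coe.continuous.tendsto (R y)).comp (hR y)

end Multiplier

/-! ### Norm estimate and strict convergence of `σ(d)` -/

/-- With `T = Σ e i 0 * x * e 0 i` and `P = Σ e i i`, one has `T⋆T ≤ ‖x‖² P` whenever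
`e 0 0 * x = x`, hence `‖T z‖ ≤ ‖x‖ ‖P z‖`. -/
lemma norm_sum_conj_mul_le {B : Type*} [CStarAlgebra B] (e : ℕ → ℕ → B)
    (he_mul : ∀ i j k l, e i j * e k l = if j = k then e i l else 0)
    (he_star : ∀ i j, star (e i j) = e j i) (x : B) (hx : e 0 0 * x = x)
    (s : Finset ℕ) (z : B) :
    ‖(∑ i ∈ s, e i 0 * x * e 0 i) * z‖ ≤ ‖x‖ * ‖(∑ i ∈ s, e i i) * z‖ := by
  let _ : PartialOrder B := CStarAlgebra.spectralOrder B
  have _ : StarOrderedRing B := CStarAlgebra.spectralOrderedRing B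
  set T := ∑ i ∈ s, e i 0 * x * e 0 i with hT
  set P := ∑ i ∈ s, e i i with hP
  have h1 : star (T * z) * (T * z) = ∑ i ∈ s, star (e 0 i * z) * (star x * x) * (e 0 i * z) := by
    have key : ∀ i j, star (e i 0 * x * e 0 i) * (e j 0 * x * e 0 j) =
        if i = j then e i 0 * (star x * x) * e 0 i else 0 := fun i j => by
      calc _ = e i 0 * star x * (e 0 i * e j 0) * x * e 0 j := by
            simp only [star_mul, he_star, mul_assoc]
        _ = _ := by
            rw [he_mul]
            split_ifs with h
            · subst h
              rw [mul_assoc _ (e 0 0) x, hx]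
              simp only [mul_assoc]
            · simp
    have : star T * T = ∑ i ∈ s, e i 0 * (star x * x) * e 0 i := by
      rw [hT, star_sum, Finset.sum_mul_sum]
      simp only [key]
      exact Finset.sum_congr rfl fun i hi => by simp [hi]
    calc star (T * z) * (T * z) = star z * (star T * T) * z := by
          simp only [star_mul, mul_assoc]
      _ = _ := by
          rw [this, Finset.mul_sum, Finset.sum_mul]
          exact Finset.sum_congr rfl fun i _ => by simp only [star_mul, he_star, mul_assoc]
  have h2 : star (P * z) * (P * z) = ∑ i ∈ s, star (e 0 i * z) * (e 0 i * z) := by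
    have : star P * P = P := by
      rw [hP, star_sum, Finset.sum_mul_sum]
      refine Finset.sum_congr rfl fun i hi => ?_
      simp [he_star, he_mul, hi]
    calc star (P * z) * (P * z) = star z * (star P * P) * z := by
          simp only [star_mul, mul_assoc]
      _ = _ := by
          rw [this, hP, Finset.mul_sum, Finset.sum_mul]
          refine Finset.sum_congr rfl fun i _ => ?_
          have : e i i = e i 0 * e 0 i := by simp [he_mul]
          rw [this]
          simp only [star_mul, he_star, mul_assoc]
  have h3 : star (T * z) * (T * z) ≤ ‖star x * x‖ • (star (P * z) * (P * z)) := by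
    rw [h1, h2, Finset.smul_sum]
    exact Finset.sum_le_sum fun i _ =>
      CStarAlgebra.star_left_conjugate_le_norm_smul (IsSelfAdjoint.star_mul_self x)
  have h4 := CStarAlgebra.norm_le_norm_of_nonneg_of_le (star_mul_self_nonneg _) h3
  rw [norm_smul, norm_norm, CStarRing.norm_star_mul_self, CStarRing.norm_star_mul_self,
    CStarRing.norm_star_mul_self] at h4
  exact (mul_self_le_mul_self_iff (norm_nonneg _) (by positivity)).2 (h4.trans_eq (by ring))

section MatrixUnits

variable {A : Type*} [NonUnitalCStarAlgebra A] {e : ℕ → ℕ → 𝓜(ℂ, A)}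

lemma cauchySeq_sum_conj_mul
    (he_mul : ∀ i j k l, e i j * e k l = if j = k then e i l else 0)
    (he_star : ∀ i j, star (e i j) = e j i) (he_one : StrictSumOne e)
    (x : 𝓜(ℂ, A)) (hx : e 0 0 * x = x) (y : A) :
    CauchySeq fun n => (∑ i ∈ Finset.range n, e i 0 * x * e 0 i) * (y : 𝓜(ℂ, A)) := by
  have hP := Metric.cauchySeq_iff'.1 (he_one y).1.cauchySeq
  refine Metric.cauchySeq_iff'.2 fun ε hε => ?_
  have hpos : 0 < ‖x‖ + 1 := by positivity
  obtain ⟨N, hN⟩ := hP (ε / (‖x‖ + 1)) (by positivity)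
  refine ⟨N, fun n hn => ?_⟩
  have h := hN n hn
  rw [dist_eq_norm, ← sub_mul, ← Finset.sum_Ico_eq_sub _ hn] at h ⊢
  rw [lt_div_iff₀ hpos] at h
  have := norm_sum_conj_mul_le e he_mul he_star x hx (Finset.Ico N n) (y : 𝓜(ℂ, A))
  nlinarith [norm_nonneg ((∑ i ∈ Finset.Ico N n, e i i) * (y : 𝓜(ℂ, A)))]

/-- The series `σ(x) = Σᵢ e i 0 * x * e 0 i` converges strictly; convergence of the right action
follows from that of the left action for `star x`. -/
lemma exists_sigma
    (he_mul : ∀ i j k l, e i j * e k l = if j = k then e i l else 0)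
    (he_star : ∀ i j, star (e i j) = e j i) (he_one : StrictSumOne e)
    (x : 𝓜(ℂ, A)) (hx : x = e 0 0 * x * e 0 0) :
    ∃ a : 𝓜(ℂ, A), ∀ y : A,
      Tendsto (fun n => (∑ i ∈ Finset.range n, e i 0 * x * e 0 i) * (y : 𝓜(ℂ, A))) atTop
        (nhds (a * (y : 𝓜(ℂ, A)))) ∧
      Tendsto (fun n => (y : 𝓜(ℂ, A)) * ∑ i ∈ Finset.range n, e i 0 * x * e 0 i) atTop
        (nhds ((y : 𝓜(ℂ, A)) * a)) := by
  have h00 : e 0 0 * e 0 0 = e 0 0 := by simp [he_mul]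
  have hxl : e 0 0 * x = x := by rw [hx, ← mul_assoc, ← mul_assoc, h00]
  have hxr : e 0 0 * star x = star x := by
    have : x * e 0 0 = x := by rw [hx, mul_assoc, h00]
    rw [← he_star 0 0, ← star_mul, this]
  refine exists_strict_limit _ (cauchySeq_sum_conj_mul he_mul he_star he_one x hxl) fun y => ?_
  have h := cauchySeq_sum_conj_mul he_mul he_star he_one (star x) hxr (star y)
  have h2 := (starₗᵢ ℂ : 𝓜(ℂ, A) ≃ₗᵢ⋆[ℂ] 𝓜(ℂ, A)).isometry.uniformContinuous.comp_cauchySeq h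
  refine (congrArg CauchySeq (funext fun n => ?_)).mpr h2
  simp only [Function.comp_apply, coe_starₗᵢ, star_mul, star_sum, star_coe, star_star, he_star, mul_assoc]

/-- The strict limit `a = σ(x)` satisfies `e i j * a = e i 0 * x * e 0 j = a * e i j`, since the
partial sums satisfy this as soon as they contain the indices `i` and `j`. -/
lemma sigma_mul
    (he_mul : ∀ i j k l, e i j * e k l = if j = k then e i l else 0)
    (x a : 𝓜(ℂ, A))
    (ha : ∀ y : A, Tendsto (fun n => (∑ i ∈ Finset.range n, e i 0 * x * e 0 i) *
      (y : 𝓜(ℂ, A))) atTop (nhds (a * (y : 𝓜(ℂ, A)))))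
    (i j : ℕ) : e i j * a = e i 0 * x * e 0 j ∧ a * e i j = e i 0 * x * e 0 j := by
  constructor
  · refine eq_of_mul_coe_eq fun y => ?_
    have h := (ha y).const_mul (e i j)
    rw [← mul_assoc] at h
    refine tendsto_nhds_unique h (tendsto_const_nhds.congr' ?_)
    filter_upwards [eventually_gt_atTop j] with n hn
    rw [← mul_assoc (e i j), Finset.mul_sum]
    simp [← mul_assoc, he_mul, hn, ite_mul]
  · refine eq_of_mul_coe_eq fun y => ?_
    have h := ha ((e i j).fst y)
    simp only [← mul_coe_eq, ← mul_assoc] at h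
    refine tendsto_nhds_unique h (tendsto_const_nhds.congr' ?_)
    filter_upwards [eventually_gt_atTop i] with n hn
    rw [Finset.sum_mul]
    simp [mul_assoc, he_mul, hn, mul_ite]

/-- An element of the commutant of the matrix units that is killed by `e 0 0` is killed by every
`e i i = e i 0 * e 0 0 * e 0 i`, hence vanishes. -/
lemma eq_zero_of_mul_e00
    (he_mul : ∀ i j k l, e i j * e k l = if j = k then e i l else 0)
    (he_one : StrictSumOne e) (a : 𝓜(ℂ, A)) (hc : ∀ i j, e i j * a = a * e i j)
    (h0 : a * e 0 0 = 0) : a = 0 := by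
  have hi : ∀ i, a * e i i = 0 := fun i => by
    have h1 : e i i = e i 0 * e 0 0 * e 0 i := by simp [he_mul]
    rw [h1, ← mul_assoc, ← mul_assoc, ← hc, mul_assoc (e i 0), h0, mul_zero, zero_mul]
  refine eq_of_mul_coe_eq fun y => ?_
  have h := (he_one y).1.const_mul a
  refine tendsto_nhds_unique h (tendsto_const_nhds.congr fun n => ?_)
  rw [← mul_assoc, Finset.mul_sum]
  simp [hi]

end MatrixUnits

/-- Let `{e i j}` be a system of matrix units in `M(A)` whose diagonal
sums strictly to `1`.  With `A₁₁ = e₀₀·A·e₀₀` and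
`C = {a ∈ M(A) : e i j · a = a · e i j ∈ A for all i, j}`, the map `ψ : C → A₁₁`,
`ψ(a) = a·e₀₀`, is a C⋆-isomorphism (an injective, multiplicative, star-preserving,
linear bijection), whose inverse `σ : A₁₁ → C` is given by the strictly convergent sum
`σ(d) = Σᵢ e i 0 · d · e 0 i`. -/
theorem relative_commutant_iso_corner
    {A : Type*} [NonUnitalCStarAlgebra A] (e : ℕ → ℕ → 𝓜(ℂ, A))
    (he_mul : ∀ i j k l, e i j * e k l = if j = k then e i l else 0)
    (he_star : ∀ i j, star (e i j) = e j i)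
    (he_one : StrictSumOne e) :
    -- notation: `C` and `A₁₁`
    ∀ C A₁₁, C = {a : 𝓜(ℂ, A) | ∀ i j, e i j * a = a * e i j ∧
        a * e i j ∈ Set.range ((↑) : A → 𝓜(ℂ, A))} →
      A₁₁ = {x : A | (x : 𝓜(ℂ, A)) = e 0 0 * x * e 0 0} →
    -- `ψ` maps `C` into (the image in `M(A)` of) `A₁₁`
    (∀ a ∈ C, ∃ x ∈ A₁₁, (x : 𝓜(ℂ, A)) = a * e 0 0) ∧
    -- `ψ` is injective on `C`
    (∀ a ∈ C, ∀ b ∈ C, a * e 0 0 = b * e 0 0 → a = b) ∧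
    -- `ψ` is multiplicative, star-preserving and linear on `C`
    (∀ a ∈ C, ∀ b ∈ C, (a * b) * e 0 0 = (a * e 0 0) * (b * e 0 0)) ∧
    (∀ a ∈ C, star a ∈ C ∧ star (a * e 0 0) = star a * e 0 0) ∧
    (∀ a ∈ C, ∀ b ∈ C, ∀ c : ℂ, a + b ∈ C ∧ c • a ∈ C ∧
      (a + b) * e 0 0 = a * e 0 0 + b * e 0 0 ∧ (c • a) * e 0 0 = c • (a * e 0 0)) ∧
    -- `ψ` is surjective onto `A₁₁`, with inverse `σ(d) = Σᵢ e i 0 · d · e 0 i`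
    -- (the sum converging strictly in `M(A)`)
    (∀ x ∈ A₁₁, ∃ a ∈ C, a * e 0 0 = (x : 𝓜(ℂ, A)) ∧
      ∀ y : A,
        Tendsto (fun n => (∑ i ∈ Finset.range n, e i 0 * (x : 𝓜(ℂ, A)) * e 0 i) *
          (y : 𝓜(ℂ, A))) atTop (nhds (a * (y : 𝓜(ℂ, A)))) ∧
        Tendsto (fun n => (y : 𝓜(ℂ, A)) * ∑ i ∈ Finset.range n,
          e i 0 * (x : 𝓜(ℂ, A)) * e 0 i) atTop (nhds ((y : 𝓜(ℂ, A)) * a))) := by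
  rintro C A₁₁ rfl rfl
  have h00 : e 0 0 * e 0 0 = e 0 0 := by simp [he_mul]
  refine ⟨?_, ?_, ?_, ?_, ?_, ?_⟩
  · intro a ha
    obtain ⟨hc, x, hx⟩ := ha 0 0
    refine ⟨x, ?_, hx⟩
    change (x : 𝓜(ℂ, A)) = e 0 0 * x * e 0 0
    rw [hx, ← mul_assoc, hc, mul_assoc, mul_assoc, h00, h00]
  · intro a ha b hb hab
    refine sub_eq_zero.1 (eq_zero_of_mul_e00 he_mul he_one (a - b) (fun i j => ?_) ?_)
    · rw [mul_sub, sub_mul, (ha i j).1, (hb i j).1]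
    · rw [sub_mul, hab, sub_self]
  · intro a _ b hb
    rw [mul_assoc a (e 0 0), ← mul_assoc (e 0 0) b, (hb 0 0).1, mul_assoc b, h00, mul_assoc]
  · intro a ha
    have hc : ∀ i j, e i j * star a = star a * e i j := fun i j => by
      rw [← he_star j i, ← star_mul, ← star_mul, (ha j i).1]
    refine ⟨fun i j => ⟨hc i j, ?_⟩, ?_⟩
    · obtain ⟨x, hx⟩ := (ha j i).2
      refine ⟨star x, ?_⟩
      rw [← star_coe, hx, star_mul, he_star, hc]
    · rw [star_mul, he_star, hc]
  · intro a ha b hb c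
    refine ⟨fun i j => ⟨?_, ?_⟩, fun i j => ⟨?_, ?_⟩, add_mul _ _ _, smul_mul_assoc _ _ _⟩
    · rw [mul_add, add_mul, (ha i j).1, (hb i j).1]
    · obtain ⟨x, hx⟩ := (ha i j).2
      obtain ⟨y, hy⟩ := (hb i j).2
      refine ⟨x + y, ?_⟩
      rw [add_mul, ← hx, ← hy]
      exact map_add (DoubleCentralizer.coeHom (𝕜 := ℂ) (A := A)) x y
    · rw [mul_smul_comm, smul_mul_assoc, (ha i j).1]
    · obtain ⟨x, hx⟩ := (ha i j).2
      refine ⟨c • x, ?_⟩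
      rw [smul_mul_assoc, ← hx]
      exact map_smul (DoubleCentralizer.coeHom (𝕜 := ℂ) (A := A)) c x
  · intro x hx
    obtain ⟨a, ha⟩ := exists_sigma he_mul he_star he_one (x : 𝓜(ℂ, A)) hx
    have hm := sigma_mul he_mul (x : 𝓜(ℂ, A)) a fun y => (ha y).1
    refine ⟨a, fun i j => ⟨(hm i j).1.trans (hm i j).2.symm, ?_⟩, (hm 0 0).2.trans hx.symm, ha⟩
    rw [(hm i j).2, mul_coe_eq, coe_mul_eq]
    exact ⟨_, rfl⟩
end
end
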